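/- arXiv:2108.12077 — 2 statements merged into one kernel-verified Lean document; each statement's English description precedes it below -/
import Mathlib

section
/- Let s > 1 and let u, v be harmonic functions in the exterior Ω of the unit sphere 𝕊 ⊂ ℝ³, continuous up to 𝕊, tending to 0 as |x| → ∞, and with boundary traces u|_𝕊, v|_𝕊 ∈ H^{s+1}_ax(𝕊). Then the product of radial derivatives u_r v_r restricted to 𝕊 belongs to H^s_ax(𝕊) and ‖u_r v_r‖_{H^s(𝕊)} ≤ C ‖u‖_{H^{s+1}(𝕊)} ‖v‖_{H^{s+1}(𝕊)} for some constant C > 0 independent of u and v. -/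
noncomputable section

open MeasureTheory Real Filter

/-- The Legendre polynomial of degree `n`, via Rodrigues' formula. -/
def legendreP (n : ℕ) : Polynomial ℝ :=
  Polynomial.C ((2 ^ n * n.factorial : ℝ)⁻¹) *
    Polynomial.derivative^[n] ((Polynomial.X ^ 2 - 1) ^ n)

/-- The associated Legendre function `P_l^m` (with Condon–Shortley phase),
so that `P_{|m|+2k}^{|m|}(0) = (-1)^{|m|+k} (2|m|+2k-1)!!/(2k)!!`. -/
def assocLegendre (l m : ℕ) (x : ℝ) : ℝ :=
  (-1 : ℝ) ^ m * (1 - x ^ 2) ^ ((m : ℝ) / 2) *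
    (Polynomial.derivative^[m] (legendreP l)).eval x

/-- The normalizing constant `α_l^m` of the spherical harmonics. -/
def alphaY (l : ℕ) (m : ℤ) : ℝ :=
  (-1 : ℝ) ^ ((m + |m|) / 2) *
    Real.sqrt ((2 * l + 1) * (l - m.natAbs).factorial /
      (4 * Real.pi * (l + m.natAbs).factorial))

/-- The spherical harmonic `Y_l^m` in latitude/longitude coordinates `(θ, φ)`. -/
def Ylm (l : ℕ) (m : ℤ) (θ φ : ℝ) : ℂ :=
  ((alphaY l m * assocLegendre l m.natAbs (Real.sin θ) : ℝ) : ℂ) *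
    Complex.exp (Complex.I * m * φ)

/-- The surface measure `dS = cos θ dθ dφ` of the unit sphere, in the coordinate box
`[-π/2, π/2] × [-π, π)`. -/
def sphereMeasure : Measure (ℝ × ℝ) :=
  ((volume : Measure (ℝ × ℝ)).restrict
      (Set.Icc (-(Real.pi / 2)) (Real.pi / 2) ×ˢ Set.Ico (-Real.pi) Real.pi)).withDensity
    fun p => ENNReal.ofReal (Real.cos p.1)

/-- The Fourier–Laplace coefficient `ψ̂_l^m = ∫_𝕊 ψ conj(Y_l^m) dS`. -/
def flCoeff (ψ : ℝ → ℝ → ℂ) (l : ℕ) (m : ℤ) : ℂ :=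
  ∫ p : ℝ × ℝ, ψ p.1 p.2 * (starRingEnd ℂ) (Ylm l m p.1 p.2) ∂sphereMeasure

/-- Membership in the fractional Sobolev space `H^s(𝕊)`:
`ψ ∈ L²(𝕊)` and `Σ_{l,m} (l+1)^{2s} |ψ̂_l^m|² < ∞`.
(The coefficients with `|m| > l` vanish automatically.) -/
def MemHs (s : ℝ) (ψ : ℝ → ℝ → ℂ) : Prop :=
  MeasureTheory.MemLp (fun p : ℝ × ℝ => ψ p.1 p.2) 2 sphereMeasure ∧
    Summable fun p : ℕ × ℤ =>
      ((p.1 : ℝ) + 1) ^ (2 * s) * ‖flCoeff ψ p.1 p.2‖ ^ 2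

/-- The `H^s(𝕊)` norm. -/
def HsNorm (s : ℝ) (ψ : ℝ → ℝ → ℂ) : ℝ :=
  Real.sqrt (∑' p : ℕ × ℤ, ((p.1 : ℝ) + 1) ^ (2 * s) * ‖flCoeff ψ p.1 p.2‖ ^ 2)

/-- Axially symmetric functions on the sphere: functions not depending on the longitude. -/
def Axial (ψ : ℝ → ℝ → ℂ) : Prop := ∀ θ φ₁ φ₂, ψ θ φ₁ = ψ θ φ₂

/-- Spherical (latitude/longitude) coordinates on the unit sphere of `ℝ³`. -/
def sphCoord (θ φ : ℝ) : EuclideanSpace ℝ (Fin 3) :=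
  (WithLp.equiv 2 (Fin 3 → ℝ)).symm
    ![Real.cos θ * Real.cos φ, Real.cos θ * Real.sin φ, Real.sin θ]

/-- The open exterior `Ω` of the unit sphere. -/
def extDomain : Set (EuclideanSpace ℝ (Fin 3)) := {x | 1 < ‖x‖}

/-- The closed exterior `cl Ω` of the unit sphere. -/
def closedExt : Set (EuclideanSpace ℝ (Fin 3)) := {x | 1 ≤ ‖x‖}

/-- The Laplacian of a function on `ℝ³`. -/
def lap {F : Type*} [NormedAddCommGroup F] [NormedSpace ℝ F]
    (u : EuclideanSpace ℝ (Fin 3) → F) (x : EuclideanSpace ℝ (Fin 3)) : F :=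
  ∑ i : Fin 3, fderiv ℝ (fun y => fderiv ℝ u y (EuclideanSpace.single i 1)) x
    (EuclideanSpace.single i 1)

/-- The radial derivative `u_r` at a point of the unit sphere (taken from outside). -/
def radialDeriv {F : Type*} [NormedAddCommGroup F] [NormedSpace ℝ F]
    (u : EuclideanSpace ℝ (Fin 3) → F) (θ φ : ℝ) : F :=
  derivWithin (fun r : ℝ => u (r • sphCoord θ φ)) (Set.Ici 1) 1

/-- The latitudinal derivative `u_θ` at a point of the unit sphere. -/
def thetaDeriv {F : Type*} [NormedAddCommGroup F] [NormedSpace ℝ F]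
    (u : EuclideanSpace ℝ (Fin 3) → F) (θ φ : ℝ) : F :=
  deriv (fun t => u (sphCoord t φ)) θ

/-- The boundary trace on the unit sphere of a real-valued function, in coordinates. -/
def traceR (u : EuclideanSpace ℝ (Fin 3) → ℝ) (θ φ : ℝ) : ℂ := (u (sphCoord θ φ) : ℂ)

/-- The boundary trace on the unit sphere of a complex-valued function, in coordinates. -/
def traceC (u : EuclideanSpace ℝ (Fin 3) → ℂ) (θ φ : ℝ) : ℂ := u (sphCoord θ φ)

/-- The Fourier coefficient on the equator `ℰ`. -/
def equatorCoeff (h : ℝ → ℂ) (m : ℤ) : ℂ :=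
  (1 / (2 * Real.pi)) * ∫ φ in (-Real.pi)..Real.pi, h φ * Complex.exp (-(Complex.I * m * φ))

/-- Membership in the fractional Sobolev space `H^s(ℰ)` on the equator. -/
def MemHsE (s : ℝ) (h : ℝ → ℂ) : Prop :=
  MeasureTheory.MemLp h 2 (volume.restrict (Set.Ico (-Real.pi) Real.pi)) ∧
    Summable fun m : ℤ => ((m.natAbs : ℝ) + 1) ^ (2 * s) * ‖equatorCoeff h m‖ ^ 2

/-- The `H^s(ℰ)` norm. -/
def HsNormE (s : ℝ) (h : ℝ → ℂ) : ℝ :=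
  Real.sqrt (∑' m : ℤ, ((m.natAbs : ℝ) + 1) ^ (2 * s) * ‖equatorCoeff h m‖ ^ 2)

/-- The constant `β_l^m`. -/
def betaLM (l : ℕ) (m : ℤ) : ℝ :=
  Real.sqrt (((l : ℝ) - m.natAbs) * ((l : ℝ) + m.natAbs) /
    ((2 * (l : ℝ) - 1) * (2 * (l : ℝ) + 1)))

/-- The constant `γ_l^m = -(l+1)β_l^m / (3(l+2)β_{l+1}^m)`. -/
def gammaLM (l : ℕ) (m : ℤ) : ℝ :=
  -(((l : ℝ) + 1) * betaLM l m) / (3 * ((l : ℝ) + 2) * betaLM (l + 1) m)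

/-- The product `Γ_k^m = ∏_{j=1}^k γ_{|m|+2j-1}^m` (with `Γ_0^m = 1`). -/
def GammaKM (m : ℤ) (k : ℕ) : ℝ :=
  ∏ j ∈ Finset.Icc 1 k, gammaLM (m.natAbs + 2 * j - 1) m

/-- The value `α_{|m|+2k}^m P_{|m|+2k}^{|m|}(0)`. -/
def PzeroM (m : ℤ) (k : ℕ) : ℝ :=
  alphaY (m.natAbs + 2 * k) m * assocLegendre (m.natAbs + 2 * k) m.natAbs 0

/-- The coefficient `a_l^m = f̂_l^m / (6(l+2)β_{l+1}^m)`. -/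
def aCoef (f : ℝ → ℝ → ℂ) (l : ℕ) (m : ℤ) : ℂ :=
  flCoeff f l m / ((6 * ((l : ℝ) + 2) * betaLM (l + 1) m : ℝ) : ℂ)

/-- The solution of the recurrence `b_{|m|-1}^m = b_{|m|}^m = 0`,
`b_{l+1}^m = γ_l^m b_{l-1}^m + a_l^m`; here `bSeq f m n = b_{|m|-1+n}^m`. -/
def bSeq (f : ℝ → ℝ → ℂ) (m : ℤ) : ℕ → ℂ
  | 0 => 0
  | 1 => 0
  | n + 2 => ((gammaLM (m.natAbs + n) m : ℝ) : ℂ) * bSeq f m n + aCoef f (m.natAbs + n) m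

/-- The coefficient `b_l^m`. -/
def bCoef (f : ℝ → ℝ → ℂ) (l : ℕ) (m : ℤ) : ℂ := bSeq f m (l + 1 - m.natAbs)

/-- The constant `ã^m`. -/
def aTilde (f : ℝ → ℝ → ℂ) (h : ℝ → ℂ) (m : ℤ) : ℂ :=
  (equatorCoeff h m - ∑' k : ℕ, bCoef f (m.natAbs + 2 * k) m * ((PzeroM m k : ℝ) : ℂ)) /
    (((∑' k : ℕ, GammaKM m k * PzeroM m k : ℝ)) : ℂ)

/-- The coefficient `c_l^m`: `c_{|m|+2k}^m = Γ_k^m ã^m` and `c_{|m|+2k-1}^m = 0`. -/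
def cCoef (f : ℝ → ℝ → ℂ) (h : ℝ → ℂ) (l : ℕ) (m : ℤ) : ℂ :=
  if m.natAbs ≤ l ∧ (l - m.natAbs) % 2 = 0 then
    ((GammaKM m ((l - m.natAbs) / 2) : ℝ) : ℂ) * aTilde f h m
  else 0

/-- The boundary trace `v(1, θ, φ)` of the formal series solution. -/
def vTraceS (f : ℝ → ℝ → ℂ) (h : ℝ → ℂ) (θ φ : ℝ) : ℂ :=
  ∑' p : ℕ × ℤ, (bCoef f p.1 p.2 + cCoef f h p.1 p.2) * Ylm p.1 p.2 θ φ

/-- The latitude of a point of `ℝ³`. -/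
def latitude (x : EuclideanSpace ℝ (Fin 3)) : ℝ := Real.arcsin (x 2 / ‖x‖)

/-- The longitude of a point of `ℝ³`. -/
def longitude (x : EuclideanSpace ℝ (Fin 3)) : ℝ :=
  Complex.arg ((x 0 : ℂ) + (x 1 : ℂ) * Complex.I)

/-- The formal series solution `v = Σ (b_l^m + c_l^m) r^{-l-1} Y_l^m(θ, φ)`. -/
def vFun (f : ℝ → ℝ → ℂ) (h : ℝ → ℂ) (x : EuclideanSpace ℝ (Fin 3)) : ℂ :=
  ∑' p : ℕ × ℤ, (bCoef f p.1 p.2 + cCoef f h p.1 p.2) * ((‖x‖ : ℂ) ^ (-(p.1 : ℤ) - 1)) *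
    Ylm p.1 p.2 (latitude x) (longitude x)

/-- `v` is a classical solution of the linearized (oblique derivative) problem
`Δv = 0` in `Ω`, `∇d⋅∇v = -2 sin θ v_r + cos θ v_θ = f/2` on `𝕊`, `v → 0` at infinity,
`v = h` on the equator; complex-valued version. -/
def SolvesObliqueC (v : EuclideanSpace ℝ (Fin 3) → ℂ) (f : ℝ → ℝ → ℂ) (h : ℝ → ℂ) : Prop :=
  ContDiffOn ℝ 2 v extDomain ∧ ContDiffOn ℝ 1 v closedExt ∧
    (∀ x ∈ extDomain, lap v x = 0) ∧
    (∀ θ ∈ Set.Icc (-(Real.pi / 2)) (Real.pi / 2), ∀ φ : ℝ,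
      -2 * (Real.sin θ : ℂ) * radialDeriv v θ φ + (Real.cos θ : ℂ) * thetaDeriv v θ φ
        = f θ φ / 2) ∧
    Filter.Tendsto v (Bornology.cobounded _) (nhds 0) ∧
    (∀ φ : ℝ, v (sphCoord 0 φ) = h φ)

/-- Real-valued version of `SolvesObliqueC`. -/
def SolvesObliqueR (v : EuclideanSpace ℝ (Fin 3) → ℝ) (f : ℝ → ℝ → ℝ) (h : ℝ → ℝ) : Prop :=
  ContDiffOn ℝ 2 v extDomain ∧ ContDiffOn ℝ 1 v closedExt ∧
    (∀ x ∈ extDomain, lap v x = 0) ∧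
    (∀ θ ∈ Set.Icc (-(Real.pi / 2)) (Real.pi / 2), ∀ φ : ℝ,
      -2 * Real.sin θ * radialDeriv v θ φ + Real.cos θ * thetaDeriv v θ φ = f θ φ / 2) ∧
    Filter.Tendsto v (Bornology.cobounded _) (nhds 0) ∧
    (∀ φ : ℝ, v (sphCoord 0 φ) = h φ)


lemma leg_w_ode (n : ℕ) (W : ℕ → Polynomial ℝ) (h0 : W 0 = (Polynomial.X ^ 2 - 1 : Polynomial ℝ) ^ n)
    (hW : ∀ k, Polynomial.derivative (W k) = W (k + 1)) (k : ℕ) :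
    (Polynomial.X ^ 2 - 1) * W (k + 2)
      + 2 * ((k : Polynomial ℝ) + 1) * Polynomial.X * W (k + 1)
      + (k : Polynomial ℝ) * ((k : Polynomial ℝ) + 1) * W k
    = 2 * (n : Polynomial ℝ) * Polynomial.X * W (k + 1)
      + 2 * (n : Polynomial ℝ) * ((k : Polynomial ℝ) + 1) * W k := by
  have h0 : (Polynomial.X ^ 2 - 1) * W 1 = 2 * (n : Polynomial ℝ) * Polynomial.X * W 0 := by
    rw [← hW 0, h0]
    cases n with
    | zero => simp
    | succ m =>
      rw [Polynomial.derivative_pow]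
      simp [Polynomial.C_ofNat]
      ring
  induction k with
  | zero =>
    have := congrArg Polynomial.derivative h0
    simp only [Polynomial.derivative_mul, Polynomial.derivative_sub, Polynomial.derivative_X_pow,
      Polynomial.derivative_one, Polynomial.derivative_X, Polynomial.derivative_natCast,
      Polynomial.derivative_ofNat, hW] at this
    simp [Polynomial.C_ofNat] at this ⊢
    linear_combination this
  | succ k ih =>
    have := congrArg Polynomial.derivative ih
    simp only [Polynomial.derivative_mul, Polynomial.derivative_add, Polynomial.derivative_sub,
      Polynomial.derivative_X_pow,
      Polynomial.derivative_one, Polynomial.derivative_X, Polynomial.derivative_natCast,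
      Polynomial.derivative_ofNat, hW] at this
    simp [Polynomial.C_ofNat] at this
    push_cast
    linear_combination this

lemma leg_ode (n : ℕ) :
    (1 - Polynomial.X ^ 2) * Polynomial.derivative (Polynomial.derivative (legendreP n))
      - 2 * Polynomial.X * Polynomial.derivative (legendreP n)
      + (n : Polynomial ℝ) * ((n : Polynomial ℝ) + 1) * legendreP n = 0 := by
  have h := leg_w_ode n (fun k => Polynomial.derivative^[k] ((Polynomial.X ^ 2 - 1) ^ n)) rfl
    (fun k => (Function.iterate_succ_apply' _ _ _).symm) n
  simp only [Function.iterate_succ_apply'] at h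
  simp only [legendreP, Polynomial.derivative_C_mul]
  linear_combination (-Polynomial.C ((2 ^ n * n.factorial : ℝ)⁻¹)) * h

lemma leg_ode_eval (n : ℕ) (x : ℝ) :
    (1 - x ^ 2) * (Polynomial.derivative (Polynomial.derivative (legendreP n))).eval x
      - 2 * x * (Polynomial.derivative (legendreP n)).eval x
      + n * (n + 1) * (legendreP n).eval x = 0 := by
  have := congrArg (Polynomial.eval x) (leg_ode n)
  simpa using this

lemma leg_eval_aux (n : ℕ) (c : ℝ) (hc : c ^ 2 = 1) : (legendreP n).eval c = c ^ n := by
  have h := Polynomial.aeval_iterate_derivative_self (R := ℝ) (A := ℝ)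
    ((Polynomial.X ^ 2 - 1) ^ n) n c (p' := (Polynomial.X + Polynomial.C c) ^ n) (by
      rw [← mul_pow]
      have : (Polynomial.C c : Polynomial ℝ) ^ 2 = 1 := by rw [← Polynomial.C_pow, hc]; simp
      simp
      congr 1
      linear_combination this)
  rw [Polynomial.coe_aeval_eq_eval] at h
  rw [legendreP, Polynomial.eval_mul, h]
  simp
  rw [← two_mul, mul_pow]
  have : (n.factorial : ℝ) ≠ 0 := by positivity
  field_simp

lemma leg_natDegree_le (n : ℕ) : (legendreP n).natDegree ≤ n := by
  unfold legendreP
  refine (Polynomial.natDegree_C_mul_le _ _).trans ?_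
  refine (Polynomial.natDegree_iterate_derivative _ _).trans ?_
  have : ((Polynomial.X ^ 2 - 1 : Polynomial ℝ) ^ n).natDegree ≤ n * 2 := by
    refine Polynomial.natDegree_pow_le_of_le _ ?_
    compute_degree
  omega

lemma leg_coeff_ne (n : ℕ) : (legendreP n).coeff n ≠ 0 := by
  unfold legendreP
  rw [Polynomial.coeff_C_mul, Polynomial.coeff_iterate_derivative]
  have h : ((Polynomial.X ^ 2 - 1 : Polynomial ℝ) ^ n).coeff (n + n) = 1 := by
    have hm : (Polynomial.X ^ 2 - 1 : Polynomial ℝ).Monic := by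
      have := Polynomial.monic_X_pow_sub_C (1 : ℝ) (n := 2) (by norm_num)
      simpa using this
    have h2 : (Polynomial.X ^ 2 - 1 : Polynomial ℝ).natDegree = 2 := by
      have := Polynomial.natDegree_X_pow_sub_C (n := 2) (r := (1 : ℝ))
      simpa using this
    have := (hm.pow n).coeff_natDegree
    rw [hm.natDegree_pow, h2] at this
    rwa [← two_mul, mul_comm]
  rw [h]
  have h3 : ((n + n).descFactorial n) ≠ 0 := by
    rw [Ne, Nat.descFactorial_eq_zero_iff_lt]; omega
  simp only [nsmul_eq_mul, mul_one]
  have h4 : ((n + n).descFactorial n : ℝ) ≠ 0 := by exact_mod_cast h3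
  positivity

/-- polynomials of degree `< n` are combinations of Legendre polynomials. -/
lemma leg_span (n : ℕ) : ∀ q : Polynomial ℝ, q.degree < n →
    ∃ c : ℕ → ℝ, q = ∑ i ∈ Finset.range n, Polynomial.C (c i) * legendreP i := by
  induction n with
  | zero =>
    intro q hq
    refine ⟨fun _ => 0, ?_⟩
    simp at hq
    simp [hq]
  | succ n ih =>
    intro q hq
    set a := q.coeff n / (legendreP n).coeff n with ha
    obtain ⟨c, hc⟩ := ih (q - Polynomial.C a * legendreP n) (by
      rw [Polynomial.degree_lt_iff_coeff_zero] at hq ⊢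
      intro m hm
      rcases hm.eq_or_lt with h | h
      · subst h
        simp [ha]
        field_simp [leg_coeff_ne n]
        simp
      · rw [Polynomial.coeff_sub, hq m h, Polynomial.coeff_C_mul,
          Polynomial.coeff_eq_zero_of_natDegree_lt ((leg_natDegree_le n).trans_lt h)]
        simp)
    refine ⟨fun i => if i = n then a else c i, ?_⟩
    rw [Finset.sum_range_succ]
    simp only [if_true]
    rw [Finset.sum_congr rfl (g := fun i => Polynomial.C (c i) * legendreP i)]
    · rw [← hc]; ring
    · intro i hi
      have : i ≠ n := by simp at hi; omega
      simp [this]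

lemma leg_abs_le (n : ℕ) (x : ℝ) (hx : x ∈ Set.Icc (-1 : ℝ) 1) : |(legendreP n).eval x| ≤ 1 := by
  rcases Nat.eq_zero_or_pos n with h0 | hn
  · subst h0; simp [legendreP]
  set N : ℝ := n * (n + 1) with hN
  have hNpos : 0 < N := by positivity
  set P := legendreP n
  let f : ℝ → ℝ := fun x => N * P.eval x ^ 2 + (1 - x ^ 2) * P.derivative.eval x ^ 2
  have hf : ∀ x, HasDerivAt f (2 * x * P.derivative.eval x ^ 2) x := by
    intro x
    have h1 := (P.hasDerivAt x)
    have h2 := (P.derivative.hasDerivAt x)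
    have h3 := ((h1.pow 2).const_mul N).add (((hasDerivAt_id x).pow 2).const_sub 1 |>.mul (h2.pow 2))
    refine h3.congr_deriv ?_
    have := leg_ode_eval n x
    simp only [id]
    push_cast
    simp
    rw [hN]
    linear_combination (2 * P.derivative.eval x) * this
  have hcont : Continuous f := by fun_prop
  have e1 : f 1 = N := by simp [f, P, leg_eval_aux n 1 (by norm_num)]
  have e2 : f (-1) = N := by
    simp only [f, P, leg_eval_aux n (-1) (by norm_num)]
    rw [← pow_mul, mul_comm n 2, pow_mul]; norm_num
  have key : f x ≤ N := by
    rcases le_total 0 x with h | h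
    · rw [← e1]
      refine monotoneOn_of_deriv_nonneg (convex_Icc (0 : ℝ) 1) hcont.continuousOn
        (fun y _ => (hf y).differentiableAt.differentiableWithinAt) ?_ ⟨h, hx.2⟩ (by simp) hx.2
      intro y hy
      rw [interior_Icc] at hy
      rw [(hf y).deriv]
      have := hy.1
      positivity
    · rw [← e2]
      refine antitoneOn_of_deriv_nonpos (convex_Icc (-1 : ℝ) 0) hcont.continuousOn
        (fun y _ => (hf y).differentiableAt.differentiableWithinAt) ?_ (by simp) ⟨hx.1, h⟩ hx.1
      intro y hy
      rw [interior_Icc] at hy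
      rw [(hf y).deriv]
      have h1 := hy.2
      have h2 := sq_nonneg (P.derivative.eval y)
      nlinarith
  have h4 : 0 ≤ (1 - x ^ 2) * P.derivative.eval x ^ 2 := by
    have : 0 ≤ 1 - x ^ 2 := by nlinarith [hx.1, hx.2]
    positivity
  have h5 : P.eval x ^ 2 ≤ 1 := by
    have : N * P.eval x ^ 2 ≤ N * 1 := by simp only [f] at key; linarith
    exact le_of_mul_le_mul_left this hNpos
  rw [abs_le_one_iff_mul_self_le_one]; nlinarith

lemma leg_orth (j k : ℕ) (h : j ≠ k) :
    ∫ x in (-1 : ℝ)..1, (legendreP j).eval x * (legendreP k).eval x = 0 := by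
  set P := legendreP j
  set Q := legendreP k
  have hd : ∀ x ∈ Set.uIcc (-1 : ℝ) 1, HasDerivAt
      (fun x : ℝ => (1 - x ^ 2) * (Q.derivative.eval x * P.eval x - P.derivative.eval x * Q.eval x))
      (((j : ℝ) * (j + 1) - k * (k + 1)) * (P.eval x * Q.eval x)) x := by
    intro x _
    have h3 := (((hasDerivAt_id x).pow 2).const_sub 1).mul
      (((Q.derivative.hasDerivAt x).mul (P.hasDerivAt x)).sub
        ((P.derivative.hasDerivAt x).mul (Q.hasDerivAt x)))
    refine h3.congr_deriv ?_
    have h1 := leg_ode_eval j x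
    have h2 := leg_ode_eval k x
    simp
    linear_combination (P.eval x) * h2 - (Q.eval x) * h1
  have := intervalIntegral.integral_eq_sub_of_hasDerivAt hd
    (Continuous.intervalIntegrable (by fun_prop) _ _)
  rw [intervalIntegral.integral_const_mul] at this
  norm_num at this
  rcases this with h' | h'
  · exfalso
    apply h
    have : ((j : ℝ) - k) * (j + k + 1) = 0 := by linear_combination h'
    rcases mul_eq_zero.1 this with h | h
    · exact_mod_cast sub_eq_zero.1 h
    · have : (0 : ℝ) < j + k + 1 := by positivity
      linarith
  · exact h'

lemma leg_orth_poly (n : ℕ) (q : Polynomial ℝ) (hq : q.degree < n) :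
    ∫ x in (-1 : ℝ)..1, q.eval x * (legendreP n).eval x = 0 := by
  obtain ⟨c, hc⟩ := leg_span n q hq
  rw [hc]
  simp only [Polynomial.eval_finsetSum, Finset.sum_mul, Polynomial.eval_mul, Polynomial.eval_C]
  rw [intervalIntegral.integral_finsetSum]
  · refine Finset.sum_eq_zero fun i hi => ?_
    simp only [mul_assoc]
    rw [intervalIntegral.integral_const_mul, leg_orth i n (by simp at hi; omega), mul_zero]
  · intro i _
    exact Continuous.intervalIntegrable (by fun_prop) _ _

lemma leg_norm (n : ℕ) :
    ∫ x in (-1 : ℝ)..1, (legendreP n).eval x * (legendreP n).eval x = 2 / (2 * n + 1) := by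
  set P := legendreP n with hP
  have hd : ∀ x ∈ Set.uIcc (-1 : ℝ) 1, HasDerivAt
      (fun x : ℝ => x * P.eval x ^ 2)
      ((2 * n + 1) * (P.eval x * P.eval x) +
        2 * (((Polynomial.X * P.derivative - Polynomial.C (n : ℝ) * P).eval x) * P.eval x)) x := by
    intro x _
    have h3 := (hasDerivAt_id x).mul ((P.hasDerivAt x).pow 2)
    refine h3.congr_deriv ?_
    simp
    ring
  have := intervalIntegral.integral_eq_sub_of_hasDerivAt hd
    (Continuous.intervalIntegrable (by fun_prop) _ _)
  rw [intervalIntegral.integral_add (Continuous.intervalIntegrable (by fun_prop) _ _)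
    (Continuous.intervalIntegrable (by fun_prop) _ _),
    intervalIntegral.integral_const_mul, intervalIntegral.integral_const_mul,
    leg_orth_poly n (Polynomial.X * P.derivative - Polynomial.C (n : ℝ) * P)] at this
  · have e1 : P.eval 1 = 1 := by simp [P, leg_eval_aux n 1 (by norm_num)]
    have e2 : P.eval (-1) ^ 2 = 1 := by
      simp only [P, leg_eval_aux n (-1) (by norm_num)]
      rw [← pow_mul, mul_comm n 2, pow_mul]; norm_num
    rw [e1, e2] at this
    have h0 : (0 : ℝ) < 2 * n + 1 := by positivity
    rw [eq_div_iff h0.ne']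
    linarith
  · rw [Polynomial.degree_lt_iff_coeff_zero]
    intro m hm
    rw [Polynomial.coeff_sub, Polynomial.coeff_C_mul]
    cases m with
    | zero => 
      have : n = 0 := by omega
      simp [this]
    | succ m =>
      rw [Polynomial.coeff_X_mul, Polynomial.coeff_derivative]
      rcases hm.eq_or_lt with h | h
      · rw [h]; push_cast; ring
      · rw [Polynomial.coeff_eq_zero_of_natDegree_lt ((leg_natDegree_le n).trans_lt h)]
        simp

/-- clamp to `[-1,1]` -/
def clamp1 (t : ℝ) : ℝ := max (-1) (min 1 t)

lemma clamp1_cont : Continuous clamp1 := by unfold clamp1; fun_prop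

lemma clamp1_mem (t : ℝ) : clamp1 t ∈ Set.Icc (-1 : ℝ) 1 := by
  unfold clamp1
  constructor
  · exact le_max_left _ _
  · exact max_le (by norm_num) (min_le_left _ _)

lemma clamp1_eq {t : ℝ} (ht : t ∈ Set.Icc (-1 : ℝ) 1) : clamp1 t = t := by
  unfold clamp1; rw [min_eq_right ht.2, max_eq_right ht.1]

/-- normalized Legendre function (clamped) -/
def eL (l : ℕ) (t : ℝ) : ℝ := Real.sqrt ((2 * l + 1) / 2) * (legendreP l).eval (clamp1 t)

lemma eL_cont (l : ℕ) : Continuous (eL l) := by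
  unfold eL
  exact continuous_const.mul ((legendreP l).continuous.comp clamp1_cont)

lemma eL_abs_le (l : ℕ) (t : ℝ) : |eL l t| ≤ Real.sqrt (l + 1) := by
  unfold eL
  rw [abs_mul, abs_of_nonneg (Real.sqrt_nonneg _)]
  calc _ ≤ Real.sqrt ((2 * l + 1) / 2) * 1 := by
        gcongr; exact leg_abs_le l _ (clamp1_mem t)
    _ ≤ _ := by rw [mul_one]; apply Real.sqrt_le_sqrt; linarith

/-- Legendre coefficient -/
def aL (h : ℝ → ℝ) (l : ℕ) : ℝ := ∫ x in (-1 : ℝ)..1, h x * eL l x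

lemma int_eL_mul (l : ℕ) (h : ℝ → ℝ) :
    aL h l = Real.sqrt ((2 * l + 1) / 2) * ∫ x in (-1 : ℝ)..1, h x * (legendreP l).eval x := by
  unfold aL
  rw [← intervalIntegral.integral_const_mul]
  apply intervalIntegral.integral_congr
  intro x hx
  rw [Set.uIcc_of_le (by norm_num)] at hx
  simp only [eL, clamp1_eq hx]
  ring

lemma eL_orth (j k : ℕ) : ∫ x in (-1 : ℝ)..1, eL j x * eL k x = if j = k then 1 else 0 := by
  have h := int_eL_mul k (eL j)
  unfold aL at h
  rw [h]
  have h2 : ∫ x in (-1 : ℝ)..1, eL j x * (legendreP k).eval x = Real.sqrt ((2 * j + 1) / 2) *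
      ∫ x in (-1 : ℝ)..1, (legendreP j).eval x * (legendreP k).eval x := by
    rw [← intervalIntegral.integral_const_mul]
    apply intervalIntegral.integral_congr
    intro x hx
    rw [Set.uIcc_of_le (by norm_num)] at hx
    simp only [eL, clamp1_eq hx]
    ring
  rw [h2]
  split_ifs with hjk
  · subst hjk
    rw [leg_norm, ← mul_assoc, Real.mul_self_sqrt (by positivity)]
    field_simp
  · rw [leg_orth j k hjk]; simp

lemma bessel (h : ℝ → ℝ) (hh : Continuous h) (S : Finset ℕ) :
    ∑ l ∈ S, aL h l ^ 2 ≤ ∫ x in (-1 : ℝ)..1, h x ^ 2 := by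
  have h0 : 0 ≤ ∫ x in (-1 : ℝ)..1, (h x - ∑ l ∈ S, aL h l * eL l x) ^ 2 :=
    intervalIntegral.integral_nonneg (by norm_num) (fun _ _ => sq_nonneg _)
  have hc := eL_cont
  have e1 : ∀ x, (h x - ∑ l ∈ S, aL h l * eL l x) ^ 2 =
      h x ^ 2 - 2 * ∑ l ∈ S, aL h l * (h x * eL l x) +
        ∑ l ∈ S, ∑ k ∈ S, aL h l * aL h k * (eL l x * eL k x) := by
    intro x
    have : (∑ l ∈ S, aL h l * eL l x) ^ 2 =
        ∑ l ∈ S, ∑ k ∈ S, aL h l * aL h k * (eL l x * eL k x) := by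
      rw [sq, Finset.sum_mul_sum]
      refine Finset.sum_congr rfl fun i _ => Finset.sum_congr rfl fun j _ => by ring
    have h3 : ∑ l ∈ S, aL h l * (h x * eL l x) = h x * ∑ l ∈ S, aL h l * eL l x := by
      rw [Finset.mul_sum]; refine Finset.sum_congr rfl fun i _ => by ring
    rw [sub_sq, this, h3]; ring
  simp only [e1] at h0
  rw [intervalIntegral.integral_add (Continuous.intervalIntegrable (by fun_prop) _ _)
    (Continuous.intervalIntegrable (by fun_prop) _ _),
    intervalIntegral.integral_sub (Continuous.intervalIntegrable (by fun_prop) _ _)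
    (Continuous.intervalIntegrable (by fun_prop) _ _), intervalIntegral.integral_const_mul,
    intervalIntegral.integral_finsetSum
      (fun i _ => Continuous.intervalIntegrable (by fun_prop) _ _),
    intervalIntegral.integral_finsetSum
      (fun i _ => Continuous.intervalIntegrable (by fun_prop) _ _)] at h0
  have e2 : ∀ l ∈ S, ∫ x in (-1 : ℝ)..1, aL h l * (h x * eL l x) = aL h l ^ 2 := by
    intro l _
    rw [intervalIntegral.integral_const_mul, sq]; rfl
  have e3 : ∀ l ∈ S, ∫ x in (-1 : ℝ)..1, ∑ k ∈ S, aL h l * aL h k * (eL l x * eL k x)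
      = aL h l ^ 2 := by
    intro l hl
    rw [intervalIntegral.integral_finsetSum
      (fun i _ => Continuous.intervalIntegrable (by fun_prop) _ _)]
    simp only [intervalIntegral.integral_const_mul, eL_orth]
    simp [hl, sq]
  rw [Finset.sum_congr rfl e2, Finset.sum_congr rfl e3] at h0
  linarith

/-- synthesis -/
def SL (c : ℕ → ℝ) (t : ℝ) : ℝ := ∑' j, c j * eL j t

def SumL (c : ℕ → ℝ) : Prop := Summable fun j : ℕ => |c j| * Real.sqrt (j + 1)

lemma term_le (c : ℕ → ℝ) (j : ℕ) (t : ℝ) : ‖c j * eL j t‖ ≤ |c j| * Real.sqrt (j + 1) := by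
  rw [Real.norm_eq_abs, abs_mul]
  gcongr
  exact eL_abs_le j t

lemma SumL.summable {c : ℕ → ℝ} (hc : SumL c) (t : ℝ) : Summable fun j => c j * eL j t :=
  Summable.of_norm_bounded hc (fun j => term_le c j t)

lemma SL_cont {c : ℕ → ℝ} (hc : SumL c) : Continuous (SL c) := by
  unfold SL
  exact continuous_tsum (fun j => continuous_const.mul (eL_cont j)) hc (fun j t => term_le c j t)

lemma SL_le {c : ℕ → ℝ} (hc : SumL c) (t : ℝ) : |SL c t| ≤ ∑' j : ℕ, |c j| * Real.sqrt (j + 1) := by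
  have := tsum_of_norm_bounded hc.hasSum (fun j => term_le c j t)
  simpa [SL] using this

lemma SL_int {c : ℕ → ℝ} (hc : SumL c) (h : ℝ → ℝ) (hh : Continuous h) :
    HasSum (fun j => c j * aL h j) (∫ x in (-1 : ℝ)..1, h x * SL c x) := by
  obtain ⟨B, hB⟩ := (isCompact_Icc (a := (-1 : ℝ)) (b := 1)).exists_bound_of_continuousOn hh.continuousOn
  have := intervalIntegral.hasSum_integral_of_dominated_convergence (μ := volume) (a := (-1 : ℝ)) (b := 1)
    (F := fun j x => h x * (c j * eL j x)) (f := fun x => h x * SL c x)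
    (fun j _ => B * (|c j| * Real.sqrt (j + 1)))
    (fun j => (hh.mul (continuous_const.mul (eL_cont j))).aestronglyMeasurable)
    (fun j => Eventually.of_forall fun x hx => by
      rw [norm_mul]
      rw [Set.uIoc_of_le (by norm_num)] at hx
      have hx' : x ∈ Set.Icc (-1 : ℝ) 1 := ⟨hx.1.le, hx.2⟩
      exact mul_le_mul (hB x hx') (term_le c j x) (norm_nonneg _) ((norm_nonneg _).trans (hB x hx')))
    (Eventually.of_forall fun x _ => hc.mul_left B)
    (by simp)
    (Eventually.of_forall fun x _ => (hc.summable x).hasSum.mul_left _)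
  have e : (fun j => c j * aL h j) = fun j => ∫ x in (-1 : ℝ)..1, h x * (c j * eL j x) := by
    ext j
    unfold aL
    rw [← intervalIntegral.integral_const_mul]
    congr 1; ext x; ring
  rw [e]
  exact this

lemma aL_SL {c : ℕ → ℝ} (hc : SumL c) (l : ℕ) : aL (SL c) l = c l := by
  have h := SL_int hc (eL l) (eL_cont l)
  have h2 : ∀ j, c j * aL (eL l) j = if j = l then c l else 0 := by
    intro j
    unfold aL
    rw [eL_orth]
    by_cases hj : j = l
    · subst hj; simp
    · simp [hj, Ne.symm hj]
  simp only [h2] at h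
  have := h.unique (hasSum_ite_eq l (c l))
  rw [← this]
  unfold aL
  congr 1; ext x; ring

lemma parseval_SL {c : ℕ → ℝ} (hc : SumL c) :
    HasSum (fun j => c j ^ 2) (∫ x in (-1 : ℝ)..1, SL c x ^ 2) := by
  have h := SL_int hc (SL c) (SL_cont hc)
  simp only [aL_SL hc] at h
  simpa only [sq] using h

lemma complete_L (h : ℝ → ℝ) (hh : Continuous h) (h0 : ∀ l, aL h l = 0) :
    ∀ x ∈ Set.Icc (-1 : ℝ) 1, h x = 0 := by
  have hp : ∀ q : Polynomial ℝ, ∫ x in (-1 : ℝ)..1, h x * q.eval x = 0 := by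
    intro q
    obtain ⟨c, hc⟩ := leg_span (q.natDegree + 1) q
      (lt_of_le_of_lt Polynomial.degree_le_natDegree (by exact_mod_cast Nat.lt_succ_self _))
    rw [hc]
    simp only [Polynomial.eval_finsetSum, Finset.mul_sum, Polynomial.eval_mul, Polynomial.eval_C]
    rw [intervalIntegral.integral_finsetSum
      (fun i _ => Continuous.intervalIntegrable (by fun_prop) _ _)]
    refine Finset.sum_eq_zero fun i _ => ?_
    have h1 := h0 i
    rw [int_eL_mul] at h1
    have : Real.sqrt ((2 * i + 1) / 2) ≠ 0 := by positivity
    have h2 := (mul_eq_zero.1 h1).resolve_left this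
    calc _ = ∫ x in (-1 : ℝ)..1, c i * (h x * (legendreP i).eval x) := by congr 1; ext x; ring
      _ = 0 := by rw [intervalIntegral.integral_const_mul, h2, mul_zero]
  obtain ⟨B, hB⟩ := (isCompact_Icc (a := (-1 : ℝ)) (b := 1)).exists_bound_of_continuousOn hh.continuousOn
  have hB0 : 0 ≤ B := (norm_nonneg _).trans (hB 0 (by simp))
  have hle : ∀ ε > 0, ∫ x in (-1 : ℝ)..1, h x * h x ≤ B * ε * 2 := by
    intro ε hε
    obtain ⟨q, hq⟩ := exists_polynomial_near_of_continuousOn (-1) 1 h hh.continuousOn ε hε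
    have e : ∫ x in (-1 : ℝ)..1, h x * h x = ∫ x in (-1 : ℝ)..1, h x * (h x - q.eval x) := by
      simp only [mul_sub]
      rw [intervalIntegral.integral_sub (Continuous.intervalIntegrable (by fun_prop) _ _)
        (Continuous.intervalIntegrable (by fun_prop) _ _), hp, sub_zero]
    rw [e]
    have := intervalIntegral.norm_integral_le_of_norm_le_const (a := (-1 : ℝ)) (b := 1) (C := B * ε)
      (f := fun x => h x * (h x - q.eval x)) (by
        intro x hx
        rw [Set.uIoc_of_le (by norm_num)] at hx
        have hx' : x ∈ Set.Icc (-1 : ℝ) 1 := ⟨hx.1.le, hx.2⟩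
        rw [norm_mul]
        refine mul_le_mul (hB x hx') ?_ (norm_nonneg _) hB0
        have := hq x hx'
        rw [Real.norm_eq_abs, abs_sub_comm]; exact this.le)
    refine (le_abs_self _).trans (this.trans ?_)
    norm_num
  have hz : ∫ x in (-1 : ℝ)..1, h x * h x ≤ 0 := by
    refine le_of_forall_pos_le_add fun ε hε => ?_
    refine (hle (ε / (2 * (B + 1))) (by positivity)).trans ?_
    rw [zero_add]
    have : B * (ε / (2 * (B + 1))) * 2 = ε * (B / (B + 1)) := by field_simp
    rw [this]
    have : B / (B + 1) ≤ 1 := by rw [div_le_one (by positivity)]; linarith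
    nlinarith
  intro x hx
  by_contra hne
  have := intervalIntegral.integral_pos (a := (-1 : ℝ)) (b := 1) (f := fun x => h x * h x) (by norm_num)
    (by fun_prop) (fun y _ => mul_self_nonneg _) ⟨x, hx, mul_self_pos.2 hne⟩
  linarith

lemma complete_SL (h : ℝ → ℝ) (hh : Continuous h) (hc : SumL (aL h)) :
    ∀ x ∈ Set.Icc (-1 : ℝ) 1, h x = SL (aL h) x := by
  intro x hx
  have := complete_L (fun x => h x - SL (aL h) x) (hh.sub (SL_cont hc)) (fun l => by
    have h1 : aL (fun x => h x - SL (aL h) x) l = aL h l - aL (SL (aL h)) l := by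
      have := SL_cont hc
      have := eL_cont l
      simp only [aL, sub_mul]
      rw [intervalIntegral.integral_sub]
      · exact Continuous.intervalIntegrable (by fun_prop) _ _
      · exact Continuous.intervalIntegrable (by fun_prop) _ _
    rw [h1, aL_SL hc, sub_self]) x hx
  linarith

def hiL (c : ℕ → ℝ) (n k : ℕ) : ℝ := if n ≤ 2 * k then c k else 0
def loL (c : ℕ → ℝ) (n k : ℕ) : ℝ := if n ≤ 2 * k then 0 else c k

lemma hiL_abs (c : ℕ → ℝ) (n k : ℕ) : |hiL c n k| ≤ |c k| := by
  unfold hiL; split_ifs <;> simp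
lemma loL_abs (c : ℕ → ℝ) (n k : ℕ) : |loL c n k| ≤ |c k| := by
  unfold loL; split_ifs <;> simp

lemma SumL.mono {c d : ℕ → ℝ} (hc : SumL c) (h : ∀ k, |d k| ≤ |c k|) : SumL d :=
  Summable.of_nonneg_of_le (fun k => by positivity)
    (fun k => mul_le_mul_of_nonneg_right (h k) (Real.sqrt_nonneg _)) hc

lemma SL_split {c : ℕ → ℝ} (hc : SumL c) (n : ℕ) (x : ℝ) :
    SL c x = SL (loL c n) x + SL (hiL c n) x := by
  unfold SL
  rw [← ((hc.mono (loL_abs c n)).summable x).tsum_add ((hc.mono (hiL_abs c n)).summable x)]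
  congr 1; ext k
  unfold loL hiL
  split_ifs <;> ring

lemma SL_lo_poly (c : ℕ → ℝ) (n : ℕ) : ∃ q : Polynomial ℝ,
    (∀ x ∈ Set.Icc (-1 : ℝ) 1, SL (loL c n) x = q.eval x) ∧ (q = 0 ∨ 2 * q.natDegree < n) := by
  refine ⟨∑ k ∈ Finset.range n, Polynomial.C (loL c n k * Real.sqrt ((2 * k + 1) / 2)) * legendreP k,
    ?_, ?_⟩
  · intro x hx
    unfold SL
    rw [tsum_eq_sum (s := Finset.range n)]
    · rw [Polynomial.eval_finsetSum]
      refine Finset.sum_congr rfl fun k _ => ?_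
      simp [eL, clamp1_eq hx]
      ring
    · intro k hk
      have : n ≤ 2 * k := by simp at hk; omega
      simp [loL, this]
  · rcases Nat.eq_zero_or_pos n with h | h
    · left; subst h; simp
    · right
      have : (∑ k ∈ Finset.range n, Polynomial.C (loL c n k * Real.sqrt ((2 * k + 1) / 2)) *
          legendreP k).natDegree ≤ (n - 1) / 2 := by
        refine Polynomial.natDegree_sum_le_of_forall_le _ _ fun k _ => ?_
        by_cases hk : n ≤ 2 * k
        · simp [loL, hk]
        · refine (Polynomial.natDegree_C_mul_le _ _).trans ((leg_natDegree_le k).trans ?_)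
          omega
      omega

lemma aL_lo_lo (c d : ℕ → ℝ) (n l : ℕ) (hl : n ≤ l) :
    aL (fun x => SL (loL c n) x * SL (loL d n) x) l = 0 := by
  obtain ⟨q, hq, hqn⟩ := SL_lo_poly c n
  obtain ⟨r, hr, hrn⟩ := SL_lo_poly d n
  rw [int_eL_mul]
  have : ∫ x in (-1 : ℝ)..1, SL (loL c n) x * SL (loL d n) x * (legendreP l).eval x
      = ∫ x in (-1 : ℝ)..1, (q * r).eval x * (legendreP l).eval x := by
    apply intervalIntegral.integral_congr
    intro x hx
    rw [Set.uIcc_of_le (by norm_num)] at hx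
    simp only [hq x hx, hr x hx, Polynomial.eval_mul]
  rw [this, leg_orth_poly, mul_zero]
  rcases hqn with h | h
  · simp [h]
  rcases hrn with h' | h'
  · simp [h']
  refine lt_of_le_of_lt Polynomial.degree_le_natDegree ?_
  have := Polynomial.natDegree_mul_le (p := q) (q := r)
  exact_mod_cast (by omega : (q * r).natDegree < l)

/-- the absolute sum -/
def ML (c : ℕ → ℝ) : ℝ := ∑' j : ℕ, |c j| * Real.sqrt (j + 1)

lemma prod_tail {c d : ℕ → ℝ} (hc : SumL c) (hd : SumL d) (n : ℕ) (S : Finset ℕ)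
    (hS : ∀ l ∈ S, n ≤ l) :
    ∑ l ∈ S, aL (fun x => SL c x * SL d x) l ^ 2 ≤
      2 * ML c ^ 2 * (∑' k, hiL d n k ^ 2) + 2 * ML d ^ 2 * (∑' k, hiL c n k ^ 2) := by
  have hcl := hc.mono (loL_abs c n)
  have hch := hc.mono (hiL_abs c n)
  have hdl := hd.mono (loL_abs d n)
  have hdh := hd.mono (hiL_abs d n)
  have k1 := SL_cont hc
  have k2 := SL_cont hd
  have k3 := SL_cont hcl
  have k4 := SL_cont hch
  have k5 := SL_cont hdl
  have k6 := SL_cont hdh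
  let r : ℝ → ℝ := fun x => SL c x * SL (hiL d n) x + SL (hiL c n) x * SL (loL d n) x
  have hr : ∀ l ∈ S, aL (fun x => SL c x * SL d x) l = aL r l := by
    intro l hl
    have e0 := aL_lo_lo c d n l (hS l hl)
    have ke := eL_cont l
    have e1 : aL (fun x => SL c x * SL d x) l
        = aL r l + aL (fun x => SL (loL c n) x * SL (loL d n) x) l := by
      unfold aL
      rw [← intervalIntegral.integral_add (Continuous.intervalIntegrable (by fun_prop) _ _)
        (Continuous.intervalIntegrable (by fun_prop) _ _)]
      congr 1; ext x
      simp only [r]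
      rw [SL_split hc n x, SL_split hd n x]
      ring
    rw [e1, e0, add_zero]
  rw [Finset.sum_congr rfl (fun l hl => by rw [hr l hl])]
  refine (bessel r (by fun_prop) S).trans ?_
  rw [(parseval_SL hdh).tsum_eq, (parseval_SL hch).tsum_eq,
    ← intervalIntegral.integral_const_mul, ← intervalIntegral.integral_const_mul,
    ← intervalIntegral.integral_add (Continuous.intervalIntegrable (by fun_prop) _ _)
        (Continuous.intervalIntegrable (by fun_prop) _ _)]
  refine intervalIntegral.integral_mono (by norm_num) (Continuous.intervalIntegrable (by fun_prop) _ _)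
        (Continuous.intervalIntegrable (by fun_prop) _ _) fun x => ?_
  have m1 : SL c x ^ 2 ≤ ML c ^ 2 := sq_le_sq' (abs_le.1 (SL_le hc x)).1 (abs_le.1 (SL_le hc x)).2
  have m2 : SL (loL d n) x ^ 2 ≤ ML d ^ 2 := by
    have : |SL (loL d n) x| ≤ ML d := by
      refine (SL_le hdl x).trans ?_
      exact hdl.tsum_le_tsum (fun k => mul_le_mul_of_nonneg_right (loL_abs d n k) (Real.sqrt_nonneg _)) hd
    exact sq_le_sq' (abs_le.1 this).1 (abs_le.1 this).2
  simp only [r]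
  have h1 := mul_le_mul_of_nonneg_right m1 (sq_nonneg (SL (hiL d n) x))
  have h2 := mul_le_mul_of_nonneg_right m2 (sq_nonneg (SL (hiL c n) x))
  nlinarith [sq_nonneg (SL c x * SL (hiL d n) x - SL (hiL c n) x * SL (loL d n) x)]

/-- weights -/
def wL (p : ℝ) (n : ℕ) : ℝ := ((n : ℝ) + 1) ^ p - (n : ℝ) ^ p

lemma wL_nonneg {p : ℝ} (hp : 0 < p) (n : ℕ) : 0 ≤ wL p n := by
  unfold wL
  have : (n : ℝ) ^ p ≤ ((n : ℝ) + 1) ^ p := Real.rpow_le_rpow (by positivity) (by linarith) hp.le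
  linarith

lemma wL_sum {p : ℝ} (hp : 0 < p) (l : ℕ) : ∑ n ∈ Finset.range l, wL p n = (l : ℝ) ^ p := by
  have := Finset.sum_range_sub (fun n : ℕ => (n : ℝ) ^ p) l
  simp only [Nat.cast_zero, Real.zero_rpow hp.ne', sub_zero] at this
  rw [← this]
  refine Finset.sum_congr rfl fun n _ => by simp [wL]

lemma tail_sum {p : ℝ} (hp : 0 < p) {c : ℕ → ℝ} (hc : Summable fun k : ℕ => ((k : ℝ) + 1) ^ p * c k ^ 2)
    (L : ℕ) : ∑ n ∈ Finset.range L, wL p n * (∑' k, hiL c n k ^ 2) ≤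
      2 ^ p * ∑' k : ℕ, ((k : ℝ) + 1) ^ p * c k ^ 2 := by
  have hs : ∀ n, Summable fun k => hiL c n k ^ 2 := by
    intro n
    refine Summable.of_nonneg_of_le (fun k => sq_nonneg _) (fun k => ?_) hc
    have h1 : hiL c n k ^ 2 ≤ c k ^ 2 := sq_le_sq.2 (hiL_abs c n k)
    have h2 : 1 ≤ ((k : ℝ) + 1) ^ p := Real.one_le_rpow (by linarith [Nat.cast_nonneg (α := ℝ) k]) hp.le
    nlinarith [sq_nonneg (c k)]
  simp only [← tsum_mul_left]
  rw [← Summable.tsum_finsetSum (fun n _ => (hs n).mul_left _)]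
  refine Summable.tsum_le_tsum (fun k => ?_) (summable_sum fun n _ => (hs n).mul_left _) (hc.mul_left _)
  have e : ∀ n, wL p n * hiL c n k ^ 2 = (if n ≤ 2 * k then wL p n else 0) * c k ^ 2 := by
    intro n; unfold hiL; split_ifs <;> simp
  simp only [e]
  rw [← Finset.sum_mul, ← mul_assoc]
  refine mul_le_mul_of_nonneg_right ?_ (sq_nonneg _)
  rw [← Finset.sum_filter]
  calc _ ≤ ∑ n ∈ Finset.range (2 * k + 1), wL p n := by
        refine Finset.sum_le_sum_of_subset_of_nonneg (fun n hn => ?_) (fun n _ _ => wL_nonneg hp n)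
        simp at hn ⊢; omega
    _ = ((2 * k + 1 : ℕ) : ℝ) ^ p := wL_sum hp _
    _ ≤ (2 * ((k : ℝ) + 1)) ^ p := by
        refine Real.rpow_le_rpow (by positivity) ?_ hp.le
        push_cast; linarith
    _ = _ := Real.mul_rpow (by norm_num) (by positivity)

lemma prod_core {p : ℝ} (hp : 0 < p) {c d : ℕ → ℝ} (hc : SumL c) (hd : SumL d)
    (hc2 : Summable fun k : ℕ => ((k : ℝ) + 1) ^ p * c k ^ 2)
    (hd2 : Summable fun k : ℕ => ((k : ℝ) + 1) ^ p * d k ^ 2) (L : ℕ) :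
    ∑ l ∈ Finset.range L, ((l : ℝ) + 1) ^ p * aL (fun x => SL c x * SL d x) l ^ 2 ≤
      2 * 2 ^ p * (ML c ^ 2 * (∑' k : ℕ, ((k : ℝ) + 1) ^ p * d k ^ 2) +
        ML d ^ 2 * ∑' k : ℕ, ((k : ℝ) + 1) ^ p * c k ^ 2) := by
  set h := aL (fun x => SL c x * SL d x)
  have e1 : ∑ l ∈ Finset.range L, ((l : ℝ) + 1) ^ p * h l ^ 2 =
      ∑ n ∈ Finset.range L, wL p n * ∑ l ∈ (Finset.range L).filter (fun l => n ≤ l), h l ^ 2 := by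
    have : ∀ l ∈ Finset.range L, ((l : ℝ) + 1) ^ p * h l ^ 2 =
        ∑ n ∈ Finset.range L, if n ≤ l then wL p n * h l ^ 2 else 0 := by
      intro l hl
      have h1 := wL_sum hp (l + 1)
      push_cast at h1
      rw [← h1, Finset.sum_mul, ← Finset.sum_filter]
      refine Finset.sum_congr ?_ fun _ _ => rfl
      ext n
      simp at hl ⊢; omega
    rw [Finset.sum_congr rfl this, Finset.sum_comm]
    refine Finset.sum_congr rfl fun n _ => ?_
    rw [Finset.mul_sum, Finset.sum_filter]
  rw [e1]
  calc _ ≤ ∑ n ∈ Finset.range L, wL p n * (2 * ML c ^ 2 * (∑' k, hiL d n k ^ 2)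
          + 2 * ML d ^ 2 * (∑' k, hiL c n k ^ 2)) := by
        refine Finset.sum_le_sum fun n _ => mul_le_mul_of_nonneg_left ?_ (wL_nonneg hp n)
        exact prod_tail hc hd n _ (by simp)
    _ = 2 * ML c ^ 2 * ∑ n ∈ Finset.range L, wL p n * (∑' k, hiL d n k ^ 2) +
        2 * ML d ^ 2 * ∑ n ∈ Finset.range L, wL p n * (∑' k, hiL c n k ^ 2) := by
        rw [Finset.mul_sum, Finset.mul_sum, ← Finset.sum_add_distrib]
        refine Finset.sum_congr rfl fun n _ => by ring
    _ ≤ 2 * ML c ^ 2 * (2 ^ p * ∑' k : ℕ, ((k : ℝ) + 1) ^ p * d k ^ 2) +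
        2 * ML d ^ 2 * (2 ^ p * ∑' k : ℕ, ((k : ℝ) + 1) ^ p * c k ^ 2) := by
        have := tail_sum hp hd2 L
        have := tail_sum hp hc2 L
        gcongr
    _ = _ := by ring

lemma ML_bound (s : ℝ) (hs : 1 < s) : ∃ K : ℝ, 0 < K ∧ ∀ c : ℕ → ℝ,
    (Summable fun k : ℕ => ((k : ℝ) + 1) ^ (2 * s) * c k ^ 2) →
    SumL c ∧ ML c ^ 2 ≤ K * ∑' k : ℕ, ((k : ℝ) + 1) ^ (2 * s) * c k ^ 2 := by
  have hz : Summable fun k : ℕ => ((k : ℝ) + 1) ^ (1 - 2 * s) := by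
    have := (summable_nat_add_iff 1).2 (Real.summable_nat_rpow.2 (by linarith : 1 - 2 * s < -1))
    simpa using this
  refine ⟨∑' k : ℕ, ((k : ℝ) + 1) ^ (1 - 2 * s), ?_, ?_⟩
  · exact hz.tsum_pos (fun k => by positivity) 0 (by positivity)
  intro c hc
  have hp : Real.HolderConjugate 2 2 := by constructor <;> norm_num
  have e1 : ∀ k : ℕ, (((k : ℝ) + 1) ^ s * |c k|) ^ (2 : ℝ) = ((k : ℝ) + 1) ^ (2 * s) * c k ^ 2 := by
    intro k
    rw [Real.rpow_two, mul_pow, sq_abs, mul_comm 2 s, Real.rpow_mul (by positivity), Real.rpow_two]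
  have e2 : ∀ k : ℕ, (((k : ℝ) + 1) ^ (1 / 2 - s)) ^ (2 : ℝ) = ((k : ℝ) + 1) ^ (1 - 2 * s) := by
    intro k
    rw [← Real.rpow_mul (by positivity)]; congr 1; ring
  have e3 : ∀ k : ℕ, (((k : ℝ) + 1) ^ s * |c k|) * ((k : ℝ) + 1) ^ (1 / 2 - s)
      = |c k| * Real.sqrt (k + 1) := by
    intro k
    rw [Real.sqrt_eq_rpow, mul_right_comm, ← Real.rpow_add (by positivity), mul_comm]
    congr 2; ring
  have := Real.summable_and_inner_le_Lp_mul_Lq_tsum_of_nonneg hp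
    (f := fun k : ℕ => ((k : ℝ) + 1) ^ s * |c k|) (g := fun k : ℕ => ((k : ℝ) + 1) ^ (1 / 2 - s))
    (fun k => by positivity) (fun k => by positivity) (by simpa only [e1] using hc)
    (by simpa only [e2] using hz)
  simp only [e1, e2, e3] at this
  refine ⟨this.1, ?_⟩
  rw [← Real.sqrt_eq_rpow, ← Real.sqrt_eq_rpow] at this
  have h0 : 0 ≤ ML c := tsum_nonneg fun k => by positivity
  have h1 : 0 ≤ ∑' k : ℕ, ((k : ℝ) + 1) ^ (2 * s) * c k ^ 2 := tsum_nonneg fun k => by positivity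
  have h2 : 0 ≤ ∑' k : ℕ, ((k : ℝ) + 1) ^ (1 - 2 * s) := tsum_nonneg fun k => by positivity
  calc ML c ^ 2 ≤ (_ * _) ^ 2 := pow_le_pow_left₀ h0 this.2 2
    _ = _ := by rw [mul_pow, Real.sq_sqrt h1, Real.sq_sqrt h2, mul_comm]

/-- the one-dimensional product estimate. -/
lemma prod_final (s : ℝ) (hs : 1 < s) : ∃ K : ℝ, 0 < K ∧ ∀ c d : ℕ → ℝ,
    (Summable fun k : ℕ => ((k : ℝ) + 1) ^ (2 * s) * c k ^ 2) →
    (Summable fun k : ℕ => ((k : ℝ) + 1) ^ (2 * s) * d k ^ 2) →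
    (Summable fun l : ℕ => ((l : ℝ) + 1) ^ (2 * s) * aL (fun x => SL c x * SL d x) l ^ 2) ∧
    ∑' l : ℕ, ((l : ℝ) + 1) ^ (2 * s) * aL (fun x => SL c x * SL d x) l ^ 2 ≤
      K * (∑' k : ℕ, ((k : ℝ) + 1) ^ (2 * s) * c k ^ 2) *
        ∑' k : ℕ, ((k : ℝ) + 1) ^ (2 * s) * d k ^ 2 := by
  obtain ⟨K, hK, hM⟩ := ML_bound s hs
  refine ⟨4 * 2 ^ (2 * s) * K, by positivity, fun c d hc hd => ?_⟩
  have hb : ∀ L : ℕ, ∑ l ∈ Finset.range L,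
      ((l : ℝ) + 1) ^ (2 * s) * aL (fun x => SL c x * SL d x) l ^ 2 ≤
      4 * 2 ^ (2 * s) * K * (∑' k : ℕ, ((k : ℝ) + 1) ^ (2 * s) * c k ^ 2) *
        ∑' k : ℕ, ((k : ℝ) + 1) ^ (2 * s) * d k ^ 2 := by
    intro L
    refine (prod_core (by linarith) (hM c hc).1 (hM d hd).1 hc hd L).trans ?_
    have h1 : 0 ≤ ∑' k : ℕ, ((k : ℝ) + 1) ^ (2 * s) * c k ^ 2 := tsum_nonneg fun k => by positivity
    have h2 : 0 ≤ ∑' k : ℕ, ((k : ℝ) + 1) ^ (2 * s) * d k ^ 2 := tsum_nonneg fun k => by positivity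
    have h3 := mul_le_mul_of_nonneg_right (hM c hc).2 h2
    have h4 := mul_le_mul_of_nonneg_right (hM d hd).2 h1
    have h5 : (0 : ℝ) < 2 * 2 ^ (2 * s) := by positivity
    calc _ ≤ 2 * 2 ^ (2 * s) * _ := mul_le_mul_of_nonneg_left (add_le_add h3 h4) h5.le
      _ = _ := by ring
  have hsum := summable_of_sum_range_le (fun l => by positivity) hb
  exact ⟨hsum, Real.tsum_le_of_sum_range_le (fun l => by positivity) hb⟩

/-- second derivative along a line -/
def LDD (w : EuclideanSpace ℝ (Fin 3) → ℝ) (x e : EuclideanSpace ℝ (Fin 3)) (d : ℝ) : Prop :=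
  ∃ w' : ℝ → ℝ, (∀ᶠ t in nhds (0 : ℝ), HasDerivAt (fun t => w (x + t • e)) (w' t) t) ∧ HasDerivAt w' d 0

lemma LDD.add {w v : EuclideanSpace ℝ (Fin 3) → ℝ} {x e : EuclideanSpace ℝ (Fin 3)} {a b : ℝ}
    (h : LDD w x e a) (k : LDD v x e b) : LDD (fun y => w y + v y) x e (a + b) := by
  obtain ⟨w', h1, h2⟩ := h
  obtain ⟨v', k1, k2⟩ := k
  refine ⟨fun t => w' t + v' t, ?_, h2.add k2⟩
  filter_upwards [h1, k1] with t a b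
  exact a.add b

lemma LDD.const_mul {w : EuclideanSpace ℝ (Fin 3) → ℝ} {x e : EuclideanSpace ℝ (Fin 3)} {a : ℝ}
    (h : LDD w x e a) (c : ℝ) : LDD (fun y => c * w y) x e (c * a) := by
  obtain ⟨w', h1, h2⟩ := h
  refine ⟨fun t => c * w' t, ?_, h2.const_mul c⟩
  filter_upwards [h1] with t a
  exact a.const_mul c

lemma LDD.nonpos {w : EuclideanSpace ℝ (Fin 3) → ℝ} {x e : EuclideanSpace ℝ (Fin 3)} {d : ℝ}
    (h : LDD w x e d) (hm : IsLocalMax w x) : d ≤ 0 := by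
  obtain ⟨w', h1, h2⟩ := h
  by_contra hd
  push Not at hd
  set g : ℝ → ℝ := fun t => w (x + t • e) with hg
  have hgm : IsLocalMax g 0 := by
    have hc : Tendsto (fun t : ℝ => x + t • e) (nhds 0) (nhds x) := by
      have : Continuous (fun t : ℝ => x + t • e) := by fun_prop
      simpa using this.tendsto 0
    have := hc.eventually hm
    simpa [IsLocalMax, IsMaxFilter, hg] using this
  have e1 : deriv g =ᶠ[nhds 0] w' := by
    filter_upwards [h1] with t ht using ht.deriv
  have e2 : deriv (deriv g) 0 = d := by rw [e1.deriv_eq]; exact h2.deriv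
  have hmin : IsLocalMin g 0 := isLocalMin_of_deriv_deriv_pos (by rw [e2]; exact hd) hgm.deriv_eq_zero
    h1.self_of_nhds.continuousAt
  have e3 : g =ᶠ[nhds 0] fun _ => g 0 := by
    filter_upwards [hgm, hmin] with t a b using le_antisymm a b
  have e4 : deriv (deriv g) 0 = 0 := by
    rw [e3.deriv.deriv_eq]; simp
  linarith

lemma LDD.of_contDiffAt {w : EuclideanSpace ℝ (Fin 3) → ℝ} {x e : EuclideanSpace ℝ (Fin 3)}
    (h : ContDiffAt ℝ 2 w x) : LDD w x e (fderiv ℝ (fun y => fderiv ℝ w y e) x e) := by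
  have hl : ∀ t : ℝ, HasDerivAt (fun t : ℝ => x + t • e) e t := by
    intro t
    simpa using ((hasDerivAt_id t).smul_const e).const_add x
  have hc : Tendsto (fun t : ℝ => x + t • e) (nhds 0) (nhds x) := by
    have : Continuous (fun t : ℝ => x + t • e) := by fun_prop
    simpa using this.tendsto 0
  refine ⟨fun t => fderiv ℝ w (x + t • e) e, ?_, ?_⟩
  · have h1 : ∀ᶠ y in nhds x, ContDiffAt ℝ 2 w y := h.eventually (by simp)
    filter_upwards [hc.eventually h1] with t ht
    exact (ht.differentiableAt (by norm_num)).hasFDerivAt.comp_hasDerivAt t (hl t)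
  · have h1 : ContDiffAt ℝ 1 (fderiv ℝ w) x := h.fderiv_right (by norm_num)
    have h2 : DifferentiableAt ℝ (fun y => fderiv ℝ w y e) x :=
      (h1.differentiableAt (by norm_num)).clm_apply (differentiableAt_const e)
    have h3 : HasFDerivAt (fun y => fderiv ℝ w y e) (fderiv ℝ (fun y => fderiv ℝ w y e) x)
      (x + (0 : ℝ) • e) := by simpa using h2.hasFDerivAt
    exact h3.comp_hasDerivAt 0 (hl 0)

/-- harmonic at a point, via second line derivatives -/
def Harm (w : EuclideanSpace ℝ (Fin 3) → ℝ) (x : EuclideanSpace ℝ (Fin 3)) : Prop :=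
  ∃ d : Fin 3 → ℝ, (∀ i, LDD w x (EuclideanSpace.single i 1) (d i)) ∧ ∑ i, d i = 0

lemma Harm.add {w v : EuclideanSpace ℝ (Fin 3) → ℝ} {x : EuclideanSpace ℝ (Fin 3)}
    (h : Harm w x) (k : Harm v x) : Harm (fun y => w y + v y) x := by
  obtain ⟨a, h1, h2⟩ := h
  obtain ⟨b, k1, k2⟩ := k
  exact ⟨fun i => a i + b i, fun i => (h1 i).add (k1 i), by rw [Finset.sum_add_distrib, h2, k2, add_zero]⟩

lemma Harm.const_mul {w : EuclideanSpace ℝ (Fin 3) → ℝ} {x : EuclideanSpace ℝ (Fin 3)}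
    (h : Harm w x) (c : ℝ) : Harm (fun y => c * w y) x := by
  obtain ⟨a, h1, h2⟩ := h
  exact ⟨fun i => c * a i, fun i => (h1 i).const_mul c, by rw [← Finset.mul_sum, h2, mul_zero]⟩

lemma Harm.zero (x : EuclideanSpace ℝ (Fin 3)) : Harm (fun _ => 0) x :=
  ⟨fun _ => 0, fun _ => ⟨fun _ => 0, Eventually.of_forall fun t => hasDerivAt_const _ _,
    hasDerivAt_const _ _⟩, by simp⟩

lemma Harm.sum {F : ℕ → EuclideanSpace ℝ (Fin 3) → ℝ} {x : EuclideanSpace ℝ (Fin 3)}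
    (h : ∀ l, Harm (F l) x) (N : ℕ) : Harm (fun y => ∑ l ∈ Finset.range N, F l y) x := by
  induction N with
  | zero => simpa using Harm.zero x
  | succ N ih =>
    simp only [Finset.sum_range_succ]
    exact ih.add (h N)

lemma Harm.of_lap {w : EuclideanSpace ℝ (Fin 3) → ℝ} {x : EuclideanSpace ℝ (Fin 3)}
    (h : ContDiffAt ℝ 2 w x) (hl : lap w x = 0) : Harm w x :=
  ⟨_, fun _ => LDD.of_contDiffAt h, hl⟩

lemma norm_line_deriv (x : EuclideanSpace ℝ (Fin 3)) (i : Fin 3) (t : ℝ)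
    (h : x + t • EuclideanSpace.single i (1 : ℝ) ≠ 0) :
    HasDerivAt (fun t : ℝ => ‖x + t • EuclideanSpace.single i (1 : ℝ)‖⁻¹)
      (-(x i + t) * ‖x + t • EuclideanSpace.single i (1 : ℝ)‖⁻¹ ^ 3) t := by
  have hn : ‖x + t • EuclideanSpace.single i (1 : ℝ)‖ ≠ 0 := norm_ne_zero_iff.2 h
  have hsq : ∀ t : ℝ, ‖x + t • EuclideanSpace.single i (1 : ℝ)‖ ^ 2 = ‖x‖ ^ 2 + 2 * t * x i + t ^ 2 := by
    intro t
    rw [norm_add_sq_real, inner_smul_right, EuclideanSpace.inner_single_right, norm_smul]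
    simp
    ring
  have e : (fun t : ℝ => ‖x + t • EuclideanSpace.single i (1 : ℝ)‖⁻¹) =
      fun t => (Real.sqrt (‖x‖ ^ 2 + 2 * t * x i + t ^ 2))⁻¹ := by
    ext t
    rw [← hsq, Real.sqrt_sq (norm_nonneg _)]
  have h1 : HasDerivAt (fun t : ℝ => ‖x‖ ^ 2 + 2 * t * x i + t ^ 2) (2 * x i + 2 * t) t := by
    have a := ((hasDerivAt_id t).const_mul 2).mul_const (x i)
    have b := (hasDerivAt_id t).pow 2
    have := (a.const_add (‖x‖ ^ 2)).add b
    refine this.congr_deriv ?_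
    simp
  have hne : ‖x‖ ^ 2 + 2 * t * x i + t ^ 2 ≠ 0 := by rw [← hsq]; positivity
  have h2 := (h1.sqrt hne).inv (by rw [← hsq, Real.sqrt_sq (norm_nonneg _)]; exact hn)
  rw [e]
  refine h2.congr_deriv ?_
  rw [← hsq, Real.sqrt_sq (norm_nonneg _)]
  field_simp

lemma line_ne (x : EuclideanSpace ℝ (Fin 3)) (hx : x ≠ 0) (e : EuclideanSpace ℝ (Fin 3)) :
    ∀ᶠ t in nhds (0 : ℝ), x + t • e ≠ 0 := by
  have hc : Continuous (fun t : ℝ => x + t • e) := by fun_prop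
  have : Tendsto (fun t : ℝ => x + t • e) (nhds 0) (nhds x) := by simpa using hc.tendsto 0
  exact this.eventually_ne hx

lemma norm_sq_three (x : EuclideanSpace ℝ (Fin 3)) : ‖x‖ ^ 2 = x 0 ^ 2 + x 1 ^ 2 + x 2 ^ 2 := by
  rw [EuclideanSpace.norm_sq_eq, Fin.sum_univ_three]; simp

lemma inv_sq_LDD (x : EuclideanSpace ℝ (Fin 3)) (hx : x ≠ 0) (i : Fin 3) :
    LDD (fun y => ‖y‖⁻¹ ^ 2) x (EuclideanSpace.single i 1)
      (-2 * ‖x‖⁻¹ ^ 4 + 8 * x i ^ 2 * ‖x‖⁻¹ ^ 6) := by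
  refine ⟨fun t => -2 * (x i + t) * ‖x + t • EuclideanSpace.single i (1 : ℝ)‖⁻¹ ^ 4, ?_, ?_⟩
  · filter_upwards [line_ne x hx (EuclideanSpace.single i 1)] with t ht
    refine ((norm_line_deriv x i t ht).pow 2).congr_deriv ?_
    simp; ring
  · have h0 := norm_line_deriv x i 0 (by simpa using hx)
    have h1 := (((hasDerivAt_id (0 : ℝ)).const_add (x i)).const_mul (-2)).mul (h0.pow 4)
    refine h1.congr_deriv ?_
    simp; ring

/-- exterior solid zonal harmonic -/
def solidL (l : ℕ) (x : EuclideanSpace ℝ (Fin 3)) : ℝ :=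
  ‖x‖⁻¹ ^ (l + 1) * (legendreP l).eval (x 2 * ‖x‖⁻¹)

lemma solid_LDD (l : ℕ) (x : EuclideanSpace ℝ (Fin 3)) (hx : x ≠ 0) (i : Fin 3) (δ : ℝ)
    (hδ : δ = (EuclideanSpace.single i (1 : ℝ) : EuclideanSpace ℝ (Fin 3)) 2) (s q P P' P'' : ℝ)
    (hs : s = ‖x‖⁻¹) (hq : q = δ * s - x 2 * x i * s ^ 3)
    (hP : P = (legendreP l).eval (x 2 * ‖x‖⁻¹))
    (hP' : P' = (Polynomial.derivative (legendreP l)).eval (x 2 * ‖x‖⁻¹))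
    (hP'' : P'' = (Polynomial.derivative (Polynomial.derivative (legendreP l))).eval (x 2 * ‖x‖⁻¹)) :
    LDD (solidL l) x (EuclideanSpace.single i 1)
      (-(l + 1) * s ^ (l + 3) * P + (l + 1) * (l + 3) * x i ^ 2 * s ^ (l + 5) * P
        - 2 * (l + 1) * x i * s ^ (l + 3) * P' * q + s ^ (l + 1) * P'' * q ^ 2
        + s ^ (l + 1) * P' * (-2 * δ * x i * s ^ 3 - x 2 * s ^ 3 + 3 * x 2 * x i ^ 2 * s ^ 5)) := by
  have hz : ∀ t : ℝ, HasDerivAt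
      (fun t : ℝ => (x + t • EuclideanSpace.single i (1 : ℝ) : EuclideanSpace ℝ (Fin 3)) 2) δ t := by
    intro t
    have := ((hasDerivAt_id t).mul_const δ).const_add (x 2)
    simpa [hδ] using this
  set S : ℝ → ℝ := fun t => ‖x + t • EuclideanSpace.single i (1 : ℝ)‖⁻¹ with hS
  set Z : ℝ → ℝ := fun t => (x + t • EuclideanSpace.single i (1 : ℝ) : EuclideanSpace ℝ (Fin 3)) 2 with hZ
  have hSd : ∀ t : ℝ, x + t • EuclideanSpace.single i (1 : ℝ) ≠ 0 →
      HasDerivAt S (-(x i + t) * S t ^ 3) t := fun t ht => norm_line_deriv x i t ht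
  have S0 : S 0 = s := by simp [hS, hs]
  have Z0 : Z 0 = x 2 := by simp [hZ]
  have hpoly : ∀ (Q : Polynomial ℝ) (t : ℝ), x + t • EuclideanSpace.single i (1 : ℝ) ≠ 0 →
      HasDerivAt (fun t => Q.eval (Z t * S t))
        (Q.derivative.eval (Z t * S t) * (δ * S t + Z t * (-(x i + t) * S t ^ 3))) t := by
    intro Q t ht
    exact (Q.hasDerivAt (Z t * S t)).comp t ((hz t).mul (hSd t ht))
  refine ⟨fun t => -(l + 1) * (x i + t) * S t ^ (l + 3) * (legendreP l).eval (Z t * S t) +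
    S t ^ (l + 1) * ((Polynomial.derivative (legendreP l)).eval (Z t * S t) *
      (δ * S t - Z t * (x i + t) * S t ^ 3)), ?_, ?_⟩
  · filter_upwards [line_ne x hx (EuclideanSpace.single i 1)] with t ht
    have h1 := ((hSd t ht).pow (l + 1)).mul (hpoly (legendreP l) t ht)
    refine h1.congr_deriv ?_
    simp
    ring
  · have ht : x + (0 : ℝ) • EuclideanSpace.single i (1 : ℝ) ≠ 0 := by simpa using hx
    have hS0 := hSd 0 ht
    have hX := (hasDerivAt_id (0 : ℝ)).const_add (x i)
    have h1 := (((hX.const_mul (-((l : ℝ) + 1))).mul (hS0.pow (l + 3))).mul (hpoly (legendreP l) 0 ht)).add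
      ((hS0.pow (l + 1)).mul ((hpoly (Polynomial.derivative (legendreP l)) 0 ht).mul
        ((hS0.const_mul δ).sub (((hz 0).mul hX).mul (hS0.pow 3)))))
    refine h1.congr_deriv ?_
    rw [← hs] at hP hP' hP''
    simp only [Pi.mul_apply, Pi.pow_apply, Pi.sub_apply, S0, Z0, id, add_zero, ← hP, ← hP', ← hP'']
    have e1 : l + 3 - 1 = l + 2 := by omega
    rw [hq, e1, Nat.add_sub_cancel]
    push_cast
    ring

lemma solid_harm (l : ℕ) (x : EuclideanSpace ℝ (Fin 3)) (hx : x ≠ 0) : Harm (solidL l) x := by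
  refine ⟨_, fun i => solid_LDD l x hx i _ rfl _ _ _ _ _ rfl rfl rfl rfl rfl, ?_⟩
  have hode := leg_ode_eval l (x 2 * ‖x‖⁻¹)
  have hn := norm_sq_three x
  have hs : ‖x‖⁻¹ ^ 2 * (x 0 ^ 2 + x 1 ^ 2 + x 2 ^ 2) = 1 := by
    rw [← hn]; have : ‖x‖ ≠ 0 := norm_ne_zero_iff.2 hx
    field_simp
  set s := ‖x‖⁻¹
  set P := (legendreP l).eval (x 2 * s)
  set P' := (Polynomial.derivative (legendreP l)).eval (x 2 * s)
  set P'' := (Polynomial.derivative (Polynomial.derivative (legendreP l))).eval (x 2 * s)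
  rw [Fin.sum_univ_three]
  simp
  generalize x 0 = a at *
  generalize x 1 = b at *
  generalize x 2 = z at *
  linear_combination (s ^ (l + 3)) * hode +
    ((l + 1) * (l + 3) * s ^ (l + 3) * P + 2 * (l + 1) * z * s ^ (l + 4) * P'
      + s ^ (l + 5) * z ^ 2 * P'' + 3 * z * s ^ (l + 4) * P') * hs

lemma inv_norm_tendsto : Tendsto (fun x : EuclideanSpace ℝ (Fin 3) => ‖x‖⁻¹)
    (Bornology.cobounded _) (nhds 0) :=
  tendsto_norm_cobounded_atTop.inv_tendsto_atTop

lemma ext_ne_zero {x : EuclideanSpace ℝ (Fin 3)} (hx : 1 ≤ ‖x‖) : x ≠ 0 := by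
  intro h; rw [h, norm_zero] at hx; linarith

lemma max_principle (w : EuclideanSpace ℝ (Fin 3) → ℝ) (ε : ℝ) (hε : 0 ≤ ε)
    (hc : ContinuousOn w closedExt) (hh : ∀ x ∈ extDomain, Harm w x)
    (h0 : Tendsto w (Bornology.cobounded _) (nhds 0))
    (hb : ∀ x, ‖x‖ = 1 → w x ≤ ε) : ∀ x ∈ closedExt, w x ≤ ε := by
  intro x0 hx0
  refine le_of_forall_pos_le_add fun δ hδ => ?_
  by_contra hcon
  push Not at hcon
  set W : EuclideanSpace ℝ (Fin 3) → ℝ := fun x => w x + δ * ‖x‖⁻¹ ^ 2 with hW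
  have hx0' : ε + δ < W x0 := by
    have : 0 ≤ δ * ‖x0‖⁻¹ ^ 2 := by positivity
    simp only [hW]; linarith
  have hWt : Tendsto W (Bornology.cobounded _) (nhds 0) := by
    have := h0.add ((inv_norm_tendsto.pow 2).const_mul δ)
    have e : (0 : ℝ) + δ * 0 ^ 2 = 0 := by simp
    rw [e] at this
    exact this
  have hev : ∀ᶠ x in Bornology.cobounded (EuclideanSpace ℝ (Fin 3)), W x < ε + δ :=
    hWt.eventually (gt_mem_nhds (by linarith))
  obtain ⟨R, hR⟩ : ∃ R : ℝ, ∀ x : EuclideanSpace ℝ (Fin 3), R ≤ ‖x‖ → W x < ε + δ := by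
    have h1 := (Metric.hasBasis_cobounded_compl_closedBall (0 : EuclideanSpace ℝ (Fin 3))).eventually_iff.1 hev
    obtain ⟨R, -, hR⟩ := h1
    refine ⟨R + 1, fun x hx => hR ?_⟩
    simp; linarith
  have hx0R : ‖x0‖ < R := by
    by_contra h; push Not at h
    linarith [hR x0 h]
  set K : Set (EuclideanSpace ℝ (Fin 3)) := closedExt ∩ Metric.closedBall 0 R with hK
  have hclosed : IsClosed closedExt := isClosed_le continuous_const continuous_norm
  have hKc : IsCompact K := (isCompact_closedBall _ _).inter_left hclosed
  have hWc : ContinuousOn W closedExt := by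
    refine hc.add (continuousOn_const.mul ((continuousOn_id.norm.inv₀ ?_).pow 2))
    intro x hx
    exact norm_ne_zero_iff.2 (ext_ne_zero hx)
  obtain ⟨x1, hx1, hmax⟩ := hKc.exists_isMaxOn ⟨x0, hx0, by simpa using hx0R.le⟩
    (hWc.mono Set.inter_subset_left)
  have h1 : W x0 ≤ W x1 := hmax ⟨hx0, by simpa using hx0R.le⟩
  have hn1 : 1 ≤ ‖x1‖ := hx1.1
  have hn2 : ‖x1‖ < R := by
    by_contra h; push Not at h
    linarith [hR x1 h]
  have hn3 : 1 < ‖x1‖ := by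
    rcases hn1.eq_or_lt with h | h
    · exfalso
      have a := hb x1 h.symm
      have : W x1 = w x1 + δ := by simp [hW, ← h]
      linarith
    · exact h
  have hloc : IsLocalMax W x1 := by
    have : {x : EuclideanSpace ℝ (Fin 3) | 1 < ‖x‖ ∧ ‖x‖ < R} ∈ nhds x1 := by
      refine IsOpen.mem_nhds ?_ ⟨hn3, hn2⟩
      exact (isOpen_lt continuous_const continuous_norm).inter (isOpen_lt continuous_norm continuous_const)
    filter_upwards [this] with y hy
    exact hmax ⟨hy.1.le, by simpa using hy.2.le⟩
  obtain ⟨d, hd, hsum⟩ := hh x1 hn3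
  have hne := ext_ne_zero hn1
  have key : ∀ i, d i + δ * (-2 * ‖x1‖⁻¹ ^ 4 + 8 * x1 i ^ 2 * ‖x1‖⁻¹ ^ 6) ≤ 0 :=
    fun i => ((hd i).add ((inv_sq_LDD x1 hne i).const_mul δ)).nonpos hloc
  have hn := norm_sq_three x1
  have hs : ‖x1‖⁻¹ ^ 2 * (x1 0 ^ 2 + x1 1 ^ 2 + x1 2 ^ 2) = 1 := by
    rw [← hn]; have : ‖x1‖ ≠ 0 := norm_ne_zero_iff.2 hne
    field_simp
  have hpos : 0 < δ * ‖x1‖⁻¹ ^ 4 := by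
    have : 0 < ‖x1‖ := by linarith
    positivity
  have k0 := key 0
  have k1 := key 1
  have k2 := key 2
  rw [Fin.sum_univ_three] at hsum
  have : (d 0 + δ * (-2 * ‖x1‖⁻¹ ^ 4 + 8 * x1 0 ^ 2 * ‖x1‖⁻¹ ^ 6)) +
    (d 1 + δ * (-2 * ‖x1‖⁻¹ ^ 4 + 8 * x1 1 ^ 2 * ‖x1‖⁻¹ ^ 6)) +
    (d 2 + δ * (-2 * ‖x1‖⁻¹ ^ 4 + 8 * x1 2 ^ 2 * ‖x1‖⁻¹ ^ 6)) = 2 * (δ * ‖x1‖⁻¹ ^ 4) := by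
    linear_combination hsum + 8 * δ * ‖x1‖⁻¹ ^ 4 * hs
  linarith

lemma coord_div_mem (x : EuclideanSpace ℝ (Fin 3)) : x 2 * ‖x‖⁻¹ ∈ Set.Icc (-1 : ℝ) 1 := by
  rw [Set.mem_Icc, ← abs_le, abs_mul, abs_inv, abs_norm]
  rcases eq_or_ne x 0 with h | h
  · simp [h]
  · have h1 : |x 2| ≤ ‖x‖ := by simpa using PiLp.norm_apply_le x 2
    rw [← div_eq_mul_inv]
    exact div_le_one_of_le₀ h1 (norm_nonneg _)

/-- normalized solid harmonic in terms of `eL` -/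
lemma solid_eq (l : ℕ) (x : EuclideanSpace ℝ (Fin 3)) :
    Real.sqrt ((2 * l + 1) / 2) * solidL l x = ‖x‖⁻¹ ^ (l + 1) * eL l (x 2 * ‖x‖⁻¹) := by
  unfold solidL eL
  rw [clamp1_eq (coord_div_mem x)]
  ring

lemma solid_tendsto (l : ℕ) : Tendsto (solidL l) (Bornology.cobounded _) (nhds 0) := by
  have h1 : Tendsto (fun x : EuclideanSpace ℝ (Fin 3) => ‖x‖⁻¹ ^ (l + 1)) (Bornology.cobounded _) (nhds 0) := by
    simpa using inv_norm_tendsto.pow (l + 1)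
  refine squeeze_zero_norm (fun x => ?_) h1
  unfold solidL
  rw [norm_mul, Real.norm_of_nonneg (by positivity)]
  have := leg_abs_le l _ (coord_div_mem x)
  exact mul_le_of_le_one_right (by positivity) this

lemma solid_contOn (l : ℕ) : ContinuousOn (solidL l) closedExt := by
  unfold solidL
  have h1 : ContinuousOn (fun x : EuclideanSpace ℝ (Fin 3) => ‖x‖⁻¹) closedExt :=
    continuousOn_id.norm.inv₀ fun x hx => norm_ne_zero_iff.2 (ext_ne_zero hx)
  refine (h1.pow _).mul ?_
  refine (legendreP l).continuous.comp_continuousOn (ContinuousOn.mul ?_ h1)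
  exact Continuous.continuousOn (by fun_prop)

lemma expansion (u : EuclideanSpace ℝ (Fin 3) → ℝ) (c : ℕ → ℝ) (hc : SumL c)
    (hu2 : ContDiffOn ℝ 2 u extDomain) (hul : ∀ x ∈ extDomain, lap u x = 0)
    (huc : ContinuousOn u closedExt) (hu0 : Tendsto u (Bornology.cobounded _) (nhds 0))
    (hb : ∀ x, ‖x‖ = 1 → u x = SL c (x 2)) (x : EuclideanSpace ℝ (Fin 3)) (hx : x ∈ closedExt) :
    u x = ∑' l, c l * (‖x‖⁻¹ ^ (l + 1) * eL l (x 2 * ‖x‖⁻¹)) := by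
  have hopen : IsOpen extDomain := isOpen_lt continuous_const continuous_norm
  set T : ℕ → ℝ := fun N => ∑' l : ℕ, |c (l + N)| * Real.sqrt ((l + N : ℕ) + 1) with hT
  have hTt : Tendsto T atTop (nhds 0) := tendsto_sum_nat_add (fun j : ℕ => |c j| * Real.sqrt (j + 1))
  have hT0 : ∀ N, 0 ≤ T N := fun N => tsum_nonneg fun l => by positivity
  set a : ℕ → ℝ := fun l => c l * Real.sqrt ((2 * l + 1) / 2) with ha
  have hbd : ∀ N, ∀ y : EuclideanSpace ℝ (Fin 3), ‖y‖ = 1 →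
      |u y - ∑ l ∈ Finset.range N, a l * solidL l y| ≤ T N := by
    intro N y hy
    rw [hb y hy]
    have e : ∑ l ∈ Finset.range N, a l * solidL l y = ∑ l ∈ Finset.range N, c l * eL l (y 2) := by
      refine Finset.sum_congr rfl fun l _ => ?_
      simp only [ha]
      rw [mul_assoc, solid_eq, hy]; simp
    rw [e]
    unfold SL
    rw [← (hc.summable (y 2)).sum_add_tsum_nat_add N, add_sub_cancel_left]
    have := tsum_of_norm_bounded ((summable_nat_add_iff N).2 hc).hasSum
      (fun j => term_le c (j + N) (y 2))
    simpa [hT] using this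
  have hharm : ∀ (k : ℝ) (N : ℕ), ∀ y ∈ extDomain,
      Harm (fun y => k * (u y + (-1) * ∑ l ∈ Finset.range N, a l * solidL l y)) y := by
    intro k N y hy
    refine Harm.const_mul (Harm.add (Harm.of_lap (hu2.contDiffAt (hopen.mem_nhds hy)) (hul y hy))
      (Harm.const_mul (Harm.sum (fun l => Harm.const_mul (solid_harm l y ?_) (a l)) N) (-1))) k
    exact ext_ne_zero (le_of_lt hy)
  have hcont : ∀ (k : ℝ) (N : ℕ), ContinuousOn
      (fun y => k * (u y + (-1) * ∑ l ∈ Finset.range N, a l * solidL l y)) closedExt := by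
    intro k N
    refine continuousOn_const.mul (huc.add (continuousOn_const.mul ?_))
    exact continuousOn_finsetSum _ fun l _ => continuousOn_const.mul (solid_contOn l)
  have hlim : ∀ (k : ℝ) (N : ℕ), Tendsto
      (fun y => k * (u y + (-1) * ∑ l ∈ Finset.range N, a l * solidL l y))
        (Bornology.cobounded _) (nhds 0) := by
    intro k N
    have h1 : Tendsto (fun y => ∑ l ∈ Finset.range N, a l * solidL l y)
        (Bornology.cobounded _) (nhds 0) := by
      have := tendsto_finsetSum (Finset.range N) (fun l _ => (solid_tendsto l).const_mul (a l))
      simpa using this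
    have := (hu0.add (h1.const_mul (-1))).const_mul k
    simpa using this
  have hmain : ∀ N, |u x - ∑ l ∈ Finset.range N, a l * solidL l x| ≤ T N := by
    intro N
    have p1 := max_principle _ (T N) (hT0 N) (hcont 1 N) (hharm 1 N) (hlim 1 N) (fun y hy => by
      have := (abs_le.1 (hbd N y hy)).2
      linarith) x hx
    have p2 := max_principle _ (T N) (hT0 N) (hcont (-1) N) (hharm (-1) N) (hlim (-1) N) (fun y hy => by
      have := (abs_le.1 (hbd N y hy)).1
      linarith) x hx
    rw [abs_le]
    constructor <;> linarith
  have hsum : Summable fun l => c l * (‖x‖⁻¹ ^ (l + 1) * eL l (x 2 * ‖x‖⁻¹)) := by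
    refine Summable.of_norm_bounded hc fun l => ?_
    have h1 : ‖x‖⁻¹ ^ (l + 1) ≤ 1 := pow_le_one₀ (by positivity) (inv_le_one_of_one_le₀ hx)
    have h2 := term_le c l (x 2 * ‖x‖⁻¹)
    calc _ = ‖x‖⁻¹ ^ (l + 1) * ‖c l * eL l (x 2 * ‖x‖⁻¹)‖ := by
          rw [mul_left_comm, norm_mul, Real.norm_of_nonneg (by positivity)]
      _ ≤ _ := (mul_le_of_le_one_left (norm_nonneg _) h1).trans h2
  have t1 := hsum.hasSum.tendsto_sum_nat
  have t2 : Tendsto (fun N => ∑ l ∈ Finset.range N, c l * (‖x‖⁻¹ ^ (l + 1) * eL l (x 2 * ‖x‖⁻¹)))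
      atTop (nhds (u x)) := by
    rw [tendsto_iff_dist_tendsto_zero]
    refine squeeze_zero (fun _ => dist_nonneg) (fun N => ?_) hTt
    rw [dist_comm, Real.dist_eq]
    have e : ∑ l ∈ Finset.range N, c l * (‖x‖⁻¹ ^ (l + 1) * eL l (x 2 * ‖x‖⁻¹))
      = ∑ l ∈ Finset.range N, a l * solidL l x := by
      refine Finset.sum_congr rfl fun l _ => ?_
      rw [← solid_eq]; simp only [ha]; ring
    rw [e]
    exact hmain N
  exact tendsto_nhds_unique t2 t1

lemma sphCoord_norm (θ φ : ℝ) : ‖sphCoord θ φ‖ = 1 := by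
  have h : ‖sphCoord θ φ‖ ^ 2 = 1 := by
    rw [norm_sq_three]
    simp [sphCoord]
    nlinarith [Real.sin_sq_add_cos_sq θ, Real.sin_sq_add_cos_sq φ]
  nlinarith [norm_nonneg (sphCoord θ φ)]

lemma sphCoord_two (θ φ : ℝ) : sphCoord θ φ 2 = Real.sin θ := by simp [sphCoord]

/-- radial derivative of an expansion -/
lemma radial_formula (u : EuclideanSpace ℝ (Fin 3) → ℝ) (c : ℕ → ℝ)
    (hc : SumL fun l : ℕ => ((l : ℝ) + 1) * c l)
    (hexp : ∀ x ∈ closedExt, u x = ∑' l, c l * (‖x‖⁻¹ ^ (l + 1) * eL l (x 2 * ‖x‖⁻¹))) (θ φ : ℝ) :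
    radialDeriv u θ φ = -SL (fun l : ℕ => ((l : ℝ) + 1) * c l) (Real.sin θ) := by
  set t := Real.sin θ
  have hc0 : SumL c := hc.mono fun l => by
    show |c l| ≤ |((l : ℝ) + 1) * c l|
    rw [abs_mul, abs_of_pos (by positivity : (0 : ℝ) < (l : ℝ) + 1)]
    nlinarith [abs_nonneg (c l), Nat.cast_nonneg (α := ℝ) l]
  have hval : ∀ r : ℝ, 1 ≤ r → u (r • sphCoord θ φ) = ∑' l, r⁻¹ ^ (l + 1) * (c l * eL l t) := by
    intro r hr
    have hn : ‖r • sphCoord θ φ‖ = r := by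
      rw [norm_smul, sphCoord_norm, mul_one, Real.norm_of_nonneg (by linarith)]
    rw [hexp _ (by show (1 : ℝ) ≤ ‖r • sphCoord θ φ‖; rw [hn]; exact hr), hn]
    have : (r • sphCoord θ φ) 2 * r⁻¹ = t := by
      rw [PiLp.smul_apply, sphCoord_two, smul_eq_mul]
      have : r ≠ 0 := by linarith
      field_simp; rfl
    rw [this]
    congr 1; ext l; ring
  have hbern : ∀ (l : ℕ) (r : ℝ), 1 < r → |(r⁻¹ ^ (l + 1) - 1) * (r - 1)⁻¹| ≤ l + 1 := by
    intro l r hr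
    have h1 : r⁻¹ ^ (l + 1) ≤ 1 := pow_le_one₀ (by positivity) (inv_le_one_of_one_le₀ hr.le)
    have h2 : 1 - r⁻¹ ^ (l + 1) ≤ (l + 1) * (r - 1) := by
      have h3 := one_add_mul_le_pow (a := r⁻¹ - 1) (by
        have : 0 < r⁻¹ := by positivity
        linarith) (l + 1)
      push_cast at h3
      have h4 : 1 - r⁻¹ ≤ r - 1 := by
        have : 0 < r := by linarith
        have h5 : r * r⁻¹ = 1 := mul_inv_cancel₀ this.ne'
        have : 0 < r⁻¹ := by positivity
        nlinarith [mul_pos (sub_pos.2 hr) (sub_pos.2 hr)]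
      have h6 : (0 : ℝ) ≤ l + 1 := by positivity
      have h7 : r⁻¹ ^ (l + 1) = (1 + (r⁻¹ - 1)) ^ (l + 1) := by congr 1; ring
      rw [h7]
      nlinarith [mul_le_mul_of_nonneg_left h4 h6]
    rw [abs_mul, abs_inv, abs_of_pos (sub_pos.2 hr), abs_of_nonpos (by linarith), ← div_eq_mul_inv,
      div_le_iff₀ (sub_pos.2 hr)]
    linarith
  have hs0 : Summable fun l => c l * eL l t := hc0.summable t
  have hs : ∀ r : ℝ, 1 ≤ r → Summable fun l => r⁻¹ ^ (l + 1) * (c l * eL l t) := by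
    intro r hr
    refine Summable.of_norm_bounded hs0.norm fun l => ?_
    rw [norm_mul, Real.norm_of_nonneg (by positivity)]
    exact mul_le_of_le_one_left (norm_nonneg _) (pow_le_one₀ (by positivity) (inv_le_one_of_one_le₀ hr))
  have hder : HasDerivWithinAt (fun r : ℝ => u (r • sphCoord θ φ))
      (∑' l : ℕ, -((l : ℝ) + 1) * (c l * eL l t)) (Set.Ici 1) 1 := by
    rw [hasDerivWithinAt_iff_tendsto_slope]
    have hset : Set.Ici (1 : ℝ) \ {1} = Set.Ioi 1 := by ext; simp [lt_iff_le_and_ne, eq_comm]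
    rw [hset]
    have hlim : Tendsto (fun r : ℝ => ∑' l : ℕ, ((r⁻¹ ^ (l + 1) - 1) * (r - 1)⁻¹) * (c l * eL l t))
        (nhdsWithin 1 (Set.Ioi 1)) (nhds (∑' l : ℕ, -((l : ℝ) + 1) * (c l * eL l t))) := by
      refine tendsto_tsum_of_dominated_convergence (bound := fun l : ℕ =>
        |((l : ℝ) + 1) * c l| * Real.sqrt (l + 1)) hc ?_ ?_
      · intro l
        refine Tendsto.mul_const _ ?_
        have h1 : HasDerivAt (fun r : ℝ => r⁻¹ ^ (l + 1)) (-((l : ℝ) + 1)) 1 := by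
          refine ((hasDerivAt_inv (one_ne_zero)).pow (l + 1)).congr_deriv ?_
          simp
        have h2 := (hasDerivAt_iff_tendsto_slope.1 h1).mono_left
          (nhdsWithin_mono (1 : ℝ) (show Set.Ioi (1 : ℝ) ⊆ {1}ᶜ from fun r hr => (ne_of_gt hr)))
        refine h2.congr fun r => ?_
        simp [slope_def_field, div_eq_mul_inv]
      · filter_upwards [self_mem_nhdsWithin] with r hr l
        have e1 : ‖(r⁻¹ ^ (l + 1) - 1) * (r - 1)⁻¹ * (c l * eL l t)‖ =
            |(r⁻¹ ^ (l + 1) - 1) * (r - 1)⁻¹| * (|c l| * |eL l t|) := by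
          rw [Real.norm_eq_abs, abs_mul _ (c l * eL l t), abs_mul (c l)]
        have e2 : |((l : ℝ) + 1) * c l| = ((l : ℝ) + 1) * |c l| := by
          rw [abs_mul, abs_of_pos (by positivity : (0 : ℝ) < (l : ℝ) + 1)]
        rw [e1, e2, mul_assoc]
        refine mul_le_mul (hbern l r hr) ?_ (by positivity) (by positivity)
        exact mul_le_mul_of_nonneg_left (eL_abs_le l t) (abs_nonneg _)
    refine hlim.congr' ?_
    filter_upwards [self_mem_nhdsWithin] with r hr
    have hr' : 1 ≤ r := le_of_lt hr
    rw [slope_def_field, hval r hr', hval 1 le_rfl, ← (hs r hr').tsum_sub (hs 1 le_rfl), div_eq_mul_inv,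
      ← tsum_mul_right]
    congr 1; ext l
    simp; ring
  unfold radialDeriv
  rw [hder.derivWithin (uniqueDiffOn_Ici 1 1 (by simp)), SL, ← tsum_neg]
  congr 1; ext l; ring

lemma sphCoord_continuous : Continuous fun p : ℝ × ℝ => sphCoord p.1 p.2 := by
  unfold sphCoord
  refine (PiLp.continuous_toLp 2 _).comp (continuous_pi fun i => ?_)
  fin_cases i <;> simp <;> fun_prop

lemma sphCoord_arcsin (θ φ : ℝ) :
    ∃ φ', sphCoord θ φ = sphCoord (Real.arcsin (Real.sin θ)) φ' := by
  have hs : Real.sin (Real.arcsin (Real.sin θ)) = Real.sin θ :=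
    Real.sin_arcsin (Real.neg_one_le_sin θ) (Real.sin_le_one θ)
  have hc : Real.cos (Real.arcsin (Real.sin θ)) = |Real.cos θ| := by
    rw [Real.cos_arcsin, ← Real.cos_sq', Real.sqrt_sq_eq_abs]
  rcases le_total 0 (Real.cos θ) with h | h
  · refine ⟨φ, ?_⟩
    unfold sphCoord
    rw [hs, hc, abs_of_nonneg h]
  · refine ⟨φ + Real.pi, ?_⟩
    unfold sphCoord
    rw [hs, hc, abs_of_nonpos h, Real.cos_add_pi, Real.sin_add_pi]
    simp

lemma sphere_param (y : EuclideanSpace ℝ (Fin 3)) (hy : ‖y‖ = 1) :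
    ∃ θ φ, y = sphCoord θ φ := by
  have hn := norm_sq_three y
  rw [hy] at hn
  have h1 : |y 2| ≤ 1 := by
    rw [abs_le_one_iff_mul_self_le_one]; nlinarith [sq_nonneg (y 0), sq_nonneg (y 1)]
  have h2 := abs_le.1 h1
  set z : ℂ := ⟨y 0, y 1⟩ with hz
  have hzn : ‖z‖ = Real.cos (Real.arcsin (y 2)) := by
    rw [Real.cos_arcsin, Complex.norm_def, Complex.normSq_mk]
    congr 1; linarith
  refine ⟨Real.arcsin (y 2), Complex.arg z, ?_⟩
  ext i
  fin_cases i
  · simp only [sphCoord]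
    rw [← hzn]
    simp [Complex.norm_mul_cos_arg, hz]
  · simp only [sphCoord]
    rw [← hzn]
    simp [Complex.norm_mul_sin_arg, hz]
  · simp [sphCoord, Real.sin_arcsin h2.1 h2.2]

lemma sphere_integral (f g : ℝ → ℂ) :
    ∫ p : ℝ × ℝ, f p.1 * g p.2 ∂sphereMeasure =
      (∫ θ in (-(Real.pi / 2))..(Real.pi / 2), (Real.cos θ : ℂ) * f θ) *
        ∫ φ in (-Real.pi)..Real.pi, g φ := by
  unfold sphereMeasure
  rw [integral_withDensity_eq_integral_toReal_smul (by fun_prop) (by simp)]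
  have hpi := Real.pi_pos
  rw [intervalIntegral.integral_of_le (by linarith), intervalIntegral.integral_of_le (by linarith),
    ← integral_Icc_eq_integral_Ioc, ← integral_Ico_eq_integral_Ioc, ← setIntegral_prod_mul]
  refine setIntegral_congr_fun (measurableSet_Icc.prod measurableSet_Ico) fun p hp => ?_
  have : 0 ≤ Real.cos p.1 := Real.cos_nonneg_of_mem_Icc hp.1
  simp only [ENNReal.toReal_ofReal this, Complex.real_smul]
  ring

lemma exp_int (m : ℤ) : ∫ φ in (-Real.pi)..Real.pi,
    (starRingEnd ℂ) (Complex.exp (Complex.I * m * (φ : ℂ))) = if m = 0 then 2 * (Real.pi : ℂ) else 0 := by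
  have e : ∀ φ : ℝ, (starRingEnd ℂ) (Complex.exp (Complex.I * m * (φ : ℂ))) =
      Complex.exp ((-(m : ℂ) * Complex.I) * (φ : ℂ)) := by
    intro φ
    rw [← Complex.exp_conj]
    simp
    ring_nf
  simp_rw [e]
  split_ifs with h
  · subst h; simp; ring
  · have hm : -(m : ℂ) * Complex.I ≠ 0 := by
      simp [h]
    rw [integral_exp_mul_complex hm]
    have : Complex.exp (-(m : ℂ) * Complex.I * (Real.pi : ℝ)) =
        Complex.exp (-(m : ℂ) * Complex.I * ((-Real.pi : ℝ) : ℂ)) := by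
      rw [Complex.exp_eq_exp_iff_exists_int]
      refine ⟨-m, ?_⟩
      push_cast; ring
    rw [this]; simp

lemma subst_sin (F : ℝ → ℝ) (hF : Continuous F) :
    ∫ θ in (-(Real.pi / 2))..(Real.pi / 2), Real.cos θ * F (Real.sin θ) = ∫ x in (-1 : ℝ)..1, F x := by
  have := intervalIntegral.integral_comp_mul_deriv (a := -(Real.pi / 2)) (b := Real.pi / 2)
    (f := Real.sin) (f' := Real.cos) (g := F) (fun x _ => Real.hasDerivAt_sin x)
    (Real.continuous_cos.continuousOn) hF
  rw [Real.sin_neg, Real.sin_pi_div_two] at this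
  rw [← this]
  congr 1; ext x; simp [mul_comm]

lemma flCoeff_axial (h : ℝ → ℝ) (hh : Continuous h) (ψ : ℝ → ℝ → ℂ)
    (hψ : ∀ θ φ, ψ θ φ = (h (Real.sin θ) : ℂ)) (l : ℕ) (m : ℤ) :
    flCoeff ψ l m = if m = 0 then ((Real.sqrt (2 * Real.pi) * aL h l : ℝ) : ℂ) else 0 := by
  have e : flCoeff ψ l m = ∫ p : ℝ × ℝ, (fun θ => ((h (Real.sin θ) *
      (alphaY l m * assocLegendre l m.natAbs (Real.sin θ)) : ℝ) : ℂ)) p.1 *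
      (fun φ : ℝ => (starRingEnd ℂ) (Complex.exp (Complex.I * m * (φ : ℂ)))) p.2 ∂sphereMeasure := by
    unfold flCoeff Ylm
    congr 1; ext p
    rw [hψ, map_mul, Complex.conj_ofReal]
    push_cast; ring
  rw [e, sphere_integral (fun θ => ((h (Real.sin θ) *
      (alphaY l m * assocLegendre l m.natAbs (Real.sin θ)) : ℝ) : ℂ))
      (fun φ : ℝ => (starRingEnd ℂ) (Complex.exp (Complex.I * m * (φ : ℂ)))), exp_int]
  split_ifs with hm
  · subst hm
    have hP : ∀ x, assocLegendre l 0 x = (legendreP l).eval x := by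
      intro x; simp [assocLegendre]
    have ha : alphaY l 0 = Real.sqrt ((2 * l + 1) / (4 * Real.pi)) := by
      unfold alphaY
      simp only [Int.natAbs_zero, Nat.sub_zero, add_zero, abs_zero]
      have : ((l.factorial : ℕ) : ℝ) ≠ 0 := by positivity
      rw [mul_div_mul_right _ _ this]; simp
    have e2 : ∫ θ in (-(Real.pi / 2))..(Real.pi / 2), (Real.cos θ : ℂ) * ((h (Real.sin θ) *
      (alphaY l 0 * assocLegendre l (Int.natAbs 0) (Real.sin θ)) : ℝ) : ℂ) =
      ((∫ θ in (-(Real.pi / 2))..(Real.pi / 2), Real.cos θ * (fun x => h x *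
      (alphaY l 0 * (legendreP l).eval x)) (Real.sin θ) : ℝ) : ℂ) := by
      rw [← intervalIntegral.integral_ofReal]
      congr 1; ext θ; simp [hP]
    rw [e2, subst_sin (fun x => h x * (alphaY l 0 * (legendreP l).eval x)) (hh.mul (continuous_const.mul (legendreP l).continuous)), int_eL_mul]
    have e3 : ∫ x in (-1 : ℝ)..1, h x * (alphaY l 0 * (legendreP l).eval x) =
        alphaY l 0 * ∫ x in (-1 : ℝ)..1, h x * (legendreP l).eval x := by
      rw [← intervalIntegral.integral_const_mul]
      congr 1; ext x; ring
    rw [e3, ha]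
    have e4 : Real.sqrt ((2 * l + 1) / (4 * Real.pi)) * (2 * Real.pi) =
        Real.sqrt (2 * Real.pi) * Real.sqrt ((2 * l + 1) / 2) := by
      have hpi := Real.pi_pos
      rw [← Real.sqrt_mul (by positivity)]
      have : (2 * Real.pi) = Real.sqrt ((2 * Real.pi) ^ 2) := (Real.sqrt_sq (by positivity)).symm
      rw [this, ← Real.sqrt_mul (by positivity), Real.sqrt_sq (by positivity)]
      congr 1; field_simp; ring
    rw [← mul_assoc (Real.sqrt (2 * Real.pi)), ← e4]
    push_cast; ring
  · simp

lemma hs_terms (s : ℝ) (h : ℝ → ℝ) (hh : Continuous h) (ψ : ℝ → ℝ → ℂ)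
    (hψ : ∀ θ φ, ψ θ φ = (h (Real.sin θ) : ℂ)) :
    (Summable (fun p : ℕ × ℤ => ((p.1 : ℝ) + 1) ^ (2 * s) * ‖flCoeff ψ p.1 p.2‖ ^ 2) ↔
      Summable fun l : ℕ => ((l : ℝ) + 1) ^ (2 * s) * aL h l ^ 2) ∧
    ∑' p : ℕ × ℤ, ((p.1 : ℝ) + 1) ^ (2 * s) * ‖flCoeff ψ p.1 p.2‖ ^ 2 =
      2 * Real.pi * ∑' l : ℕ, ((l : ℝ) + 1) ^ (2 * s) * aL h l ^ 2 := by
  have hpi := Real.pi_pos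
  have hinj : Function.Injective fun l : ℕ => ((l, 0) : ℕ × ℤ) := fun a b hab => by
    simpa using hab
  have h0 : ∀ p ∉ Set.range (fun l : ℕ => ((l, 0) : ℕ × ℤ)),
      ((p.1 : ℝ) + 1) ^ (2 * s) * ‖flCoeff ψ p.1 p.2‖ ^ 2 = 0 := by
    rintro ⟨l, m⟩ hp
    have : m ≠ 0 := fun hm => hp ⟨l, by simp [hm]⟩
    simp [flCoeff_axial h hh ψ hψ, this]
  have e : ∀ l : ℕ, ((l : ℝ) + 1) ^ (2 * s) * ‖flCoeff ψ l 0‖ ^ 2 =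
      2 * Real.pi * (((l : ℝ) + 1) ^ (2 * s) * aL h l ^ 2) := by
    intro l
    rw [flCoeff_axial h hh ψ hψ, if_pos rfl, Complex.norm_real, Real.norm_eq_abs, sq_abs, mul_pow,
      Real.sq_sqrt (by positivity)]
    ring
  constructor
  · have hp : (2 * Real.pi) ≠ 0 := by positivity
    refine (hinj.summable_iff h0).symm.trans (Iff.trans ?_ (summable_mul_left_iff hp))
    exact summable_congr e
  · rw [← tsum_mul_left, ← hinj.tsum_eq (f := fun p : ℕ × ℤ =>
      ((p.1 : ℝ) + 1) ^ (2 * s) * ‖flCoeff ψ p.1 p.2‖ ^ 2)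
      (fun p hp => by by_contra hc; exact hp (h0 p hc))]
    exact tsum_congr e

instance sphere_finite : IsFiniteMeasure sphereMeasure := by
  unfold sphereMeasure
  refine isFiniteMeasure_withDensity_ofReal ?_
  refine Integrable.hasFiniteIntegral ?_
  have hc : ContinuousOn (fun p : ℝ × ℝ => Real.cos p.1)
      (Set.Icc (-(Real.pi / 2)) (Real.pi / 2) ×ˢ Set.Icc (-Real.pi) Real.pi) := by fun_prop
  exact (hc.integrableOn_compact (isCompact_Icc.prod isCompact_Icc)).mono_set
    (Set.prod_mono le_rfl Set.Ico_subset_Icc_self)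

lemma memLp_axial (h : ℝ → ℝ) (hh : Continuous h) (ψ : ℝ → ℝ → ℂ)
    (hψ : ∀ θ φ, ψ θ φ = (h (Real.sin θ) : ℂ)) :
    MemLp (fun p : ℝ × ℝ => ψ p.1 p.2) 2 sphereMeasure := by
  simp_rw [hψ]
  obtain ⟨K, hK⟩ := isCompact_Icc.exists_bound_of_continuousOn (s := Set.Icc (-1 : ℝ) 1) hh.continuousOn
  refine MemLp.of_bound (Continuous.aestronglyMeasurable (by fun_prop)) K (ae_of_all _ fun p => ?_)
  rw [Complex.norm_real]
  exact hK _ ⟨Real.neg_one_le_sin _, Real.sin_le_one _⟩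

/-- everything we need about one function -/
lemma one_function (s : ℝ) (hs : 1 < s) (u : EuclideanSpace ℝ (Fin 3) → ℝ)
    (hu2 : ContDiffOn ℝ 2 u extDomain) (hul : ∀ x ∈ extDomain, lap u x = 0)
    (huc : ContinuousOn u closedExt) (hu0 : Tendsto u (Bornology.cobounded _) (nhds 0))
    (hm : MemHs (s + 1) (traceR u)) (hax : Axial (traceR u)) :
    ∃ c : ℕ → ℝ, SumL c ∧ Summable (fun k : ℕ => ((k : ℝ) + 1) ^ (2 * s) * c k ^ 2) ∧
      (∀ θ φ, radialDeriv u θ φ = -SL c (Real.sin θ)) ∧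
      HsNorm (s + 1) (traceR u) ^ 2 =
        2 * Real.pi * ∑' k : ℕ, ((k : ℝ) + 1) ^ (2 * s) * c k ^ 2 := by
  obtain ⟨g, hg⟩ : ∃ g : ℝ → ℝ, g = fun t => u (sphCoord (Real.arcsin t) 0) := ⟨_, rfl⟩
  have hgc : Continuous g := by
    have : Continuous fun t : ℝ => sphCoord (Real.arcsin t) 0 :=
      Continuous.comp (g := fun p : ℝ × ℝ => sphCoord p.1 p.2) (f := fun t : ℝ => (Real.arcsin t, (0 : ℝ)))
        sphCoord_continuous (Real.continuous_arcsin.prodMk continuous_const)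
    rw [hg]
    exact huc.comp_continuous this fun t => (sphCoord_norm _ _).ge
  have hax' : ∀ θ φ₁ φ₂, u (sphCoord θ φ₁) = u (sphCoord θ φ₂) := fun θ a b =>
    Complex.ofReal_injective (hax θ a b)
  have hug : ∀ θ φ, u (sphCoord θ φ) = g (Real.sin θ) := by
    intro θ φ
    obtain ⟨φ', h'⟩ := sphCoord_arcsin θ φ
    rw [h', hax' _ φ' 0, hg]
  have hψ : ∀ θ φ, traceR u θ φ = (g (Real.sin θ) : ℂ) := fun θ φ => by
    unfold traceR; rw [hug]
  obtain ⟨hsum, htsum⟩ := hs_terms (s + 1) g hgc _ hψ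
  obtain ⟨c, hcdef⟩ : ∃ c : ℕ → ℝ, c = fun l : ℕ => ((l : ℝ) + 1) * aL g l := ⟨_, rfl⟩
  have ec : ∀ l : ℕ, ((l : ℝ) + 1) ^ (2 * (s + 1)) * aL g l ^ 2 =
      ((l : ℝ) + 1) ^ (2 * s) * c l ^ 2 := by
    intro l
    have : (0 : ℝ) < (l : ℝ) + 1 := by positivity
    rw [show 2 * (s + 1) = 2 * s + (2 : ℕ) by push_cast; ring, Real.rpow_add this, Real.rpow_natCast]
    simp only [hcdef]; ring
  have hS := hsum.1 hm.2
  simp_rw [ec] at hS htsum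
  obtain ⟨K, -, hK⟩ := ML_bound s hs
  have hSc : SumL c := (hK c hS).1
  have hSa : SumL (aL g) := hSc.mono fun l => by
    rw [hcdef]
    show |aL g l| ≤ |((l : ℝ) + 1) * aL g l|
    rw [abs_mul, abs_of_pos (by positivity : (0 : ℝ) < (l : ℝ) + 1)]
    nlinarith [abs_nonneg (aL g l), Nat.cast_nonneg (α := ℝ) l]
  have hb : ∀ x, ‖x‖ = 1 → u x = SL (aL g) (x 2) := by
    intro x hx
    obtain ⟨θ, φ, rfl⟩ := sphere_param x hx
    rw [hug, sphCoord_two]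
    exact complete_SL g hgc hSa _ ⟨Real.neg_one_le_sin _, Real.sin_le_one _⟩
  refine ⟨c, hSc, hS, fun θ φ => ?_, ?_⟩
  · rw [hcdef] at hSc ⊢
    exact radial_formula u (aL g) hSc (expansion u _ hSa hu2 hul huc hu0 hb) θ φ
  · unfold HsNorm
    rw [Real.sq_sqrt (tsum_nonneg fun p => by positivity), htsum]

lemma final_bound (s K : ℝ) (hK : 0 < K) (u v : EuclideanSpace ℝ (Fin 3) → ℝ) (c d : ℕ → ℝ)
    (h : ℝ → ℝ) (hcont : Continuous h) (ψ : ℝ → ℝ → ℂ)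
    (hψ : ∀ θ φ, ψ θ φ = (h (Real.sin θ) : ℂ))
    (hcn : HsNorm (s + 1) (traceR u) ^ 2 =
        2 * Real.pi * ∑' k : ℕ, ((k : ℝ) + 1) ^ (2 * s) * c k ^ 2)
    (hdn : HsNorm (s + 1) (traceR v) ^ 2 =
        2 * Real.pi * ∑' k : ℕ, ((k : ℝ) + 1) ^ (2 * s) * d k ^ 2)
    (p1 : Summable fun l : ℕ => ((l : ℝ) + 1) ^ (2 * s) * aL h l ^ 2)
    (p2 : ∑' l : ℕ, ((l : ℝ) + 1) ^ (2 * s) * aL h l ^ 2 ≤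
      K * (∑' k : ℕ, ((k : ℝ) + 1) ^ (2 * s) * c k ^ 2) *
        ∑' k : ℕ, ((k : ℝ) + 1) ^ (2 * s) * d k ^ 2) :
    MemHs s ψ ∧ Axial ψ ∧ HsNorm s ψ ≤
      Real.sqrt (K / (2 * Real.pi)) * HsNorm (s + 1) (traceR u) * HsNorm (s + 1) (traceR v) := by
  have hpi := Real.pi_pos
  obtain ⟨q1, q2⟩ := hs_terms s h hcont ψ hψ
  refine ⟨⟨memLp_axial h hcont ψ hψ, q1.2 p1⟩, fun θ φ₁ φ₂ => by rw [hψ, hψ], ?_⟩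
  have n1 : 0 ≤ HsNorm (s + 1) (traceR u) := Real.sqrt_nonneg _
  have n2 : 0 ≤ HsNorm (s + 1) (traceR v) := Real.sqrt_nonneg _
  generalize HsNorm (s + 1) (traceR u) = U at *
  generalize HsNorm (s + 1) (traceR v) = V at *
  generalize (∑' k : ℕ, ((k : ℝ) + 1) ^ (2 * s) * c k ^ 2) = A at *
  generalize (∑' k : ℕ, ((k : ℝ) + 1) ^ (2 * s) * d k ^ 2) = B at *
  unfold HsNorm
  rw [q2]
  refine Real.sqrt_le_iff.2 ⟨by positivity, ?_⟩
  rw [mul_pow, mul_pow, Real.sq_sqrt (by positivity), hcn, hdn]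
  refine (mul_le_mul_of_nonneg_left p2 (by positivity : 0 ≤ 2 * Real.pi)).trans (le_of_eq ?_)
  field_simp

/-- Lemma 2.6: if `u, v` are harmonic in the exterior of the unit
sphere, continuous up to the sphere, vanish at infinity, and have traces in
`H^{s+1}_ax(𝕊)` with `s > 1`, then `u_r v_r ∈ H^s_ax(𝕊)` with
`‖u_r v_r‖_{H^s} ≤ C ‖u‖_{H^{s+1}} ‖v‖_{H^{s+1}}`. -/
theorem radial_derivative_product_estimate (s : ℝ) (hs : 1 < s) :
    ∃ C > 0, ∀ u v : EuclideanSpace ℝ (Fin 3) → ℝ,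
      ContDiffOn ℝ 2 u extDomain → (∀ x ∈ extDomain, lap u x = 0) →
      ContinuousOn u closedExt → Filter.Tendsto u (Bornology.cobounded _) (nhds 0) →
      MemHs (s + 1) (traceR u) → Axial (traceR u) →
      ContDiffOn ℝ 2 v extDomain → (∀ x ∈ extDomain, lap v x = 0) →
      ContinuousOn v closedExt → Filter.Tendsto v (Bornology.cobounded _) (nhds 0) →
      MemHs (s + 1) (traceR v) → Axial (traceR v) →
      MemHs s (fun θ φ => ((radialDeriv u θ φ * radialDeriv v θ φ : ℝ) : ℂ)) ∧
      Axial (fun θ φ => ((radialDeriv u θ φ * radialDeriv v θ φ : ℝ) : ℂ)) ∧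
      HsNorm s (fun θ φ => ((radialDeriv u θ φ * radialDeriv v θ φ : ℝ) : ℂ)) ≤
        C * HsNorm (s + 1) (traceR u) * HsNorm (s + 1) (traceR v) := by
  obtain ⟨K, hK, hprod⟩ := prod_final s hs
  have hpi := Real.pi_pos
  refine ⟨Real.sqrt (K / (2 * Real.pi)), Real.sqrt_pos.2 (by positivity), ?_⟩
  intro u v hu2 hul huc hu0 hum hua hv2 hvl hvc hv0 hvm hva
  obtain ⟨c, hc1, hc2, hcr, hcn⟩ := one_function s hs u hu2 hul huc hu0 hum hua
  obtain ⟨d, hd1, hd2, hdr, hdn⟩ := one_function s hs v hv2 hvl hvc hv0 hvm hva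
  obtain ⟨p1, p2⟩ := hprod c d hc2 hd2
  obtain ⟨h, hh⟩ : ∃ h : ℝ → ℝ, h = fun x => SL c x * SL d x := ⟨_, rfl⟩
  rw [← hh] at p1 p2
  have hcont : Continuous h := by rw [hh]; exact (SL_cont hc1).mul (SL_cont hd1)
  obtain ⟨ψ, hψd⟩ : ∃ ψ : ℝ → ℝ → ℂ,
      ψ = fun θ φ => ((radialDeriv u θ φ * radialDeriv v θ φ : ℝ) : ℂ) := ⟨_, rfl⟩
  rw [← hψd]
  have hψ : ∀ θ φ, ψ θ φ = (h (Real.sin θ) : ℂ) := by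
    intro θ φ
    rw [hψd, hh]
    simp only [hcr, hdr, neg_mul_neg]
  exact final_bound s K hK u v c d h hcont ψ hψ hcn hdn p1 p2

end
end

section
/- Let s > 1 and let u, v be harmonic functions in the exterior Ω of the unit sphere 𝕊 ⊂ ℝ³, continuous up to 𝕊, tending to 0 as |x| → ∞, and with boundary traces u|_𝕊, v|_𝕊 ∈ H^{s+1}_ax(𝕊). Then the product of latitudinal derivatives u_θ v_θ restricted to 𝕊 belongs to H^s_ax(𝕊) and ‖u_θ v_θ‖_{H^s(𝕊)} ≤ C ‖u‖_{H^{s+1}(𝕊)} ‖v‖_{H^{s+1}(𝕊)} for some constant C > 0 independent of u and v. -/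
noncomputable section

open MeasureTheory Real Filter

namespace LegAux

open Polynomial

lemma sq_deriv (n : ℕ) : (X ^ 2 - 1 : ℝ[X]) * derivative ((X ^ 2 - 1) ^ n)
    = C (2 * (n:ℝ)) * X * (X ^ 2 - 1) ^ n := by
  cases n with
  | zero => simp
  | succ n =>
    rw [derivative_pow_succ]
    simp only [derivative_sub, derivative_X_pow, derivative_one]
    simp
    ring

lemma rod_ode (n k : ℕ) :
    (X ^ 2 - 1 : ℝ[X]) * derivative^[k+2] ((X ^ 2 - 1) ^ n)
      + C (2 * ((k:ℝ) + 1 - n)) * X * derivative^[k+1] ((X ^ 2 - 1) ^ n)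
      + C (((k:ℝ)+1) * (k - 2 * n)) * derivative^[k] ((X ^ 2 - 1) ^ n) = 0 := by
  induction k with
  | zero =>
    have h := congrArg derivative (sq_deriv n)
    simp only [derivative_mul, derivative_sub, derivative_X_pow, derivative_one, derivative_C,
      derivative_X] at h
    simp only [Function.iterate_succ, Function.iterate_zero, Function.comp, id] at *
    try simp only [map_mul, map_sub, map_add, map_one, map_natCast, map_ofNat] at *
    try push_cast at *
    try simp only [map_zero, map_ofNat] at *
    linear_combination h
  | succ k ih =>
    have h := congrArg derivative ih
    simp only [derivative_add, derivative_mul, derivative_sub, derivative_X_pow, derivative_one,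
      derivative_C, derivative_X, ← Function.iterate_succ_apply', derivative_zero] at h
    try simp only [Nat.succ_eq_add_one] at *
    try simp only [map_mul, map_sub, map_add, map_one, map_natCast, map_ofNat] at *
    try push_cast at *
    try simp only [map_mul, map_sub, map_add, map_one, map_natCast, map_ofNat] at *
    linear_combination h

lemma leg_ode (n : ℕ) :
    derivative ((1 - X ^ 2 : ℝ[X]) * derivative (legendreP n))
      = - (C ((n:ℝ) * (n+1)) * legendreP n) := by
  have h := rod_ode n n
  unfold legendreP
  simp only [derivative_add, derivative_mul, derivative_sub, derivative_X_pow, derivative_one,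
      derivative_C, derivative_X, ← Function.iterate_succ_apply', derivative_zero]
  try simp only [Nat.succ_eq_add_one] at *
  try simp only [map_mul, map_sub, map_add, map_one, map_natCast, map_ofNat] at *
  try push_cast at *
  linear_combination -(C ((2 ^ n * n.factorial : ℝ)⁻¹)) * h

lemma natDegree_sq (n : ℕ) : ((X ^ 2 - 1 : ℝ[X]) ^ n).natDegree = 2 * n := by
  rw [natDegree_pow]
  have : (X ^ 2 - 1 : ℝ[X]).natDegree = 2 := by compute_degree!
  rw [this]; ring

lemma monic_sq (n : ℕ) : ((X ^ 2 - 1 : ℝ[X]) ^ n).Monic := by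
  apply Monic.pow
  monicity!

lemma leg_natDegree_le (n : ℕ) : (legendreP n).natDegree ≤ n := by
  unfold legendreP
  refine (natDegree_C_mul_le _ _).trans ?_
  refine (natDegree_iterate_derivative _ _).trans ?_
  rw [natDegree_sq]; omega

lemma leg_coeff_ne (n : ℕ) : (legendreP n).coeff n ≠ 0 := by
  unfold legendreP
  rw [coeff_C_mul, coeff_iterate_derivative]
  have h1 : ((X ^ 2 - 1 : ℝ[X]) ^ n).coeff (n + n) = 1 := by
    have := (monic_sq n).coeff_natDegree
    rw [natDegree_sq] at this
    rwa [← two_mul]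
  rw [h1]
  have : (n+n).descFactorial n ≠ 0 := by
    rw [Ne, Nat.descFactorial_eq_zero_iff_lt]; omega
  have h2 : (n.factorial:ℝ) ≠ 0 := by exact_mod_cast n.factorial_ne_zero
  have h3 : (((n+n).descFactorial n : ℕ) : ℝ) ≠ 0 := by exact_mod_cast this
  simp only [nsmul_eq_mul, mul_one]
  positivity

/-- span -/
lemma leg_ind (Q : ℝ[X] → Prop) (n : ℕ) (h0 : Q 0) (hadd : ∀ p q, Q p → Q q → Q (p+q))
    (hP : ∀ k < n, ∀ c : ℝ, Q (C c * legendreP k)) (r : ℝ[X]) (hr : r.degree < n) : Q r := by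
  induction n generalizing r with
  | zero =>
    have : r = 0 := by
      rw [← degree_eq_bot]; simpa using hr
    rwa [this]
  | succ n ih =>
    set c := r.coeff n / (legendreP n).coeff n with hc
    have h1 : (r - C c * legendreP n).degree < n := by
      rw [degree_lt_iff_coeff_zero]
      intro m hm
      rw [coeff_sub, coeff_C_mul]
      rcases hm.eq_or_lt with rfl | hm
      · rw [hc, div_mul_cancel₀ _ (leg_coeff_ne _), sub_self]
      · rw [(degree_lt_iff_coeff_zero _ _).1 hr m (by omega),
          coeff_eq_zero_of_natDegree_lt ((leg_natDegree_le n).trans_lt hm)]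
        simp
    have := hadd _ _ (ih (fun k hk => hP k (by omega)) _ h1) (hP n (by omega) c)
    simpa using this

lemma leg_one (n : ℕ) : (legendreP n).eval 1 = 1 := by
  have h : (derivative^[n] ((X ^ 2 - 1 : ℝ[X]) ^ n)).eval 1 = n.factorial * 2 ^ n := by
    rw [← factorial_smul_hasseDeriv]
    rw [LinearMap.smul_apply, eval_smul, nsmul_eq_mul]
    rw [← taylor_coeff]
    have : taylor 1 ((X ^ 2 - 1 : ℝ[X]) ^ n) = (X + C 2) ^ n * X ^ n := by
      rw [taylor_pow, ← mul_pow]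
      congr 1
      simp only [map_sub, taylor_pow, taylor_X, taylor_one]
      simp only [map_ofNat, map_one]
      ring
    rw [this, coeff_mul_X_pow' , if_pos le_rfl, Nat.sub_self, coeff_zero_eq_eval_zero]
    simp
  unfold legendreP
  rw [eval_mul, eval_C, h]
  have h2 : (n.factorial:ℝ) ≠ 0 := by exact_mod_cast n.factorial_ne_zero
  field_simp

lemma leg_neg_one (n : ℕ) : (legendreP n).eval (-1) = (-1)^n := by
  have h : (derivative^[n] ((X ^ 2 - 1 : ℝ[X]) ^ n)).eval (-1) = n.factorial * (-2) ^ n := by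
    rw [← factorial_smul_hasseDeriv]
    rw [LinearMap.smul_apply, eval_smul, nsmul_eq_mul]
    rw [← taylor_coeff]
    have : taylor (-1) ((X ^ 2 - 1 : ℝ[X]) ^ n) = (X + C (-2)) ^ n * X ^ n := by
      rw [taylor_pow, ← mul_pow]
      congr 1
      simp only [map_sub, taylor_pow, taylor_X, taylor_one]
      simp only [map_ofNat, map_one, map_neg]
      ring
    rw [this, coeff_mul_X_pow' , if_pos le_rfl, Nat.sub_self, coeff_zero_eq_eval_zero]
    simp
  unfold legendreP
  rw [eval_mul, eval_C, h, neg_pow 2 n]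
  have h2 : (n.factorial:ℝ) ≠ 0 := by exact_mod_cast n.factorial_ne_zero
  field_simp

/-- integral of a polynomial on `[-1,1]` -/
def I (p : ℝ[X]) : ℝ := ∫ x in (-1:ℝ)..1, p.eval x

lemma I_add (p q : ℝ[X]) : I (p + q) = I p + I q := by
  unfold I
  simp only [eval_add]
  exact intervalIntegral.integral_add (p.continuous.intervalIntegrable _ _)
    (q.continuous.intervalIntegrable _ _)

lemma I_C_mul (c : ℝ) (p : ℝ[X]) : I (C c * p) = c * I p := by
  unfold I
  simp only [eval_mul, eval_C]
  exact intervalIntegral.integral_const_mul _ _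

lemma I_zero : I 0 = 0 := by simp [I]

lemma I_neg (p : ℝ[X]) : I (-p) = - I p := by
  unfold I
  simp

lemma I_sum {ι : Type*} (s : Finset ι) (f : ι → ℝ[X]) : I (∑ i ∈ s, f i) = ∑ i ∈ s, I (f i) := by
  classical
  induction s using Finset.induction_on with
  | empty => simp [I_zero]
  | insert a s ha ih => rw [Finset.sum_insert ha, Finset.sum_insert ha, I_add, ih]

lemma I_derivative (p : ℝ[X]) : I (derivative p) = p.eval 1 - p.eval (-1) := by
  unfold I
  exact intervalIntegral.integral_eq_sub_of_hasDerivAt (fun x _ => p.hasDerivAt x)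
    ((derivative p).continuous.intervalIntegrable _ _)

lemma I_mono (p q : ℝ[X]) (h : ∀ x ∈ Set.Icc (-1:ℝ) 1, p.eval x ≤ q.eval x) : I p ≤ I q := by
  unfold I
  exact intervalIntegral.integral_mono_on (by norm_num) (p.continuous.intervalIntegrable _ _)
    (q.continuous.intervalIntegrable _ _) h

lemma I_ibp (j : ℕ) (r : ℝ[X]) : I ((1 - X ^ 2) * derivative (legendreP j) * derivative r)
    = j * (j+1) * I (legendreP j * r) := by
  have h := I_derivative ((1 - X ^ 2) * derivative (legendreP j) * r)
  rw [derivative_mul, leg_ode, I_add] at h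
  have h2 : -(C ((j:ℝ) * (j+1)) * legendreP j) * r
    = C (-((j:ℝ) * (j+1))) * (legendreP j * r) := by
    rw [C_neg]; ring
  rw [h2, I_C_mul] at h
  simp at h
  linarith

lemma I_orth {j k : ℕ} (hjk : j ≠ k) : I (legendreP j * legendreP k) = 0 := by
  have h1 := I_ibp j (legendreP k)
  have h2 := I_ibp k (legendreP j)
  rw [mul_right_comm, h2, mul_comm (legendreP k)] at h1
  have h3 : ((k:ℝ) * (k+1) - j * (j+1)) * I (legendreP j * legendreP k) = 0 := by linarith
  rcases mul_eq_zero.1 h3 with h | h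
  · exfalso
    have h4 : ((k:ℝ) - j) * (k + j + 1) = 0 := by linarith
    rcases mul_eq_zero.1 h4 with h | h
    · exact hjk (by exact_mod_cast (sub_eq_zero.1 h).symm)
    · have : (0:ℝ) ≤ k := by positivity
      have : (0:ℝ) ≤ j := by positivity
      linarith
  · exact h

lemma I_low (n : ℕ) (r : ℝ[X]) (hr : r.degree < n) : I (legendreP n * r) = 0 := by
  refine leg_ind (fun r => I (legendreP n * r) = 0) n (by simp [I_zero]) ?_ ?_ r hr
  · intro p q hp hq
    rw [mul_add, I_add, hp, hq, add_zero]
  · intro k hk c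
    rw [mul_left_comm, I_C_mul, I_orth (by omega), mul_zero]

lemma I_sq (n : ℕ) : I (legendreP n * legendreP n) = 2 / (2 * n + 1) := by
  have h := I_derivative (X * (legendreP n * legendreP n))
  have hr : (X * derivative (legendreP n) - C (n:ℝ) * legendreP n).degree < (n : WithBot ℕ) := by
    rw [degree_lt_iff_coeff_zero]
    intro m hm
    rw [coeff_sub, coeff_C_mul]
    have : (X * derivative (legendreP n)).coeff m = m * (legendreP n).coeff m := by
      cases m with
      | zero => simp
      | succ m => rw [coeff_X_mul, coeff_derivative]; push_cast; ring
    rw [this]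
    rcases hm.eq_or_lt with rfl | hm
    · ring
    · rw [coeff_eq_zero_of_natDegree_lt ((leg_natDegree_le n).trans_lt hm)]; ring
  have h0 := I_low n _ hr
  have e : derivative (X * (legendreP n * legendreP n)) =
     C (2:ℝ) * (legendreP n * (X * derivative (legendreP n) - C (n:ℝ) * legendreP n))
      + C (2 * (n:ℝ) + 1) * (legendreP n * legendreP n) := by
    simp only [derivative_mul, derivative_X]
    simp only [map_mul, map_add, map_one, map_ofNat]
    ring
  rw [e, I_add, I_C_mul, I_C_mul, h0] at h
  simp only [eval_mul, eval_X, leg_one, leg_neg_one, ← pow_add, ← two_mul] at h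
  rw [pow_mul] at h
  norm_num at h
  have : (2 * (n:ℝ) + 1) ≠ 0 := by positivity
  field_simp
  linarith

lemma leg_sonin (n : ℕ) (hn : n ≠ 0) (x : ℝ) (hx : x ∈ Set.Icc (-1:ℝ) 1) :
    n * (n+1) * ((legendreP n).eval x)^2 + (1 - x^2) * ((derivative (legendreP n)).eval x)^2
      ≤ n * (n+1) := by
  set F : ℝ[X] := C ((n:ℝ) * (n+1)) * legendreP n ^ 2
    + ((1 - X ^ 2 : ℝ[X])) * derivative (legendreP n) ^ 2 with hF
  have hd : derivative F = C 2 * X * derivative (legendreP n) ^ 2 := by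
    have h := leg_ode n
    simp only [derivative_mul, derivative_sub, derivative_X_pow, derivative_one,
      derivative_C, derivative_X] at h
    simp only [hF, derivative_add, derivative_mul, derivative_sub, derivative_X_pow,
      derivative_one, derivative_C, derivative_X, derivative_pow]
    try simp only [map_mul, map_add, map_one, map_ofNat, map_natCast] at *
    try push_cast at *
    try simp only [map_mul, map_add, map_one, map_ofNat, map_natCast] at *
    linear_combination (2 * derivative (legendreP n)) * h
  have hev : ∀ y, F.eval y = n * (n+1) * ((legendreP n).eval y)^2
      + (1 - y^2) * ((derivative (legendreP n)).eval y)^2 := by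
    intro y; simp [hF]
  have h1 : F.eval 1 = n * (n+1) := by rw [hev, leg_one]; ring
  have h2 : F.eval (-1) = n * (n+1) := by
    rw [hev, leg_neg_one, ← pow_mul, mul_comm n 2, pow_mul]; norm_num
  rw [← hev]
  have hdv : ∀ y, deriv (fun y => F.eval y) y = 2 * y * ((derivative (legendreP n)).eval y)^2 := by
    intro y; rw [Polynomial.deriv, hd]; simp
  rcases le_total 0 x with h | h
  · rw [← h1]
    have : MonotoneOn (fun y => F.eval y) (Set.Icc 0 1) := by
      apply monotoneOn_of_deriv_nonneg (convex_Icc 0 1) F.continuousOn F.differentiableOn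
      intro y hy
      rw [interior_Icc] at hy
      rw [hdv]
      have := hy.1
      positivity
    exact this ⟨h, hx.2⟩ ⟨by norm_num, le_rfl⟩ hx.2
  · rw [← h2]
    have : AntitoneOn (fun y => F.eval y) (Set.Icc (-1) 0) := by
      apply antitoneOn_of_deriv_nonpos (convex_Icc (-1) 0) F.continuousOn F.differentiableOn
      intro y hy
      rw [interior_Icc] at hy
      rw [hdv]
      have := hy.2
      nlinarith [sq_nonneg ((derivative (legendreP n)).eval y)]
    exact this ⟨le_rfl, by norm_num⟩ ⟨hx.1, h⟩ hx.1

lemma leg_abs_le (n : ℕ) (x : ℝ) (hx : x ∈ Set.Icc (-1:ℝ) 1) : ((legendreP n).eval x)^2 ≤ 1 := by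
  rcases eq_or_ne n 0 with rfl | hn
  · simp [legendreP]
  · have h := leg_sonin n hn x hx
    have h1 : 0 ≤ 1 - x^2 := by nlinarith [hx.1, hx.2]
    have h2 : 0 ≤ (1 - x^2) * ((derivative (legendreP n)).eval x)^2 := by positivity
    have h3 : (0:ℝ) < n * (n+1) := by positivity
    nlinarith

lemma leg_deriv_le (n : ℕ) (x : ℝ) (hx : x ∈ Set.Icc (-1:ℝ) 1) :
    (1 - x^2) * ((derivative (legendreP n)).eval x)^2 ≤ n * (n+1) := by
  rcases eq_or_ne n 0 with rfl | hn
  · simp [legendreP]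
  · have h := leg_sonin n hn x hx
    have : 0 ≤ n * (n+1) * ((legendreP n).eval x)^2 := by positivity
    linarith

/-- normalized Legendre polynomials -/
def q (l : ℕ) : ℝ[X] := C (Real.sqrt ((2 * l + 1) / 2)) * legendreP l

lemma q_orth (j k : ℕ) : I (q j * q k) = if j = k then 1 else 0 := by
  have e : q j * q k = C (Real.sqrt ((2 * j + 1) / 2) * Real.sqrt ((2 * k + 1) / 2))
      * (legendreP j * legendreP k) := by
    unfold q; rw [C_mul]; ring
  rw [e, I_C_mul]
  split_ifs with h
  · subst h
    rw [I_sq, Real.mul_self_sqrt (by positivity)]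
    field_simp
  · rw [I_orth h, mul_zero]

lemma q_low (n : ℕ) (r : ℝ[X]) (hr : r.degree < n) : I (q n * r) = 0 := by
  unfold q; rw [mul_assoc, I_C_mul, I_low n r hr, mul_zero]

lemma dq_orth (j k : ℕ) : I ((1 - X ^ 2) * derivative (q j) * derivative (q k))
    = if j = k then (j:ℝ) * (j+1) else 0 := by
  have e : (1 - X ^ 2) * derivative (q j) * derivative (q k)
      = C (Real.sqrt ((2 * j + 1) / 2)) * ((1 - X ^ 2) * derivative (legendreP j) * derivative (q k)) := by
    unfold q; rw [derivative_C_mul, derivative_C_mul]; ring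
  rw [e, I_C_mul, I_ibp, mul_left_comm, ← I_C_mul, ← mul_assoc]
  change _ * I (q j * q k) = _
  rw [q_orth]; split_ifs <;> simp

lemma q_natDegree_le (l : ℕ) : (q l).natDegree ≤ l :=
  (natDegree_C_mul_le _ _).trans (leg_natDegree_le l)

lemma trip_zero (j k l : ℕ) (h : j + k < l) :
    I ((1 - X ^ 2) * derivative (q j) * derivative (q k) * q l) = 0 := by
  rw [mul_comm _ (q l)]
  apply q_low
  by_cases hj : j = 0
  · have : derivative (q j) = 0 := by
      apply derivative_of_natDegree_zero
      have := q_natDegree_le j; omega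
    rw [this]; simp
  by_cases hk : k = 0
  · have : derivative (q k) = 0 := by
      apply derivative_of_natDegree_zero
      have := q_natDegree_le k; omega
    rw [this]; simp
  refine lt_of_le_of_lt degree_le_natDegree ?_
  norm_cast
  have h1 : (1 - X ^ 2 : ℝ[X]).natDegree ≤ 2 := by compute_degree
  have h2 := (natDegree_derivative_le (q j)).trans (Nat.sub_le_sub_right (q_natDegree_le j) 1)
  have h3 := (natDegree_derivative_le (q k)).trans (Nat.sub_le_sub_right (q_natDegree_le k) 1)
  have h4 := natDegree_mul_le (p := (1 - X ^ 2 : ℝ[X])) (q := derivative (q j))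
  have h5 := natDegree_mul_le (p := (1 - X ^ 2 : ℝ[X]) * derivative (q j)) (q := derivative (q k))
  omega

lemma q_sup (l : ℕ) (x : ℝ) (hx : x ∈ Set.Icc (-1:ℝ) 1) :
    ((q l).eval x)^2 ≤ (l+1) := by
  unfold q
  rw [eval_mul, eval_C, mul_pow, Real.sq_sqrt (by positivity)]
  have := leg_abs_le l x hx
  have h2 : (0:ℝ) ≤ (2 * l + 1) / 2 := by positivity
  nlinarith

lemma dq_sup (l : ℕ) (x : ℝ) (hx : x ∈ Set.Icc (-1:ℝ) 1) :
    (1 - x^2) * ((derivative (q l)).eval x)^2 ≤ (l+1)^3 := by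
  unfold q
  rw [derivative_C_mul, eval_mul, eval_C, mul_pow, Real.sq_sqrt (by positivity)]
  have := leg_deriv_le l x hx
  have h2 : (0:ℝ) ≤ (2 * l + 1) / 2 := by positivity
  have h3 : (0:ℝ) ≤ l := by positivity
  calc _ = (2 * (l:ℝ) + 1) / 2 * ((1 - x^2) * (eval x (derivative (legendreP l)))^2) := by ring
    _ ≤ (2 * (l:ℝ) + 1) / 2 * (l * (l+1)) := by gcongr
    _ ≤ _ := by nlinarith [mul_nonneg h3 h3, mul_nonneg h3 (mul_nonneg h3 h3)]

end LegAux
namespace LegAux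

open Polynomial

lemma I_sub (p r : ℝ[X]) : I (p - r) = I p - I r := by
  rw [sub_eq_add_neg, I_add, I_neg, sub_eq_add_neg]

lemma I_nonneg (p : ℝ[X]) (h : ∀ x ∈ Set.Icc (-1:ℝ) 1, 0 ≤ p.eval x) : 0 ≤ I p := by
  have := I_mono 0 p (by simpa using h)
  rwa [I_zero] at this

lemma bessel (p : ℝ[X]) (F : Finset ℕ) : ∑ l ∈ F, I (p * q l) ^ 2 ≤ I (p * p) := by
  set r := p - ∑ l ∈ F, C (I (p * q l)) * q l with hr
  have h0 : 0 ≤ I (r * r) := I_nonneg _ (fun x _ => by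
    rw [eval_mul]; exact mul_self_nonneg _)
  have h1 : ∀ k ∈ F, I (r * q k) = 0 := by
    intro k hk
    rw [hr, sub_mul, I_sub, Finset.sum_mul, I_sum]
    simp only [mul_assoc, I_C_mul, q_orth]
    simp [hk]
  have h2 : I (r * r) = I (p * r) := by
    have : r * r = p * r - ∑ l ∈ F, C (I (p * q l)) * (r * q l) := by
      conv_lhs => rw [hr, sub_mul, ← hr, Finset.sum_mul]
      congr 1
      apply Finset.sum_congr rfl
      intros; ring
    rw [this, I_sub, I_sum]
    simp only [I_C_mul]
    rw [Finset.sum_eq_zero (fun l hl => by rw [h1 l hl, mul_zero]), sub_zero]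
  have h3 : I (p * r) = I (p * p) - ∑ l ∈ F, I (p * q l) ^ 2 := by
    rw [hr, mul_sub, I_sub, Finset.mul_sum, I_sum]
    simp only [mul_left_comm p, I_C_mul, sq]
  linarith

/-- triple products -/
def trip (j k l : ℕ) : ℝ := I ((1 - X ^ 2) * derivative (q j) * derivative (q k) * q l)

lemma trip_symm (j k l : ℕ) : trip j k l = trip k j l := by
  unfold trip; congr 1; ring

/-- sup bound -/
def mm (k : ℕ) : ℝ := Real.sqrt (((k:ℝ) + 1) ^ 3)

lemma mm_nonneg (k : ℕ) : 0 ≤ mm k := Real.sqrt_nonneg _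

lemma mm_sq (k : ℕ) : mm k ^ 2 = ((k:ℝ) + 1) ^ 3 := Real.sq_sqrt (by positivity)

lemma tail_est (a b : ℕ → ℝ) (R : ℕ → ℕ → Prop) [∀ j k, Decidable (R j k)]
    (hR : ∀ j k, R j k → k ≤ j) (N n L : ℕ) :
    ∑ l ∈ Finset.Ico n L, (∑ k ∈ Finset.range N, ∑ j ∈ Finset.range N,
        if R j k then b k * (a j * trip j k l) else 0) ^ 2
      ≤ (∑ k ∈ Finset.range N, |b k| * mm k) ^ 2 *
        ∑ j ∈ Finset.range N, if n ≤ 2 * j then (j:ℝ) * (j+1) * a j ^ 2 else 0 := by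
  set S : ℕ → Finset ℕ := fun k => (Finset.range N).filter (fun j => R j k ∧ n ≤ 2 * j) with hS
  set G : ℕ → ℝ[X] := fun k => ∑ j ∈ S k, C (a j) * derivative (q j) with hG
  set p : ℝ[X] := ∑ k ∈ Finset.range N, C (b k) * ((1 - X ^ 2) * derivative (q k) * G k) with hp
  set B := ∑ k ∈ Finset.range N, |b k| * mm k with hB
  have hB0 : 0 ≤ B := Finset.sum_nonneg fun k _ => mul_nonneg (abs_nonneg _) (mm_nonneg _)
  have hcoef : ∀ l ∈ Finset.Ico n L, (∑ k ∈ Finset.range N, ∑ j ∈ Finset.range N,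
        if R j k then b k * (a j * trip j k l) else 0) = I (p * q l) := by
    intro l hl
    have hl := (Finset.mem_Ico.1 hl).1
    rw [hp, Finset.sum_mul, I_sum]
    apply Finset.sum_congr rfl
    intro k _
    rw [mul_assoc, I_C_mul]
    have e : (1 - X ^ 2) * derivative (q k) * G k * q l =
       ∑ j ∈ S k, C (a j) * ((1 - X ^ 2) * derivative (q j) * derivative (q k) * q l) := by
      rw [hG, Finset.mul_sum, Finset.sum_mul]
      apply Finset.sum_congr rfl
      intros; ring
    rw [e, I_sum, Finset.mul_sum, hS, Finset.sum_filter]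
    apply Finset.sum_congr rfl
    intro j _
    by_cases h1 : R j k
    · by_cases h2 : n ≤ 2 * j
      · simp only [h1, h2, and_self, if_true, I_C_mul]; rfl
      · have := hR j k h1
        simp only [h1, h2, and_false, if_true, if_false]
        unfold trip
        rw [trip_zero j k l (by omega)]; simp
    · simp [h1]
  rw [Finset.sum_congr rfl (fun l hl => by rw [hcoef l hl])]
  refine (bessel p _).trans ?_
  have hpt : I (p * p) ≤ I (C B * ∑ k ∈ Finset.range N, C (|b k| * mm k) * ((1 - X ^ 2) * G k * G k)) := by
    apply I_mono
    intro x hx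
    have hx1 : 0 ≤ 1 - x ^ 2 := by nlinarith [hx.1, hx.2]
    rw [hp, eval_mul, eval_mul, eval_C, eval_finsetSum, eval_finsetSum, ← sq, hB]
    refine Finset.sum_sq_le_sum_mul_sum_of_sq_le_mul _ ?_ ?_ ?_
    · intro k _; exact mul_nonneg (abs_nonneg _) (mm_nonneg _)
    · intro k _
      simp only [eval_mul, eval_C, eval_sub, eval_one, eval_pow, eval_X]
      have := mul_self_nonneg (eval x (G k))
      have h2 := mul_nonneg (abs_nonneg (b k)) (mm_nonneg k)
      rw [mul_assoc (1 - x^2)]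
      positivity
    · intro k _
      simp only [eval_mul, eval_C, eval_sub, eval_one, eval_pow, eval_X]
      have h1 := dq_sup k x hx
      rw [← mm_sq] at h1
      calc (b k * ((1 - x^2) * eval x (derivative (q k)) * eval x (G k))) ^ 2
          = |b k| ^ 2 * ((1 - x^2) * (eval x (G k)) ^ 2) * ((1 - x^2) * eval x (derivative (q k)) ^ 2) := by
            rw [sq_abs]; ring
        _ ≤ |b k| ^ 2 * ((1 - x^2) * (eval x (G k)) ^ 2) * mm k ^ 2 := by gcongr
        _ = _ := by ring
  refine hpt.trans ?_
  rw [I_C_mul, I_sum, sq B, mul_assoc]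
  refine mul_le_mul_of_nonneg_left ?_ hB0
  rw [hB, Finset.sum_mul]
  apply Finset.sum_le_sum
  intro k _
  rw [I_C_mul]
  refine mul_le_mul_of_nonneg_left ?_ (mul_nonneg (abs_nonneg _) (mm_nonneg _))
  have e : (1 - X ^ 2) * G k * G k = ∑ i ∈ S k, C (a i) * ∑ j ∈ S k, C (a j) *
      ((1 - X ^ 2) * derivative (q i) * derivative (q j)) := by
    have : ∀ i, C (a i) * ∑ j ∈ S k, C (a j) * ((1 - X ^ 2) * derivative (q i) * derivative (q j))
      = (C (a i) * derivative (q i)) * ((1 - X ^ 2) * G k) := by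
      intro i
      simp only [hG, Finset.mul_sum]
      apply Finset.sum_congr rfl
      intros; ring
    simp only [this]
    rw [← Finset.sum_mul]; simp only [hG]; ring
  rw [e, I_sum]
  simp only [I_C_mul, I_sum, dq_orth]
  calc _ = ∑ i ∈ S k, (i:ℝ) * (i+1) * a i ^ 2 := by
        apply Finset.sum_congr rfl
        intro i hi
        simp only [mul_ite, mul_zero, Finset.sum_ite_eq, hi, if_true]
        ring
    _ ≤ _ := by
        rw [hS, Finset.sum_filter]
        apply Finset.sum_le_sum
        intro j _
        by_cases h2 : n ≤ 2 * j
        · by_cases h1 : R j k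
          · simp [h1, h2]
          · simp only [h1, h2, false_and, if_true, if_false]; positivity
        · simp [h2]

/-- increments of the weight -/
def DD (s : ℝ) (n : ℕ) : ℝ := ((n:ℝ)+1) ^ (2*s) - (n:ℝ) ^ (2*s)

lemma DD_nonneg (s : ℝ) (hs : 0 < s) (n : ℕ) : 0 ≤ DD s n :=
  sub_nonneg.2 (Real.rpow_le_rpow (by positivity) (by linarith) (by linarith))

lemma DD_sum (s : ℝ) (hs : 0 < s) (l : ℕ) :
    ∑ n ∈ Finset.range l, DD s n = (l:ℝ) ^ (2*s) := by
  have := Finset.sum_range_sub (fun n : ℕ => (n:ℝ) ^ (2*s)) l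
  simp only [Nat.cast_add, Nat.cast_one, Nat.cast_zero] at this
  rw [Real.zero_rpow (by linarith), sub_zero] at this
  exact this

lemma half_est (s : ℝ) (hs : 0 < s) (a b : ℕ → ℝ) (R : ℕ → ℕ → Prop) [∀ j k, Decidable (R j k)]
    (hR : ∀ j k, R j k → k ≤ j) (N L : ℕ) :
    ∑ l ∈ Finset.range L, ((l:ℝ)+1) ^ (2*s) * (∑ k ∈ Finset.range N, ∑ j ∈ Finset.range N,
        if R j k then b k * (a j * trip j k l) else 0) ^ 2
      ≤ (∑ k ∈ Finset.range N, |b k| * mm k) ^ 2 *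
        ((2:ℝ) ^ (2*s) * ∑ j ∈ Finset.range N, ((j:ℝ)+1) ^ (2*(s+1)) * a j ^ 2) := by
  set c : ℕ → ℝ := fun l => ∑ k ∈ Finset.range N, ∑ j ∈ Finset.range N,
        if R j k then b k * (a j * trip j k l) else 0 with hc
  set B := ∑ k ∈ Finset.range N, |b k| * mm k with hB
  have e1 : ∀ l ∈ Finset.range L, ((l:ℝ)+1) ^ (2*s) * c l ^ 2
      = ∑ n ∈ Finset.range L, if n ≤ l then DD s n * c l ^ 2 else 0 := by
    intro l hl
    have hl := Finset.mem_range.1 hl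
    have := DD_sum s hs (l+1)
    push_cast at this
    rw [← this, Finset.sum_mul, ← Finset.sum_filter]
    apply Finset.sum_congr _ (fun _ _ => rfl)
    ext n; simp; omega
  change ∑ l ∈ Finset.range L, ((l:ℝ)+1) ^ (2*s) * c l ^ 2 ≤ _
  rw [Finset.sum_congr rfl e1, Finset.sum_comm]
  calc _ = ∑ n ∈ Finset.range L, DD s n * ∑ l ∈ Finset.Ico n L, c l ^ 2 := by
        apply Finset.sum_congr rfl
        intro n _
        rw [Finset.mul_sum, ← Finset.sum_filter]
        apply Finset.sum_congr _ (fun _ _ => rfl)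
        ext l; simp; omega
    _ ≤ ∑ n ∈ Finset.range L, DD s n * (B ^ 2 *
        ∑ j ∈ Finset.range N, if n ≤ 2 * j then (j:ℝ) * (j+1) * a j ^ 2 else 0) := by
        apply Finset.sum_le_sum
        intro n _
        exact mul_le_mul_of_nonneg_left (tail_est a b R hR N n L) (DD_nonneg s hs n)
    _ = B ^ 2 * ∑ j ∈ Finset.range N, (j:ℝ) * (j+1) * a j ^ 2 *
          ∑ n ∈ Finset.range L, if n ≤ 2 * j then DD s n else 0 := by
        simp only [Finset.mul_sum]
        rw [Finset.sum_comm]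
        apply Finset.sum_congr rfl
        intro j _
        apply Finset.sum_congr rfl
        intro n _
        split_ifs <;> ring
    _ ≤ _ := by
        refine mul_le_mul_of_nonneg_left ?_ (sq_nonneg _)
        rw [Finset.mul_sum]
        apply Finset.sum_le_sum
        intro j _
        have h1 : (∑ n ∈ Finset.range L, if n ≤ 2 * j then DD s n else 0)
            ≤ (2 * ((j:ℝ) + 1)) ^ (2*s) := by
          calc _ ≤ ∑ n ∈ Finset.range (2*j+1), DD s n := by
                rw [← Finset.sum_filter]
                apply Finset.sum_le_sum_of_subset_of_nonneg
                · intro n; simp only [Finset.mem_filter, Finset.mem_range]; omega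
                · intro n _ _; exact DD_nonneg s hs n
            _ = ((2 * j + 1 : ℕ) : ℝ) ^ (2*s) := DD_sum s hs _
            _ ≤ _ := by
                apply Real.rpow_le_rpow (by positivity) _ (by linarith)
                push_cast; linarith
        have hj : (0:ℝ) < (j:ℝ) + 1 := by positivity
        have h0 : 0 ≤ ∑ n ∈ Finset.range L, if n ≤ 2 * j then DD s n else 0 :=
          Finset.sum_nonneg fun n _ => by
            split_ifs
            · exact DD_nonneg s hs n
            · exact le_rfl
        calc (j:ℝ) * (j+1) * a j ^ 2 * _ ≤ (((j:ℝ)+1) * (j+1)) * a j ^ 2 * (2 * ((j:ℝ) + 1)) ^ (2*s) := by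
              gcongr; linarith
          _ = _ := by
              rw [Real.mul_rpow (by norm_num) hj.le, show 2 * (s+1) = 2 * s + (2:ℕ) by push_cast; ring,
                Real.rpow_add_natCast hj.ne']
              ring

/-- constant -/
def KK (s : ℝ) : ℝ := ∑' k : ℕ, ((k:ℝ)+1) ^ (1 - 2*s)

lemma KK_summable (s : ℝ) (hs : 1 < s) : Summable (fun k : ℕ => ((k:ℝ)+1) ^ (1 - 2*s)) := by
  have := (Real.summable_nat_rpow (p := 1 - 2*s)).2 (by linarith)
  have h := (summable_nat_add_iff 1).2 this
  simpa using h

lemma KK_pos (s : ℝ) (hs : 1 < s) : 0 < KK s := by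
  refine (KK_summable s hs).tsum_pos (fun k => by positivity) 0 (by norm_num)

lemma B_est (s : ℝ) (hs : 1 < s) (b : ℕ → ℝ) (N : ℕ) :
    (∑ k ∈ Finset.range N, |b k| * mm k) ^ 2
      ≤ KK s * ∑ k ∈ Finset.range N, ((k:ℝ)+1) ^ (2*(s+1)) * b k ^ 2 := by
  calc _ ≤ (∑ k ∈ Finset.range N, ((k:ℝ)+1) ^ (1 - 2*s)) *
        ∑ k ∈ Finset.range N, ((k:ℝ)+1) ^ (2*(s+1)) * b k ^ 2 := by
        refine Finset.sum_sq_le_sum_mul_sum_of_sq_le_mul _ ?_ ?_ ?_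
        · intro k _; positivity
        · intro k _; positivity
        · intro k _
          rw [mul_pow, mm_sq, sq_abs, ← mul_assoc, ← Real.rpow_add (by positivity),
            show 1 - 2 * s + 2 * (s+1) = ((3:ℕ):ℝ) by push_cast; ring, Real.rpow_natCast]
          exact (mul_comm _ _).le
    _ ≤ _ := by
        apply mul_le_mul_of_nonneg_right
        · exact (KK_summable s hs).sum_le_tsum _ (fun k _ => by positivity)
        · exact Finset.sum_nonneg fun k _ => by positivity

lemma fin_est (s : ℝ) (hs : 1 < s) (a b : ℕ → ℝ) (N L : ℕ) :
    ∑ l ∈ Finset.range L, ((l:ℝ)+1) ^ (2*s) * (∑ k ∈ Finset.range N, ∑ j ∈ Finset.range N,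
        b k * (a j * trip j k l)) ^ 2
      ≤ 4 * KK s * (2:ℝ) ^ (2*s) * (∑ j ∈ Finset.range N, ((j:ℝ)+1) ^ (2*(s+1)) * a j ^ 2)
        * (∑ j ∈ Finset.range N, ((j:ℝ)+1) ^ (2*(s+1)) * b j ^ 2) := by
  have h1 := half_est s (by linarith) a b (fun j k => k ≤ j) (fun _ _ h => h) N L
  have h2 := half_est s (by linarith) b a (fun k j => j < k) (fun _ _ h => h.le) N L
  have hB := B_est s hs b N
  have hA := B_est s hs a N
  set SA := ∑ j ∈ Finset.range N, ((j:ℝ)+1) ^ (2*(s+1)) * a j ^ 2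
  set SB := ∑ j ∈ Finset.range N, ((j:ℝ)+1) ^ (2*(s+1)) * b j ^ 2
  have hSA : 0 ≤ SA := Finset.sum_nonneg fun k _ => by positivity
  have hSB : 0 ≤ SB := Finset.sum_nonneg fun k _ => by positivity
  set c1 : ℕ → ℝ := fun l => ∑ k ∈ Finset.range N, ∑ j ∈ Finset.range N,
        if k ≤ j then b k * (a j * trip j k l) else 0 with hc1
  set c2 : ℕ → ℝ := fun l => ∑ j ∈ Finset.range N, ∑ k ∈ Finset.range N,
        if j < k then a j * (b k * trip k j l) else 0 with hc2
  have hsum : ∀ l, (∑ k ∈ Finset.range N, ∑ j ∈ Finset.range N, b k * (a j * trip j k l))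
      = c1 l + c2 l := by
    intro l
    simp only [hc1, hc2]
    rw [Finset.sum_comm (f := fun j k => if j < k then a j * (b k * trip k j l) else 0),
      ← Finset.sum_add_distrib]
    apply Finset.sum_congr rfl
    intro k _
    rw [← Finset.sum_add_distrib]
    apply Finset.sum_congr rfl
    intro j _
    rw [trip_symm k j]
    by_cases h : k ≤ j
    · simp [h, not_lt.2 h]
    · simp only [h, not_le.1 h, if_true, if_false]; ring
  have h1' : ∑ l ∈ Finset.range L, ((l:ℝ)+1) ^ (2*s) * c1 l ^ 2 ≤ KK s * SB * ((2:ℝ) ^ (2*s) * SA) :=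
    h1.trans (by gcongr)
  have h2' : ∑ l ∈ Finset.range L, ((l:ℝ)+1) ^ (2*s) * c2 l ^ 2 ≤ KK s * SA * ((2:ℝ) ^ (2*s) * SB) :=
    h2.trans (by gcongr)
  calc _ ≤ ∑ l ∈ Finset.range L, (2 * (((l:ℝ)+1) ^ (2*s) * c1 l ^ 2) + 2 * (((l:ℝ)+1) ^ (2*s) * c2 l ^ 2)) := by
        apply Finset.sum_le_sum
        intro l _
        rw [hsum]
        have hw : 0 ≤ ((l:ℝ)+1) ^ (2*s) := by positivity
        nlinarith [mul_nonneg hw (sq_nonneg (c1 l - c2 l))]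
    _ ≤ _ := by
        rw [Finset.sum_add_distrib, ← Finset.mul_sum, ← Finset.mul_sum]
        linarith

end LegAux
namespace LegAux

open Polynomial

/-- coefficient in latitude coordinates -/
def cf (f : ℝ → ℝ) (l : ℕ) : ℝ :=
  ∫ θ in (-(Real.pi/2))..(Real.pi/2), f θ * (q l).eval (Real.sin θ) * Real.cos θ

lemma int_sin (g : ℝ → ℝ) (hg : Continuous g) :
    ∫ θ in (-(Real.pi/2))..(Real.pi/2), g (Real.sin θ) * Real.cos θ = ∫ x in (-1:ℝ)..1, g x := by
  have := intervalIntegral.integral_comp_mul_deriv (a := -(Real.pi/2)) (b := Real.pi/2)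
    (f := Real.sin) (f' := Real.cos) (g := g) (fun x _ => Real.hasDerivAt_sin x)
    Real.continuous_cos.continuousOn hg
  simpa using this

lemma I_sin (p : ℝ[X]) :
    ∫ θ in (-(Real.pi/2))..(Real.pi/2), p.eval (Real.sin θ) * Real.cos θ = I p :=
  int_sin _ p.continuous

lemma sin_mem (θ : ℝ) : Real.sin θ ∈ Set.Icc (-1:ℝ) 1 := ⟨Real.neg_one_le_sin θ, Real.sin_le_one θ⟩

lemma q_bd (l : ℕ) (θ : ℝ) : |(q l).eval (Real.sin θ)| ≤ mm l := by
  apply Real.abs_le_sqrt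
  refine (q_sup l _ (sin_mem θ)).trans ?_
  have : (1:ℝ) ≤ (l:ℝ) + 1 := by have : (0:ℝ) ≤ l := by positivity
                                 linarith
  exact le_self_pow₀ this (by norm_num)

lemma dq_bd (l : ℕ) (θ : ℝ) : |(derivative (q l)).eval (Real.sin θ) * Real.cos θ| ≤ mm l := by
  apply Real.abs_le_sqrt
  have := dq_sup l _ (sin_mem θ)
  rw [mul_pow, Real.cos_sq']
  linarith

/-- weighted square summability -/
def WS (s : ℝ) (a : ℕ → ℝ) : Prop := Summable fun l : ℕ => ((l:ℝ)+1) ^ (2*(s+1)) * a l ^ 2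

lemma WS.abs_summable {s : ℝ} (hs : 1 < s) {a : ℕ → ℝ} (ha : WS s a) :
    Summable fun l => |a l| * mm l := by
  refine summable_of_sum_range_le (c := Real.sqrt (KK s * ∑' l : ℕ, ((l:ℝ)+1) ^ (2*(s+1)) * a l ^ 2))
    (fun n => mul_nonneg (abs_nonneg _) (mm_nonneg _)) ?_
  intro N
  apply Real.le_sqrt_of_sq_le
  refine (B_est s hs a N).trans ?_
  exact mul_le_mul_of_nonneg_left (ha.sum_le_tsum _ (fun k _ => by positivity)) (KK_pos s hs).le

lemma complete (h : ℝ → ℝ) (hc : Continuous h) (h0 : ∀ l, cf h l = 0) :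
    ∀ θ ∈ Set.Icc (-(Real.pi/2)) (Real.pi/2), h θ = 0 := by
  set g : ℝ → ℝ := fun x => h (Real.arcsin x) with hg
  have hgc : Continuous g := hc.comp Real.continuous_arcsin
  have hpi : -(Real.pi/2) ≤ Real.pi/2 := by linarith [Real.pi_pos]
  have hgp : ∀ p : ℝ[X], Continuous fun x => g x * p.eval x := fun p => hgc.mul p.continuous
  have hgg : Continuous fun x => g x * g x := hgc.mul hgc
  have h1 : ∀ l, ∫ x in (-1:ℝ)..1, g x * (q l).eval x = 0 := by
    intro l
    rw [← h0 l, ← int_sin (fun x => g x * (q l).eval x) (hgc.mul (q l).continuous)]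
    unfold cf
    apply intervalIntegral.integral_congr
    intro θ hθ
    rw [Set.uIcc_of_le hpi] at hθ
    simp only [hg, Real.arcsin_sin hθ.1 hθ.2]
  have h2 : ∀ p : ℝ[X], ∫ x in (-1:ℝ)..1, g x * p.eval x = 0 := by
    intro p
    refine leg_ind (fun p => ∫ x in (-1:ℝ)..1, g x * p.eval x = 0) (p.natDegree + 1)
      (by simp) ?_ ?_ p ?_
    · intro p r hp hr
      simp only [eval_add, mul_add]
      rw [intervalIntegral.integral_add ((hgp p).intervalIntegrable _ _)
        ((hgp r).intervalIntegrable _ _), hp, hr, add_zero]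
    · intro k _ c
      have hk := h1 k
      simp only [q, eval_mul, eval_C, mul_left_comm (g _)] at hk ⊢
      rw [intervalIntegral.integral_const_mul] at hk ⊢
      have : Real.sqrt ((2 * (k:ℝ) + 1) / 2) ≠ 0 := by positivity
      rw [(mul_eq_zero.1 hk).resolve_left this, mul_zero]
    · exact lt_of_le_of_lt degree_le_natDegree (by norm_cast; omega)
  have h3 : ∫ x in (-1:ℝ)..1, g x * g x ≤ 0 := by
    set M := ∫ x in (-1:ℝ)..1, |g x| with hM
    have hM0 : 0 ≤ M := intervalIntegral.integral_nonneg (by norm_num) (fun x _ => abs_nonneg _)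
    have key : ∀ ε > 0, ∫ x in (-1:ℝ)..1, g x * g x ≤ ε * M := by
      intro ε hε
      obtain ⟨p, hp⟩ := exists_polynomial_near_of_continuousOn (-1) 1 g hgc.continuousOn ε hε
      have : ∫ x in (-1:ℝ)..1, g x * g x = ∫ x in (-1:ℝ)..1, (g x * g x - g x * p.eval x) := by
        rw [intervalIntegral.integral_sub (hgg.intervalIntegrable _ _)
          ((hgp p).intervalIntegrable _ _), h2, sub_zero]
      rw [this, hM, ← intervalIntegral.integral_const_mul]
      apply intervalIntegral.integral_mono_on (by norm_num)
      · exact ((hgc.mul hgc).sub (hgc.mul p.continuous)).intervalIntegrable _ _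
      · exact (continuous_const.mul hgc.abs).intervalIntegrable _ _
      · intro x hx
        have := (hp x hx).le
        rw [abs_sub_comm] at this
        calc _ ≤ |g x * g x - g x * eval x p| := le_abs_self _
          _ = |g x| * |g x - eval x p| := by rw [← mul_sub, abs_mul]
          _ ≤ |g x| * ε := by gcongr
          _ = _ := mul_comm _ _
    by_contra hcon
    push Not at hcon
    have := key ((∫ x in (-1:ℝ)..1, g x * g x) / (2 * (M + 1))) (by positivity)
    rw [div_mul_eq_mul_div, le_div_iff₀ (by positivity)] at this
    nlinarith
  have h4 : ∀ x ∈ Set.Icc (-1:ℝ) 1, g x = 0 := by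
    intro x hx
    by_contra hne
    have := intervalIntegral.integral_pos (a := -1) (b := 1) (f := fun x => g x * g x) (by norm_num)
      (hgc.mul hgc).continuousOn (fun y _ => mul_self_nonneg _)
      ⟨x, hx, mul_self_pos.2 hne⟩
    linarith
  intro θ hθ
  have := h4 _ (sin_mem θ)
  simpa only [hg, Real.arcsin_sin hθ.1 hθ.2] using this

lemma ser_cont {s : ℝ} (hs : 1 < s) {a : ℕ → ℝ} (ha : WS s a) :
    Continuous fun θ : ℝ => ∑' l, a l * (q l).eval (Real.sin θ) := by
  refine continuous_tsum (u := fun l => |a l| * mm l) ?_ (ha.abs_summable hs) ?_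
  · intro l
    exact continuous_const.mul ((q l).continuous.comp Real.continuous_sin)
  · intro l θ
    rw [Real.norm_eq_abs, abs_mul]
    exact mul_le_mul_of_nonneg_left (q_bd l θ) (abs_nonneg _)

lemma ser_summable {s : ℝ} (hs : 1 < s) {a : ℕ → ℝ} (ha : WS s a) (θ : ℝ) :
    Summable fun l => a l * (q l).eval (Real.sin θ) := by
  refine Summable.of_norm_bounded (ha.abs_summable hs) ?_
  intro l
  rw [Real.norm_eq_abs, abs_mul]
  exact mul_le_mul_of_nonneg_left (q_bd l θ) (abs_nonneg _)

/-- derivative series -/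
def dser (a : ℕ → ℝ) (θ : ℝ) : ℝ :=
  ∑' l, a l * ((derivative (q l)).eval (Real.sin θ) * Real.cos θ)

lemma dser_summable {s : ℝ} (hs : 1 < s) {a : ℕ → ℝ} (ha : WS s a) (θ : ℝ) :
    Summable fun l => a l * ((derivative (q l)).eval (Real.sin θ) * Real.cos θ) := by
  refine Summable.of_norm_bounded (ha.abs_summable hs) ?_
  intro l
  rw [Real.norm_eq_abs, abs_mul]
  exact mul_le_mul_of_nonneg_left (dq_bd l θ) (abs_nonneg _)

lemma dser_cont {s : ℝ} (hs : 1 < s) {a : ℕ → ℝ} (ha : WS s a) : Continuous (dser a) := by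
  refine continuous_tsum (u := fun l => |a l| * mm l) ?_ (ha.abs_summable hs) ?_
  · intro l
    exact continuous_const.mul (((derivative (q l)).continuous.comp Real.continuous_sin).mul
      Real.continuous_cos)
  · intro l θ
    rw [Real.norm_eq_abs, abs_mul]
    exact mul_le_mul_of_nonneg_left (dq_bd l θ) (abs_nonneg _)

lemma expansion {s : ℝ} (hs : 1 < s) (f : ℝ → ℝ) (hf : Continuous f)
    (hsym : ∀ θ, f θ = f (Real.arcsin (Real.sin θ))) (ha : WS s (cf f)) (θ : ℝ) :
    f θ = ∑' l, cf f l * (q l).eval (Real.sin θ) := by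
  set G : ℝ → ℝ := fun θ => ∑' l, cf f l * (q l).eval (Real.sin θ) with hG
  have hGc : Continuous G := ser_cont hs ha
  have hk : ∀ k, cf (fun θ => f θ - G θ) k = 0 := by
    intro k
    have hqk : Continuous fun θ => (q k).eval (Real.sin θ) :=
      (q k).continuous.comp Real.continuous_sin
    have h1 : HasSum (fun l => ∫ θ in (-(Real.pi/2))..(Real.pi/2),
        (cf f l * (q l).eval (Real.sin θ)) * (q k).eval (Real.sin θ) * Real.cos θ)
        (∫ θ in (-(Real.pi/2))..(Real.pi/2), G θ * (q k).eval (Real.sin θ) * Real.cos θ) := by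
      refine intervalIntegral.hasSum_integral_of_dominated_convergence
        (fun l _ => |cf f l| * mm l * mm k) ?_ ?_ ?_ ?_ ?_
      · intro l
        exact (((continuous_const.mul ((q l).continuous.comp Real.continuous_sin)).mul hqk).mul
          Real.continuous_cos).aestronglyMeasurable
      · intro l
        refine Filter.Eventually.of_forall fun θ _ => ?_
        rw [Real.norm_eq_abs, abs_mul, abs_mul, abs_mul]
        calc _ ≤ |cf f l| * mm l * mm k * 1 := by
              gcongr
              · exact mul_nonneg (mul_nonneg (abs_nonneg _) (mm_nonneg _)) (mm_nonneg _)
              · exact mul_nonneg (abs_nonneg _) (mm_nonneg _)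
              · exact q_bd l θ
              · exact q_bd k θ
              · exact Real.abs_cos_le_one θ
          _ = _ := mul_one _
      · exact Filter.Eventually.of_forall fun θ _ => (ha.abs_summable hs).mul_right _
      · exact intervalIntegrable_const
      · exact Filter.Eventually.of_forall fun θ _ =>
          ((ser_summable hs ha θ).hasSum.mul_right _).mul_right _
    have h2 : ∀ l, (∫ θ in (-(Real.pi/2))..(Real.pi/2),
        (cf f l * (q l).eval (Real.sin θ)) * (q k).eval (Real.sin θ) * Real.cos θ)
          = if l = k then cf f k else 0 := by
      intro l
      have : ∀ θ, (cf f l * (q l).eval (Real.sin θ)) * (q k).eval (Real.sin θ) * Real.cos θ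
          = (C (cf f l) * (q l * q k)).eval (Real.sin θ) * Real.cos θ := by
        intro θ; simp only [eval_mul, eval_C]; ring
      simp only [this]
      rw [I_sin, I_C_mul, q_orth]
      split_ifs with h
      · rw [h, mul_one]
      · rw [mul_zero]
    simp only [h2] at h1
    have h3 := h1.unique (hasSum_ite_eq k (cf f k))
    have h4 : cf (fun θ => f θ - G θ) k = cf f k - cf G k := by
      unfold cf
      simp only [sub_mul]
      exact intervalIntegral.integral_sub (((hf.mul hqk).mul Real.continuous_cos).intervalIntegrable _ _)
        (((hGc.mul hqk).mul Real.continuous_cos).intervalIntegrable _ _)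
    rw [h4, sub_eq_zero]
    exact h3.symm
  have h5 := complete _ (hf.sub hGc) hk
  have h6 := h5 (Real.arcsin (Real.sin θ)) (Real.arcsin_mem_Icc _)
  have h7 : G (Real.arcsin (Real.sin θ)) = G θ := by
    simp only [hG, Real.sin_arcsin (sin_mem θ).1 (sin_mem θ).2]
  rw [Pi.sub_apply, h7, ← hsym] at h6
  linarith

lemma deriv_expansion {s : ℝ} (hs : 1 < s) (f : ℝ → ℝ) (hf : Continuous f)
    (hsym : ∀ θ, f θ = f (Real.arcsin (Real.sin θ))) (ha : WS s (cf f)) :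
    deriv f = dser (cf f) := by
  funext θ
  have he : f = fun θ => ∑' l, cf f l * (q l).eval (Real.sin θ) :=
    funext (expansion hs f hf hsym ha)
  have := hasDerivAt_tsum (𝕜 := ℝ) (u := fun l => |cf f l| * mm l)
    (g := fun l θ => cf f l * (q l).eval (Real.sin θ))
    (g' := fun l θ => cf f l * ((derivative (q l)).eval (Real.sin θ) * Real.cos θ))
    (y₀ := 0) (ha.abs_summable hs) ?_ ?_ (ser_summable hs ha 0) θ
  · conv_lhs => rw [he]
    exact this.deriv
  · intro l y
    exact (((q l).hasDerivAt _).comp y (Real.hasDerivAt_sin y)).const_mul _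
  · intro l y
    rw [Real.norm_eq_abs, abs_mul]
    exact mul_le_mul_of_nonneg_left (dq_bd l y) (abs_nonneg _)

lemma prod_coef_lim {s : ℝ} (hs : 1 < s) {a b : ℕ → ℝ} (ha : WS s a) (hb : WS s b) (l : ℕ) :
    Filter.Tendsto (fun N => ∑ k ∈ Finset.range N, ∑ j ∈ Finset.range N, b k * (a j * trip j k l))
      Filter.atTop (nhds (cf (fun θ => dser a θ * dser b θ) l)) := by
  set pa : ℕ → ℝ → ℝ := fun N θ => ∑ j ∈ Finset.range N,
    a j * ((derivative (q j)).eval (Real.sin θ) * Real.cos θ) with hpa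
  set pb : ℕ → ℝ → ℝ := fun N θ => ∑ j ∈ Finset.range N,
    b j * ((derivative (q j)).eval (Real.sin θ) * Real.cos θ) with hpb
  have hcont : ∀ (c : ℕ → ℝ) (N : ℕ), Continuous fun θ => ∑ j ∈ Finset.range N,
    c j * ((derivative (q j)).eval (Real.sin θ) * Real.cos θ) := by
    intro c N
    refine continuous_finsetSum _ fun j _ => ?_
    exact continuous_const.mul (((derivative (q j)).continuous.comp Real.continuous_sin).mul
      Real.continuous_cos)
  have hbd : ∀ (c : ℕ → ℝ), WS s c → ∀ (N : ℕ) θ, |∑ j ∈ Finset.range N,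
      c j * ((derivative (q j)).eval (Real.sin θ) * Real.cos θ)| ≤ ∑' l, |c l| * mm l := by
    intro c hc N θ
    refine (Finset.abs_sum_le_sum_abs _ _).trans ?_
    refine le_trans (Finset.sum_le_sum (g := fun j => |c j| * mm j) ?_)
      ((hc.abs_summable hs).sum_le_tsum _ fun k _ => mul_nonneg (abs_nonneg _) (mm_nonneg _))
    intro j _
    rw [abs_mul]
    exact mul_le_mul_of_nonneg_left (dq_bd j θ) (abs_nonneg _)
  have e : ∀ N, ∑ k ∈ Finset.range N, ∑ j ∈ Finset.range N, b k * (a j * trip j k l)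
      = ∫ θ in (-(Real.pi/2))..(Real.pi/2), pa N θ * pb N θ * (q l).eval (Real.sin θ) * Real.cos θ := by
    intro N
    have h1 : ∀ θ, pa N θ * pb N θ * (q l).eval (Real.sin θ) * Real.cos θ =
      (∑ k ∈ Finset.range N, ∑ j ∈ Finset.range N, C (b k) * (C (a j) *
        ((1 - X ^ 2) * derivative (q j) * derivative (q k) * q l))).eval (Real.sin θ)
          * Real.cos θ := by
      intro θ
      congr 1
      simp only [hpa, hpb, eval_finsetSum, eval_mul, eval_C, eval_sub, eval_one, eval_pow, eval_X]
      rw [Finset.sum_mul_sum, Finset.sum_comm, Finset.sum_mul]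
      apply Finset.sum_congr rfl
      intro k _
      rw [Finset.sum_mul]
      apply Finset.sum_congr rfl
      intro j _
      rw [← Real.cos_sq']
      ring
    simp only [h1]
    rw [I_sin]
    simp only [I_sum, I_C_mul]
    rfl
  simp only [e]
  unfold cf
  refine intervalIntegral.tendsto_integral_filter_of_dominated_convergence
    (fun _ => (∑' l, |a l| * mm l) * (∑' l, |b l| * mm l) * mm l) ?_ ?_ ?_ ?_
  · exact Filter.Eventually.of_forall fun N => ((((hcont a N).mul (hcont b N)).mul
      ((q l).continuous.comp Real.continuous_sin)).mul Real.continuous_cos).aestronglyMeasurable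
  · refine Filter.Eventually.of_forall fun N => Filter.Eventually.of_forall fun θ _ => ?_
    rw [Real.norm_eq_abs, abs_mul, abs_mul, abs_mul]
    have h0 : ∀ c : ℕ → ℝ, 0 ≤ ∑' l, |c l| * mm l := fun c =>
      tsum_nonneg fun l => mul_nonneg (abs_nonneg _) (mm_nonneg _)
    calc _ ≤ (∑' l, |a l| * mm l) * (∑' l, |b l| * mm l) * mm l * 1 := by
          gcongr
          · exact mul_nonneg (mul_nonneg (h0 a) (h0 b)) (mm_nonneg _)
          · exact mul_nonneg (h0 a) (h0 b)
          · exact h0 a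
          · exact hbd a ha N θ
          · exact hbd b hb N θ
          · exact q_bd l θ
          · exact Real.abs_cos_le_one θ
      _ = _ := mul_one _
  · exact intervalIntegrable_const
  · refine Filter.Eventually.of_forall fun θ _ => ?_
    exact (((dser_summable hs ha θ).hasSum.tendsto_sum_nat.mul
      (dser_summable hs hb θ).hasSum.tendsto_sum_nat).mul_const _).mul_const _

lemma prod_est {s : ℝ} (hs : 1 < s) {a b : ℕ → ℝ} (ha : WS s a) (hb : WS s b) (L : ℕ) :
    ∑ l ∈ Finset.range L, ((l:ℝ)+1) ^ (2*s) * cf (fun θ => dser a θ * dser b θ) l ^ 2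
      ≤ 4 * KK s * (2:ℝ) ^ (2*s) * (∑' j : ℕ, ((j:ℝ)+1) ^ (2*(s+1)) * a j ^ 2)
        * (∑' j : ℕ, ((j:ℝ)+1) ^ (2*(s+1)) * b j ^ 2) := by
  have hlim := tendsto_finsetSum (Finset.range L) (fun l _ =>
    ((prod_coef_lim hs ha hb l).pow 2).const_mul (((l:ℝ)+1) ^ (2*s)))
  refine le_of_tendsto hlim (Filter.Eventually.of_forall fun N => ?_)
  refine (fin_est s hs a b N L).trans ?_
  have hK := (KK_pos s hs).le
  have h1 : ∑ j ∈ Finset.range N, ((j:ℝ)+1) ^ (2*(s+1)) * a j ^ 2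
      ≤ ∑' j : ℕ, ((j:ℝ)+1) ^ (2*(s+1)) * a j ^ 2 :=
    Summable.sum_le_tsum _ (fun k _ => by positivity) ha
  have h2 : ∑ j ∈ Finset.range N, ((j:ℝ)+1) ^ (2*(s+1)) * b j ^ 2
      ≤ ∑' j : ℕ, ((j:ℝ)+1) ^ (2*(s+1)) * b j ^ 2 :=
    Summable.sum_le_tsum _ (fun k _ => by positivity) hb
  have h3 : 0 ≤ ∑ j ∈ Finset.range N, ((j:ℝ)+1) ^ (2*(s+1)) * b j ^ 2 :=
    Finset.sum_nonneg fun k _ => by positivity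
  have h4 : 0 ≤ ∑' j : ℕ, ((j:ℝ)+1) ^ (2*(s+1)) * a j ^ 2 := tsum_nonneg fun k => by positivity
  gcongr

end LegAux
namespace LegAux

lemma exp_int (m : ℤ) : ∫ φ in Set.Ico (-Real.pi) Real.pi,
    (starRingEnd ℂ) (Complex.exp (Complex.I * m * φ)) = if m = 0 then ((2 * Real.pi : ℝ) : ℂ) else 0 := by
  rw [integral_Ico_eq_integral_Ioc, ← intervalIntegral.integral_of_le (by linarith [Real.pi_pos])]
  have e : ∀ φ : ℝ, (starRingEnd ℂ) (Complex.exp (Complex.I * m * φ))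
      = Complex.exp ((-Complex.I * m) * φ) := by
    intro φ
    rw [← Complex.exp_conj]
    simp
  simp only [e]
  split_ifs with h
  · subst h
    simp
    ring
  · have hc : (-Complex.I * (m:ℂ)) ≠ 0 := by
      simp [h]
    rw [integral_exp_mul_complex hc, div_eq_zero_iff]
    left
    rw [sub_eq_zero, Complex.exp_eq_exp_iff_exists_int]
    refine ⟨-m, ?_⟩
    push_cast
    ring

lemma flCoeff_eq (ψ : ℝ → ℝ → ℂ) (f : ℝ → ℝ)
    (h : ∀ θ φ, ψ θ φ = ((f θ : ℝ) : ℂ)) (l : ℕ) (m : ℤ) :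
    flCoeff ψ l m = if m = 0 then ((Real.sqrt (2 * Real.pi) * cf f l : ℝ) : ℂ) else 0 := by
  unfold flCoeff sphereMeasure
  have hmeas : Measurable fun p : ℝ × ℝ => ENNReal.ofReal (Real.cos p.1) :=
    (Real.measurable_cos.comp measurable_fst).ennreal_ofReal
  rw [integral_withDensity_eq_integral_toReal_smul hmeas
    (Filter.Eventually.of_forall fun _ => ENNReal.ofReal_lt_top)]
  have e : ∀ p : ℝ × ℝ, (ENNReal.ofReal (Real.cos p.1)).toReal •
      (ψ p.1 p.2 * (starRingEnd ℂ) (Ylm l m p.1 p.2)) =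
      (((ENNReal.ofReal (Real.cos p.1)).toReal * (f p.1 *
        (alphaY l m * assocLegendre l m.natAbs (Real.sin p.1))) : ℝ) : ℂ) *
        (starRingEnd ℂ) (Complex.exp (Complex.I * m * p.2)) := by
    intro p
    rw [h, Ylm, map_mul, Complex.conj_ofReal, Complex.real_smul]
    push_cast
    ring
  simp only [e]
  rw [Measure.volume_eq_prod, setIntegral_prod_mul
    (fun θ : ℝ => (((ENNReal.ofReal (Real.cos θ)).toReal * (f θ *
        (alphaY l m * assocLegendre l m.natAbs (Real.sin θ))) : ℝ) : ℂ))
    (fun φ : ℝ => (starRingEnd ℂ) (Complex.exp (Complex.I * m * φ))), exp_int]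
  split_ifs with hm
  · subst hm
    rw [integral_complex_ofReal, ← Complex.ofReal_mul]
    congr 1
    rw [integral_Icc_eq_integral_Ioc, ← intervalIntegral.integral_of_le (by linarith [Real.pi_pos])]
    unfold cf
    rw [← intervalIntegral.integral_mul_const, ← intervalIntegral.integral_const_mul]
    apply intervalIntegral.integral_congr
    intro θ hθ
    rw [Set.uIcc_of_le (by linarith [Real.pi_pos])] at hθ
    have hcos := Real.cos_nonneg_of_mem_Icc hθ
    simp only [ENNReal.toReal_ofReal hcos, q, alphaY, assocLegendre, Polynomial.eval_mul,
      Polynomial.eval_C]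
    simp
    have hpi := Real.pi_pos
    have h1 : Real.sqrt ((2 * (l:ℝ) + 1) * (l.factorial) / (4 * Real.pi * l.factorial)) * (2 * Real.pi)
        = Real.sqrt (2 * Real.pi) * Real.sqrt ((2 * l + 1) / 2) := by
      have h2 : (2 * Real.pi) = Real.sqrt ((2 * Real.pi) ^ 2) := by
        rw [Real.sqrt_sq (by positivity)]
      have hf : (l.factorial : ℝ) ≠ 0 := by exact_mod_cast l.factorial_ne_zero
      conv_lhs => rw [h2]
      rw [← Real.sqrt_mul (by positivity), ← Real.sqrt_mul (by positivity)]
      congr 1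
      field_simp
      ring
    have h3 : Real.sqrt ((2 * (l:ℝ) + 1) * (l.factorial) / (4 * Real.pi * l.factorial)) * (2 * Real.pi)
        = Real.sqrt 2 * Real.sqrt Real.pi * Real.sqrt ((2 * l + 1) / 2) := by
      rw [h1, Real.sqrt_mul (by norm_num)]
    have h4 := h3
    rw [Real.sqrt_div (by positivity : (0:ℝ) ≤ 2 * (l:ℝ) + 1) 2] at h4
    first
      | linear_combination (Real.cos θ * f θ * (legendreP l).eval (Real.sin θ)) * h1
      | linear_combination (Real.cos θ * f θ * (legendreP l).eval (Real.sin θ)) * h3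
      | linear_combination (Real.cos θ * f θ * (legendreP l).eval (Real.sin θ)) * h4
  · rw [mul_zero]

lemma inj_zero : Function.Injective (fun l : ℕ => ((l, 0) : ℕ × ℤ)) := by
  intro a b h
  simpa using h

lemma term_eq (s : ℝ) (ψ : ℝ → ℝ → ℂ) (f : ℝ → ℝ) (h : ∀ θ φ, ψ θ φ = ((f θ : ℝ) : ℂ)) :
    (fun l : ℕ => (((l, (0:ℤ)).1 : ℝ) + 1) ^ (2 * s) * ‖flCoeff ψ (l, (0:ℤ)).1 (l, (0:ℤ)).2‖ ^ 2)
      = fun l : ℕ => 2 * Real.pi * (((l:ℝ)+1) ^ (2*s) * cf f l ^ 2) := by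
  funext l
  simp only [flCoeff_eq ψ f h, if_true]
  rw [Complex.norm_real, Real.norm_eq_abs, sq_abs, mul_pow,
    Real.sq_sqrt (by linarith [Real.pi_pos])]
  ring

lemma off_zero (s : ℝ) (ψ : ℝ → ℝ → ℂ) (f : ℝ → ℝ) (h : ∀ θ φ, ψ θ φ = ((f θ : ℝ) : ℂ))
    (p : ℕ × ℤ) (hp : p ∉ Set.range (fun l : ℕ => ((l, 0) : ℕ × ℤ))) :
    ((p.1 : ℝ) + 1) ^ (2 * s) * ‖flCoeff ψ p.1 p.2‖ ^ 2 = 0 := by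
  have : p.2 ≠ 0 := by
    intro h0
    exact hp ⟨p.1, by ext <;> simp [h0]⟩
  rw [flCoeff_eq ψ f h, if_neg this]
  simp

lemma summable_iff' (s : ℝ) (ψ : ℝ → ℝ → ℂ) (f : ℝ → ℝ) (h : ∀ θ φ, ψ θ φ = ((f θ : ℝ) : ℂ)) :
    (Summable fun p : ℕ × ℤ => ((p.1 : ℝ) + 1) ^ (2 * s) * ‖flCoeff ψ p.1 p.2‖ ^ 2) ↔
      Summable fun l : ℕ => ((l:ℝ)+1) ^ (2*s) * cf f l ^ 2 := by
  rw [← Function.Injective.summable_iff inj_zero (fun p hp => off_zero s ψ f h p hp)]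
  have := term_eq s ψ f h
  simp only [Function.comp_def] at this ⊢
  rw [this, summable_mul_left_iff (by have := Real.pi_pos; positivity)]

lemma tsum_eq' (s : ℝ) (ψ : ℝ → ℝ → ℂ) (f : ℝ → ℝ) (h : ∀ θ φ, ψ θ φ = ((f θ : ℝ) : ℂ)) :
    (∑' p : ℕ × ℤ, ((p.1 : ℝ) + 1) ^ (2 * s) * ‖flCoeff ψ p.1 p.2‖ ^ 2) =
      2 * Real.pi * ∑' l : ℕ, ((l:ℝ)+1) ^ (2*s) * cf f l ^ 2 := by
  rw [← Function.Injective.tsum_eq inj_zero, ← tsum_mul_left]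
  · exact congrArg tsum (term_eq s ψ f h)
  · intro p hp
    by_contra hcon
    exact hp (off_zero s ψ f h p hcon)

lemma sphCoord_apply (θ φ : ℝ) : sphCoord θ φ = !₂[Real.cos θ * Real.cos φ,
    Real.cos θ * Real.sin φ, Real.sin θ] := rfl

lemma norm_sphCoord (θ φ : ℝ) : ‖sphCoord θ φ‖ = 1 := by
  rw [sphCoord_apply, EuclideanSpace.norm_eq, Real.sqrt_eq_one]
  simp [Fin.sum_univ_three]
  nlinarith [Real.sin_sq_add_cos_sq θ, Real.sin_sq_add_cos_sq φ]

lemma cont_sphCoord (φ : ℝ) : Continuous fun θ => sphCoord θ φ := by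
  unfold sphCoord
  refine (PiLp.continuous_toLp 2 _).comp ?_
  refine continuous_pi fun i => ?_
  fin_cases i
  · exact Real.continuous_cos.mul continuous_const
  · exact Real.continuous_cos.mul continuous_const
  · exact Real.continuous_sin

lemma axial_real {u : EuclideanSpace ℝ (Fin 3) → ℝ} (hu : Axial (traceR u)) (θ φ : ℝ) :
    u (sphCoord θ φ) = u (sphCoord θ 0) := by
  have := hu θ φ 0
  unfold traceR at this
  exact_mod_cast this

lemma sym_real {u : EuclideanSpace ℝ (Fin 3) → ℝ} (hu : Axial (traceR u)) (θ : ℝ) :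
    u (sphCoord θ 0) = u (sphCoord (Real.arcsin (Real.sin θ)) 0) := by
  have hs : Real.sin (Real.arcsin (Real.sin θ)) = Real.sin θ :=
    Real.sin_arcsin (Real.neg_one_le_sin θ) (Real.sin_le_one θ)
  have hc : Real.cos (Real.arcsin (Real.sin θ)) = |Real.cos θ| := by
    rw [Real.cos_arcsin, ← Real.cos_sq', Real.sqrt_sq_eq_abs]
  rcases le_total 0 (Real.cos θ) with h | h
  · congr 1
    rw [sphCoord_apply, sphCoord_apply, hs, hc, abs_of_nonneg h]
  · rw [← axial_real hu θ Real.pi]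
    congr 1
    rw [sphCoord_apply, sphCoord_apply, hs, hc, abs_of_nonpos h]
    simp

lemma cont_real {u : EuclideanSpace ℝ (Fin 3) → ℝ} (hu : ContinuousOn u closedExt) :
    Continuous fun θ => u (sphCoord θ 0) :=
  hu.comp_continuous (cont_sphCoord 0) (fun θ => by
    change 1 ≤ ‖sphCoord θ 0‖
    rw [norm_sphCoord])

instance : IsFiniteMeasure sphereMeasure := by
  unfold sphereMeasure
  apply isFiniteMeasure_withDensity_ofReal
  have : IsFiniteMeasure ((volume : Measure (ℝ × ℝ)).restrict
      (Set.Icc (-(Real.pi / 2)) (Real.pi / 2) ×ˢ Set.Ico (-Real.pi) Real.pi)) := by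
    refine ⟨?_⟩
    rw [Measure.restrict_apply_univ, Measure.volume_eq_prod, Measure.prod_prod]
    simp [ENNReal.mul_lt_top]
  exact HasFiniteIntegral.of_bounded (C := 1)
    (Filter.Eventually.of_forall fun p => Real.abs_cos_le_one _)

lemma dser_bd {s : ℝ} (hs : 1 < s) {a : ℕ → ℝ} (ha : WS s a) (θ : ℝ) :
    |dser a θ| ≤ ∑' l, |a l| * mm l := by
  unfold dser
  rw [← Real.norm_eq_abs]
  refine tsum_of_norm_bounded (E := ℝ) (ha.abs_summable hs).hasSum ?_
  intro l
  rw [Real.norm_eq_abs, abs_mul]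
  exact mul_le_mul_of_nonneg_left (dq_bd l θ) (abs_nonneg _)

end LegAux

/-- Lemma 2.7: if `u, v` are harmonic in the exterior of the unit
sphere, continuous up to the sphere, vanish at infinity, and have traces in
`H^{s+1}_ax(𝕊)` with `s > 1`, then `u_θ v_θ ∈ H^s_ax(𝕊)` with
`‖u_θ v_θ‖_{H^s} ≤ C ‖u‖_{H^{s+1}} ‖v‖_{H^{s+1}}`. -/
theorem latitudinal_derivative_product_estimate (s : ℝ) (hs : 1 < s) :
    ∃ C > 0, ∀ u v : EuclideanSpace ℝ (Fin 3) → ℝ,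
      ContDiffOn ℝ 2 u extDomain → (∀ x ∈ extDomain, lap u x = 0) →
      ContinuousOn u closedExt → Filter.Tendsto u (Bornology.cobounded _) (nhds 0) →
      MemHs (s + 1) (traceR u) → Axial (traceR u) →
      ContDiffOn ℝ 2 v extDomain → (∀ x ∈ extDomain, lap v x = 0) →
      ContinuousOn v closedExt → Filter.Tendsto v (Bornology.cobounded _) (nhds 0) →
      MemHs (s + 1) (traceR v) → Axial (traceR v) →
      MemHs s (fun θ φ => ((thetaDeriv u θ φ * thetaDeriv v θ φ : ℝ) : ℂ)) ∧
      Axial (fun θ φ => ((thetaDeriv u θ φ * thetaDeriv v θ φ : ℝ) : ℂ)) ∧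
      HsNorm s (fun θ φ => ((thetaDeriv u θ φ * thetaDeriv v θ φ : ℝ) : ℂ)) ≤
        C * HsNorm (s + 1) (traceR u) * HsNorm (s + 1) (traceR v) := by
  have hK := LegAux.KK_pos s hs
  have hpi := Real.pi_pos
  set C0 : ℝ := 4 * LegAux.KK s * (2:ℝ) ^ (2*s) with hC0
  have hC0p : 0 < C0 := by positivity
  refine ⟨Real.sqrt (C0 / (2 * Real.pi)), by positivity, ?_⟩
  intro u v _ _ huc _ hum hua _ _ hvc _ hvm hva
  set f : ℝ → ℝ := fun θ => u (sphCoord θ 0) with hf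
  set g : ℝ → ℝ := fun θ => v (sphCoord θ 0) with hg
  have hfu : ∀ θ φ, traceR u θ φ = ((f θ : ℝ) : ℂ) := fun θ φ => hua θ φ 0
  have hgv : ∀ θ φ, traceR v θ φ = ((g θ : ℝ) : ℂ) := fun θ φ => hva θ φ 0
  have hfW : LegAux.WS s (LegAux.cf f) := (LegAux.summable_iff' (s+1) _ f hfu).1 hum.2
  have hgW : LegAux.WS s (LegAux.cf g) := (LegAux.summable_iff' (s+1) _ g hgv).1 hvm.2
  have hdf : ∀ θ φ, thetaDeriv u θ φ = LegAux.dser (LegAux.cf f) θ := by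
    intro θ φ
    rw [← LegAux.deriv_expansion hs f (LegAux.cont_real huc) (LegAux.sym_real hua) hfW]
    unfold thetaDeriv
    congr 1
    funext t
    exact LegAux.axial_real hua t φ
  have hdg : ∀ θ φ, thetaDeriv v θ φ = LegAux.dser (LegAux.cf g) θ := by
    intro θ φ
    rw [← LegAux.deriv_expansion hs g (LegAux.cont_real hvc) (LegAux.sym_real hva) hgW]
    unfold thetaDeriv
    congr 1
    funext t
    exact LegAux.axial_real hva t φ
  simp only [hdf, hdg]
  set w : ℝ → ℝ := fun θ => LegAux.dser (LegAux.cf f) θ * LegAux.dser (LegAux.cf g) θ with hw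
  have hwc : Continuous w := (LegAux.dser_cont hs hfW).mul (LegAux.dser_cont hs hgW)
  have hww : ∀ θ φ : ℝ, (fun (θ _φ : ℝ) => ((LegAux.dser (LegAux.cf f) θ *
      LegAux.dser (LegAux.cf g) θ : ℝ) : ℂ)) θ φ = ((w θ : ℝ) : ℂ) := fun _ _ => rfl
  have hest := LegAux.prod_est hs hfW hgW
  have hsum : Summable fun l : ℕ => ((l:ℝ)+1) ^ (2*s) * LegAux.cf w l ^ 2 :=
    summable_of_sum_range_le (fun l => by positivity) hest
  have htsum := Real.tsum_le_of_sum_range_le (fun l => by positivity) hest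
  refine ⟨⟨?_, (LegAux.summable_iff' s _ w hww).2 hsum⟩, fun _ _ _ => rfl, ?_⟩
  · refine MemLp.of_bound ?_ ((∑' l, |LegAux.cf f l| * LegAux.mm l) *
      ∑' l, |LegAux.cf g l| * LegAux.mm l) ?_
    · exact (Complex.continuous_ofReal.comp (hwc.comp continuous_fst)).aestronglyMeasurable
    · refine Filter.Eventually.of_forall fun p => ?_
      rw [Complex.norm_real, Real.norm_eq_abs, abs_mul]
      exact mul_le_mul (LegAux.dser_bd hs hfW _) (LegAux.dser_bd hs hgW _) (abs_nonneg _)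
        (tsum_nonneg fun l => mul_nonneg (abs_nonneg _) (LegAux.mm_nonneg _))
  · unfold HsNorm
    rw [LegAux.tsum_eq' s _ w hww, LegAux.tsum_eq' (s+1) _ f hfu, LegAux.tsum_eq' (s+1) _ g hgv]
    have hA : 0 ≤ ∑' l : ℕ, ((l:ℝ)+1) ^ (2*(s+1)) * LegAux.cf f l ^ 2 :=
      tsum_nonneg fun l => by positivity
    rw [← Real.sqrt_mul (by positivity), ← Real.sqrt_mul (by positivity)]
    apply Real.sqrt_le_sqrt
    calc _ ≤ 2 * Real.pi * (C0 * (∑' l : ℕ, ((l:ℝ)+1) ^ (2*(s+1)) * LegAux.cf f l ^ 2)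
          * ∑' l : ℕ, ((l:ℝ)+1) ^ (2*(s+1)) * LegAux.cf g l ^ 2) := by
          exact mul_le_mul_of_nonneg_left htsum (by positivity)
      _ = _ := by field_simp

end
end
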